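/- arXiv:2602.23326 — 4 statements merged into one kernel-verified Lean document; each statement's English description precedes it below -/
import Mathlib

section
/- Let Θ be a square-integrable real random variable, G ~ N(0,1) independent of Θ, and define F : [0,∞) → [0,∞) by F(γ) := E[(E[Θ | √γ Θ + G])²]. Then: (a) F is non-decreasing on [0,∞); (b) F is continuous on [0,∞); and (c) for any λ > 0 and any γ_0 ≥ 0, the iterates γ_{k+1} = λ² F(γ_k) form a monotone sequence converging to a fixed point γ_∞ ∈ [0, λ² E[Θ²]] satisfying γ_∞ = λ² F(γ_∞). -/
open MeasureTheory ProbabilityTheory Filter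
open scoped NNReal ENNReal

noncomputable section

/-- `F(γ) = E[(E[Θ | √γ Θ + W])²]`, the state-evolution map for rank-one estimation, where the
conditional expectation is with respect to the σ-algebra generated by the observation
`√γ Θ + W`. -/
def seF {Ω : Type*} [MeasurableSpace Ω] (ν : Measure Ω) (Θ W : Ω → ℝ) (γ : ℝ) : ℝ :=
  ∫ ω, ((ν[Θ | MeasurableSpace.comap (fun ω' => Real.sqrt γ * Θ ω' + W ω')
      (inferInstance : MeasurableSpace ℝ)]) ω) ^ 2 ∂ν

/-!
By Bayes' formula, `F γ` is the integral over `y` of the squared posterior mean of `Θ` given the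
observation `y`, weighted by the density of the observation; in particular it depends only on the
law of `Θ` and on `√γ`.

*Continuity.* For fixed `y` the integrand is continuous in `√γ`, and by Cauchy–Schwarz it is at most
the posterior second moment times the density of the observation. This bound varies with `γ`, but
its integral over `y` is always `E[Θ²]`, so Pratt's form of dominated convergence applies.

*Monotonicity.* If `√γ₁ = a √γ₂` with `a² + b² = 1` and `Z` is a fresh standard normal variable,
then `a (√γ₂ Θ + W) + b Z = √γ₁ Θ + (a W + b Z)` is an observation at level `γ₁` obtained by
degrading the one at level `γ₂`, and degrading cannot increase the second moment of the conditional
expectation.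

The iterates of a monotone continuous map with values in a bounded interval form a monotone
sequence, which converges to a fixed point.
-/

section MonotoneIteration

variable {α : Type*} {f : α → α}

theorem monotone_or_antitone_iterate [LinearOrder α] (hf : Monotone f) (x : α) :
    (Monotone fun n => f^[n] x) ∨ Antitone fun n => f^[n] x :=
  (le_total x (f x)).imp hf.monotone_iterate_of_le_map hf.antitone_iterate_of_map_le

theorem exists_tendsto_iterate_isFixedPt [ConditionallyCompleteLinearOrder α]
    [TopologicalSpace α] [OrderTopology α] {a b : α} (hmono : Monotone f) (hcont : Continuous f)
    (hmem : ∀ x, f x ∈ Set.Icc a b) (x : α) :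
    ∃ y ∈ Set.Icc a b, Tendsto (fun n => f^[n] x) atTop (nhds y) ∧ Function.IsFixedPt f y := by
  have iterate_mem (n : ℕ) : f^[n + 1] x ∈ Set.Icc a b := by
    rw [Function.iterate_succ_apply']
    exact hmem _
  obtain ⟨y, hy⟩ : ∃ y, Tendsto (fun n => f^[n + 1] x) atTop (nhds y) := by
    rcases monotone_or_antitone_iterate hmono (f x) with hinc | hdec
    · exact ⟨_, tendsto_atTop_ciSup hinc
        ⟨b, Set.forall_mem_range.2 fun n => (iterate_mem n).2⟩⟩
    · exact ⟨_, tendsto_atTop_ciInf hdec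
        ⟨a, Set.forall_mem_range.2 fun n => (iterate_mem n).1⟩⟩
  have hlim : Tendsto (fun n => f^[n] x) atTop (nhds y) := (tendsto_add_atTop_iff_nat 1).1 hy
  exact ⟨y, isClosed_Icc.mem_of_tendsto hy (.of_forall iterate_mem), hlim,
    isFixedPt_of_tendsto_iterate hlim hcont.continuousAt⟩

end MonotoneIteration

section GeneralizedDominatedConvergence

variable {α : Type*} [MeasurableSpace α] {μ : Measure α}

/-- Scheffé's lemma. -/
theorem tendsto_integral_abs_sub_of_tendsto_integral {G : ℕ → α → ℝ} {g : α → ℝ}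
    (hG : ∀ n, Integrable (G n) μ) (hg : Integrable g μ) (hG0 : ∀ n, 0 ≤ᵐ[μ] G n)
    (hGg : ∀ᵐ a ∂μ, Tendsto (fun n => G n a) atTop (nhds (g a)))
    (hint : Tendsto (fun n => ∫ a, G n a ∂μ) atTop (nhds (∫ a, g a ∂μ))) :
    Tendsto (fun n => ∫ a, |G n a - g a| ∂μ) atTop (nhds 0) := by
  have hpos (n : ℕ) : Integrable (fun a => max (g a - G n a) 0) μ := (hg.sub (hG n)).pos_part
  have hdeficit : Tendsto (fun n => ∫ a, max (g a - G n a) 0 ∂μ) atTop (nhds 0) := by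
    suffices Tendsto (fun n => ∫ a, max (g a - G n a) 0 ∂μ) atTop (nhds (∫ _, 0 ∂μ)) by
      rwa [integral_zero] at this
    refine tendsto_integral_of_dominated_convergence (fun a => |g a|)
      (fun n => (hpos n).aestronglyMeasurable) hg.abs (fun n => ?_) ?_
    · filter_upwards [hG0 n] with a (h0 : 0 ≤ G n a)
      rw [Real.norm_of_nonneg (le_max_right _ _)]
      exact max_le (by linarith [le_abs_self (g a)]) (abs_nonneg _)
    · filter_upwards [hGg] with a ha
      simpa using (ha.const_sub (g a)).max (tendsto_const_nhds (x := (0 : ℝ)))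
  have habs (n : ℕ) : ∫ a, |G n a - g a| ∂μ =
      ∫ a, G n a ∂μ - ∫ a, g a ∂μ + 2 * ∫ a, max (g a - G n a) 0 ∂μ := by
    have hsub : Integrable (fun a => G n a - g a) μ := (hG n).sub hg
    rw [← integral_const_mul, ← integral_sub (hG n) hg,
      ← integral_add hsub ((hpos n).const_mul 2)]
    refine integral_congr_ae (.of_forall fun a => ?_)
    beta_reduce
    rcases le_total (g a) (G n a) with h | h
    · rw [abs_of_nonneg (by linarith), max_eq_right (by linarith)]
      ring
    · rw [abs_of_nonpos (by linarith), max_eq_left (by linarith)]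
      ring
  simp_rw [habs]
  simpa using (hint.sub_const (∫ a, g a ∂μ)).add (hdeficit.const_mul 2)

/-- Pratt's lemma. -/
theorem tendsto_integral_of_tendsto_integral_bound {E : Type*} [NormedAddCommGroup E]
    [NormedSpace ℝ E] {F : ℕ → α → E} {f : α → E} {G : ℕ → α → ℝ} {g : α → ℝ}
    (hF : ∀ n, AEStronglyMeasurable (F n) μ) (hG : ∀ n, Integrable (G n) μ) (hg : Integrable g μ)
    (hFG : ∀ n, ∀ᵐ a ∂μ, ‖F n a‖ ≤ G n a)
    (hFf : ∀ᵐ a ∂μ, Tendsto (fun n => F n a) atTop (nhds (f a)))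
    (hGg : ∀ᵐ a ∂μ, Tendsto (fun n => G n a) atTop (nhds (g a)))
    (hint : Tendsto (fun n => ∫ a, G n a ∂μ) atTop (nhds (∫ a, g a ∂μ))) :
    Tendsto (fun n => ∫ a, F n a ∂μ) atTop (nhds (∫ a, f a ∂μ)) := by
  have hfg : ∀ᵐ a ∂μ, ‖f a‖ ≤ g a := by
    filter_upwards [ae_all_iff.2 hFG, hFf, hGg] with a hle hf hg
    exact le_of_tendsto_of_tendsto' hf.norm hg hle
  have hf : Integrable f μ :=
    hg.mono' (aestronglyMeasurable_of_tendsto_ae atTop hF hFf) hfg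
  have hFi (n : ℕ) : Integrable (F n) μ := (hG n).mono' (hF n) (hFG n)
  have htrunc (n : ℕ) : Integrable (fun a => min ‖F n a - f a‖ (2 * g a)) μ :=
    ((hFi n).sub hf).norm.inf (hg.const_mul 2)
  have htrunc_lim : Tendsto (fun n => ∫ a, min ‖F n a - f a‖ (2 * g a) ∂μ) atTop (nhds 0) := by
    suffices Tendsto (fun n => ∫ a, min ‖F n a - f a‖ (2 * g a) ∂μ) atTop (nhds (∫ _, 0 ∂μ)) by
      rwa [integral_zero] at this
    refine tendsto_integral_of_dominated_convergence (fun a => 2 * g a)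
      (fun n => (htrunc n).aestronglyMeasurable) (hg.const_mul 2) (fun n => ?_) ?_ <;>
    filter_upwards [hFf, hfg] with a hFa hfa <;>
    have hg0 : 0 ≤ g a := (norm_nonneg _).trans hfa
    · rw [Real.norm_of_nonneg (by positivity)]
      exact min_le_right _ _
    · simpa [hg0] using
        (tendsto_iff_norm_sub_tendsto_zero.1 hFa).min (tendsto_const_nhds (x := 2 * g a))
  have hbound_lim := tendsto_integral_abs_sub_of_tendsto_integral hG hg
    (fun n => (hFG n).mono fun _ h => (norm_nonneg _).trans h) hGg hint
  refine tendsto_iff_norm_sub_tendsto_zero.2 (squeeze_zero (fun _ => norm_nonneg _) (fun n => ?_)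
    ((htrunc_lim.add hbound_lim).trans_eq (by rw [add_zero])))
  have habs : Integrable (fun a => |G n a - g a|) μ := ((hG n).sub hg).abs
  rw [← integral_sub (hFi n) hf, ← integral_add (htrunc n) habs]
  refine norm_integral_le_of_norm_le ((htrunc n).add habs) ?_
  filter_upwards [hFG n, hfg] with a hFa hfa
  rcases min_cases ‖F n a - f a‖ (2 * g a) with ⟨hmin, -⟩ | ⟨hmin, -⟩ <;> rw [hmin]
  · exact le_add_of_nonneg_right (abs_nonneg _)
  · linarith [norm_sub_le (F n a) (f a), le_abs_self (G n a - g a)]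

end GeneralizedDominatedConvergence

section ConditionalSecondMoment

variable {Ω : Type*} {m m₁ m₂ m₀ : MeasurableSpace Ω} {ν : Measure Ω} [IsFiniteMeasure ν]
  {X : Ω → ℝ}

theorem integral_sq_condExp_le (hm : m ≤ m₀) (hX : MemLp X 2 ν) :
    ∫ ω, ν[X | m] ω ^ 2 ∂ν ≤ ∫ ω, X ω ^ 2 ∂ν := by
  have jensen : ∀ᵐ ω ∂ν, ν[X | m] ω ^ 2 ≤ ν[fun ω => X ω ^ 2 | m] ω :=
    even_two.convexOn_pow.map_condExp_le_univ hm (continuous_pow 2).lowerSemicontinuous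
      (hX.integrable one_le_two) hX.integrable_sq
  calc ∫ ω, ν[X | m] ω ^ 2 ∂ν
      ≤ ∫ ω, ν[fun ω => X ω ^ 2 | m] ω ∂ν :=
        integral_mono_ae (hX.condExp one_le_two).integrable_sq integrable_condExp jensen
    _ = ∫ ω, X ω ^ 2 ∂ν := integral_condExp hm

theorem integral_sq_condExp_mono (h₁₂ : m₁ ≤ m₂) (h₂ : m₂ ≤ m₀) (hX : MemLp X 2 ν) :
    ∫ ω, ν[X | m₁] ω ^ 2 ∂ν ≤ ∫ ω, ν[X | m₂] ω ^ 2 ∂ν := by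
  have tower : (fun ω => ν[X | m₁] ω ^ 2) =ᵐ[ν] fun ω => ν[ν[X | m₂] | m₁] ω ^ 2 :=
    (condExp_condExp_of_le h₁₂ h₂).symm.fun_comp (· ^ 2)
  rw [integral_congr_ae tower]
  exact integral_sq_condExp_le (h₁₂.trans h₂) (hX.condExp one_le_two)

theorem condExp_comp_fst_prod {E Ω' : Type*} [NormedAddCommGroup E] [NormedSpace ℝ E]
    [CompleteSpace E] {X : Ω → E} [mΩ' : MeasurableSpace Ω'] (ρ : Measure Ω') [IsFiniteMeasure ρ]
    (hm : m ≤ m₀) (hX : Integrable X ν) :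
    (ν.prod ρ)[fun q => X q.1 | m.prod mΩ'] =ᵐ[ν.prod ρ] fun q => ν[X | m] q.1 := by
  have hle : m.prod mΩ' ≤ m₀.prod mΩ' := sup_le_sup_right (MeasurableSpace.comap_mono hm) _
  have hcond : Integrable (fun q : Ω × Ω' => ν[X | m] q.1) (ν.prod ρ) :=
    integrable_condExp.comp_fst ρ
  refine (ae_eq_condExp_of_forall_setIntegral_eq hle (hX.comp_fst ρ)
    (fun _ _ _ => hcond.integrableOn) (fun S hS _ => ?_) ?_).symm
  · have section_measurable (z : Ω') : MeasurableSet[m] ((fun ω => (ω, z)) ⁻¹' S) :=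
      measurable_prodMk_right hS
    have fubini {f : Ω → E} (hf : Integrable f ν) : ∫ q in S, f q.1 ∂(ν.prod ρ) =
        ∫ z, ∫ ω in (fun ω => (ω, z)) ⁻¹' S, f ω ∂ν ∂ρ := by
      rw [← integral_indicator (hle _ hS),
        integral_prod_symm _ ((hf.comp_fst ρ).indicator (hle _ hS))]
      refine integral_congr_ae (.of_forall fun z => ?_)
      exact integral_indicator (hm _ (section_measurable z))
    rw [fubini hX, fubini integrable_condExp]
    exact integral_congr_ae (.of_forall fun z => setIntegral_condExp hm hX (section_measurable z))
  · exact (stronglyMeasurable_condExp.comp_measurable measurable_fst).aestronglyMeasurable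

/-- Data processing: `T (Y, ·)` is a degradation of `Y` by independent randomness. -/
theorem integral_sq_condExp_comap_prod_le {Ω' β δ : Type*} [mΩ' : MeasurableSpace Ω']
    [mβ : MeasurableSpace β] [MeasurableSpace δ] (ρ : Measure Ω') [IsProbabilityMeasure ρ]
    {Y : Ω → β} (hY : Measurable Y) {T : β × Ω' → δ} (hT : Measurable T) (hX : MemLp X 2 ν) :
    ∫ q, (ν.prod ρ)[fun q => X q.1 |
        MeasurableSpace.comap (fun q => T (Y q.1, q.2)) inferInstance] q ^ 2 ∂(ν.prod ρ) ≤
      ∫ ω, ν[X | mβ.comap Y] ω ^ 2 ∂ν := by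
  have hle : (mβ.comap Y).prod mΩ' ≤ m₀.prod mΩ' :=
    sup_le_sup_right (MeasurableSpace.comap_mono hY.comap_le) _
  have degraded_measurable :
      Measurable[(mβ.comap Y).prod mΩ'] fun q : Ω × Ω' => T (Y q.1, q.2) :=
    hT.comp (((comap_measurable Y).comp (@measurable_fst _ _ (mβ.comap Y) mΩ')).prodMk
      (@measurable_snd _ _ (mβ.comap Y) mΩ'))
  calc _ ≤ ∫ q, (ν.prod ρ)[fun q => X q.1 | (mβ.comap Y).prod mΩ'] q ^ 2 ∂(ν.prod ρ) :=
        integral_sq_condExp_mono degraded_measurable.comap_le hle (hX.comp_fst ρ)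
    _ = ∫ q, ν[X | mβ.comap Y] q.1 ^ 2 ∂(ν.prod ρ) :=
        integral_congr_ae ((condExp_comp_fst_prod ρ hY.comap_le
          (hX.integrable one_le_two)).fun_comp (· ^ 2))
    _ = ∫ ω, ν[X | mβ.comap Y] ω ^ 2 ∂ν := by
        rw [integral_fun_fst fun ω => ν[X | mβ.comap Y] ω ^ 2, probReal_univ, one_smul]

end ConditionalSecondMoment

section BayesFormula

variable {Ω α β : Type*} [MeasurableSpace α] {p : α → β → ℝ} {f : α → ℝ} {μ : Measure α}

/-- The integral of `f` against the unnormalised posterior `p x y ∂μ` given the observation `y`. -/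
def likelihoodIntegral (μ : Measure α) (p : α → β → ℝ) (f : α → ℝ) (y : β) : ℝ :=
  ∫ x, f x * p x y ∂μ

/-- The posterior mean of `f` given the observation `y`, as provided by Bayes' formula. It is `0`
where the evidence `likelihoodIntegral μ p 1 y` vanishes. -/
def posteriorMean (μ : Measure α) (p : α → β → ℝ) (f : α → ℝ) (y : β) : ℝ :=
  likelihoodIntegral μ p f y / likelihoodIntegral μ p 1 y

theorem integral_const_mul_density (c : ℝ) (y : β) :
    ∫ x, c * p x y ∂μ = c * likelihoodIntegral μ p 1 y := by
  simp only [likelihoodIntegral, Pi.one_apply, one_mul, integral_const_mul]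

theorem likelihoodIntegral_one_pos [NeZero μ] {y : β} (hp0 : ∀ x, 0 < p x y)
    (hp : Integrable (p · y) μ) : 0 < likelihoodIntegral μ p 1 y := by
  have hsupport : Function.support (p · y) = Set.univ :=
    Set.eq_univ_of_forall fun x => (hp0 x).ne'
  simp only [likelihoodIntegral, Pi.one_apply, one_mul]
  rw [integral_pos_iff_support_of_nonneg (fun x => (hp0 x).le) hp, hsupport]
  exact NeZero.pos _

theorem posteriorMean_mul_likelihoodIntegral_one {y : β} (hp0 : ∀ x, 0 ≤ p x y)
    (hp : Integrable (p · y) μ) :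
    posteriorMean μ p f y * likelihoodIntegral μ p 1 y = likelihoodIntegral μ p f y := by
  refine div_mul_cancel_of_imp fun hevidence => ?_
  have hp_zero : (p · y) =ᵐ[μ] 0 := by
    rw [← integral_eq_zero_iff_of_nonneg hp0 hp]
    simpa only [likelihoodIntegral, Pi.one_apply, one_mul] using hevidence
  refine integral_eq_zero_of_ae (hp_zero.mono fun x (hx : p x y = 0) => ?_)
  simp only [hx, mul_zero, Pi.zero_apply]

/-- Expand the nonnegative posterior variance `∫ x, (f x - m) ^ 2 * p x y ∂μ`. -/
theorem sq_posteriorMean_mul_likelihoodIntegral_one_le {y : β} (hp0 : ∀ x, 0 ≤ p x y)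
    (hp : Integrable (p · y) μ) (hf : Integrable (fun x => f x * p x y) μ)
    (hf2 : Integrable (fun x => f x ^ 2 * p x y) μ) :
    posteriorMean μ p f y ^ 2 * likelihoodIntegral μ p 1 y ≤
      likelihoodIntegral μ p (fun x => f x ^ 2) y := by
  set m := posteriorMean μ p f y
  have bayes : m * likelihoodIntegral μ p 1 y = likelihoodIntegral μ p f y :=
    posteriorMean_mul_likelihoodIntegral_one hp0 hp
  have variance_eq : ∫ x, (f x - m) ^ 2 * p x y ∂μ =
      likelihoodIntegral μ p (fun x => f x ^ 2) y - 2 * m * likelihoodIntegral μ p f y +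
        m ^ 2 * likelihoodIntegral μ p 1 y := by
    have hsub : Integrable (fun x => f x ^ 2 * p x y - 2 * m * (f x * p x y)) μ :=
      hf2.sub (hf.const_mul _)
    rw [← integral_const_mul_density (m ^ 2) y, likelihoodIntegral, likelihoodIntegral,
      ← integral_const_mul, ← integral_sub hf2 (hf.const_mul _),
      ← integral_add hsub (hp.const_mul _)]
    exact integral_congr_ae (.of_forall fun x => by ring)
  have variance_nonneg : 0 ≤ ∫ x, (f x - m) ^ 2 * p x y ∂μ :=
    integral_nonneg fun x => mul_nonneg (sq_nonneg _) (hp0 x)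
  calc m ^ 2 * likelihoodIntegral μ p 1 y
      ≤ ∫ x, (f x - m) ^ 2 * p x y ∂μ + m ^ 2 * likelihoodIntegral μ p 1 y :=
        le_add_of_nonneg_left variance_nonneg
    _ = likelihoodIntegral μ p (fun x => f x ^ 2) y := by
        rw [variance_eq, ← bayes]
        ring

theorem continuous_likelihoodIntegral {S : Type*} [TopologicalSpace S] [FirstCountableTopology S]
    {p : S → α → β → ℝ} {y : β} {C : ℝ} (hf : Integrable f μ)
    (hp_meas : ∀ s, AEStronglyMeasurable (p s · y) μ) (hp_le : ∀ s x, ‖p s x y‖ ≤ C)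
    (hp_cont : ∀ x, Continuous fun s => p s x y) :
    Continuous fun s => likelihoodIntegral μ (p s) f y := by
  refine continuous_of_dominated (bound := fun x => ‖f x‖ * C)
    (fun s => hf.aestronglyMeasurable.mul (hp_meas s)) (fun s => .of_forall fun x => ?_)
    (hf.norm.mul_const C) (.of_forall fun x => (hp_cont x).const_mul (f x))
  rw [norm_mul]
  exact mul_le_mul_of_nonneg_left (hp_le s x) (norm_nonneg _)

theorem continuous_posteriorMean {S : Type*} [TopologicalSpace S] [FirstCountableTopology S]
    [IsFiniteMeasure μ] [NeZero μ] {p : S → α → β → ℝ} {y : β} {C : ℝ} (hf : Integrable f μ)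
    (hp_meas : ∀ s, AEStronglyMeasurable (p s · y) μ) (hp_pos : ∀ s x, 0 < p s x y)
    (hp_le : ∀ s x, ‖p s x y‖ ≤ C) (hp_cont : ∀ x, Continuous fun s => p s x y) :
    Continuous fun s => posteriorMean μ (p s) f y :=
  (continuous_likelihoodIntegral hf hp_meas hp_le hp_cont).div
    (continuous_likelihoodIntegral (integrable_const 1) hp_meas hp_le hp_cont)
    fun s => (likelihoodIntegral_one_pos (hp_pos s)
      (.of_bound (hp_meas s) C (.of_forall (hp_le s)))).ne'

variable [MeasurableSpace Ω] [MeasurableSpace β] {X : Ω → α} {Y : Ω → β} {ν : Measure Ω}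
  {κ : Measure β}

/-- The pair `(X, Y)` has joint density `p` with respect to `μ.prod κ`. Taking `μ` to be the law of
the parameter `X` makes `p x` the likelihood of the observation `Y` given `X = x`; the density is
real-valued so that it can be used in Bochner integrals. -/
structure HasJointDensity (X : Ω → α) (Y : Ω → β) (p : α → β → ℝ) (ν : Measure Ω) (μ : Measure α)
    (κ : Measure β) : Prop where
  measurable_left : Measurable X
  measurable_right : Measurable Y
  measurable_density : Measurable fun q : α × β => p q.1 q.2
  density_nonneg : ∀ x y, 0 ≤ p x y
  map_eq : ν.map (fun ω => (X ω, Y ω)) =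
    (μ.prod κ).withDensity fun q => ENNReal.ofReal (p q.1 q.2)

namespace HasJointDensity

theorem likelihoodIntegral_one_nonneg (h : HasJointDensity X Y p ν μ κ) (y : β) :
    0 ≤ likelihoodIntegral μ p 1 y :=
  integral_nonneg fun x => mul_nonneg zero_le_one (h.density_nonneg x y)

theorem integrable_comp_iff (h : HasJointDensity X Y p ν μ κ) {φ : α × β → ℝ} (hφ : Measurable φ) :
    Integrable (fun ω => φ (X ω, Y ω)) ν ↔
      Integrable (fun q => φ q * p q.1 q.2) (μ.prod κ) := by
  have hmap : Integrable φ (ν.map fun ω => (X ω, Y ω)) ↔ Integrable (fun ω => φ (X ω, Y ω)) ν :=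
    integrable_map_measure hφ.aestronglyMeasurable
      (h.measurable_left.prodMk h.measurable_right).aemeasurable
  rw [← hmap, h.map_eq, integrable_withDensity_iff_integrable_smul'
      h.measurable_density.ennreal_ofReal (.of_forall fun _ => ENNReal.ofReal_lt_top)]
  simp only [smul_eq_mul, ENNReal.toReal_ofReal (h.density_nonneg _ _), mul_comm]

theorem integrable_left_mul_density (h : HasJointDensity X Y p ν μ κ)
    (hf : Measurable f) (hint : Integrable (fun ω => f (X ω)) ν) :
    Integrable (fun q => f q.1 * p q.1 q.2) (μ.prod κ) :=
  (h.integrable_comp_iff (hf.comp measurable_fst)).1 hint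

variable [SFinite μ]

theorem measurable_likelihoodIntegral (h : HasJointDensity X Y p ν μ κ) (hf : Measurable f) :
    Measurable (likelihoodIntegral μ p f) :=
  ((hf.comp measurable_fst).mul
    h.measurable_density).stronglyMeasurable.integral_prod_left'.measurable

theorem measurable_posteriorMean (h : HasJointDensity X Y p ν μ κ) (hf : Measurable f) :
    Measurable (posteriorMean μ p f) :=
  (h.measurable_likelihoodIntegral hf).div (h.measurable_likelihoodIntegral measurable_one)

variable [SFinite κ]

theorem setIntegral_comp (h : HasJointDensity X Y p ν μ κ) {φ : α × β → ℝ} (hφ : Measurable φ)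
    (hint : Integrable (fun ω => φ (X ω, Y ω)) ν) {B : Set β} (hB : MeasurableSet B) :
    ∫ ω in Y ⁻¹' B, φ (X ω, Y ω) ∂ν = ∫ y in B, ∫ x, φ (x, y) * p x y ∂μ ∂κ := by
  have hXY := h.measurable_left.prodMk h.measurable_right
  have hU : MeasurableSet (Set.univ ×ˢ B : Set (α × β)) := MeasurableSet.univ.prod hB
  have hpre : Y ⁻¹' B = (fun ω => (X ω, Y ω)) ⁻¹' (Set.univ ×ˢ B) := by
    rw [Set.mk_preimage_prod, Set.preimage_univ, Set.univ_inter]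
  have hprod : (μ.prod κ).restrict (Set.univ ×ˢ B) = μ.prod (κ.restrict B) := by
    rw [← Measure.prod_restrict, Measure.restrict_univ]
  have hφp : Integrable (fun q => φ q * p q.1 q.2) (μ.prod (κ.restrict B)) := by
    rw [← hprod]
    exact ((h.integrable_comp_iff hφ).1 hint).integrableOn
  calc ∫ ω in Y ⁻¹' B, φ (X ω, Y ω) ∂ν
      = ∫ q in Set.univ ×ˢ B, φ q ∂(ν.map fun ω => (X ω, Y ω)) := by
        rw [hpre, setIntegral_map hU hφ.aestronglyMeasurable hXY.aemeasurable]
    _ = ∫ q in Set.univ ×ˢ B, φ q * p q.1 q.2 ∂(μ.prod κ) := by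
        rw [h.map_eq, setIntegral_withDensity_eq_setIntegral_toReal_smul
          h.measurable_density.ennreal_ofReal (.of_forall fun _ => ENNReal.ofReal_lt_top) _ hU]
        simp only [smul_eq_mul, ENNReal.toReal_ofReal (h.density_nonneg _ _), mul_comm]
    _ = ∫ y in B, ∫ x, φ (x, y) * p x y ∂μ ∂κ := by
        rw [hprod, integral_prod_symm _ hφp]

theorem integrable_likelihoodIntegral (h : HasJointDensity X Y p ν μ κ) (hf : Measurable f)
    (hint : Integrable (fun ω => f (X ω)) ν) : Integrable (likelihoodIntegral μ p f) κ :=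
  (h.integrable_left_mul_density hf hint).integral_prod_right

theorem setIntegral_likelihoodIntegral (h : HasJointDensity X Y p ν μ κ) (hf : Measurable f)
    (hint : Integrable (fun ω => f (X ω)) ν) {B : Set β} (hB : MeasurableSet B) :
    ∫ y in B, likelihoodIntegral μ p f y ∂κ = ∫ ω in Y ⁻¹' B, f (X ω) ∂ν :=
  (h.setIntegral_comp (hf.comp measurable_fst) hint hB).symm

theorem integral_likelihoodIntegral (h : HasJointDensity X Y p ν μ κ) (hf : Measurable f)
    (hint : Integrable (fun ω => f (X ω)) ν) :
    ∫ y, likelihoodIntegral μ p f y ∂κ = ∫ ω, f (X ω) ∂ν := by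
  simpa using h.setIntegral_likelihoodIntegral hf hint .univ

theorem ae_integrable_mul_density (h : HasJointDensity X Y p ν μ κ)
    (hf : Measurable f) (hint : Integrable (fun ω => f (X ω)) ν) :
    ∀ᵐ y ∂κ, Integrable (fun x => f x * p x y) μ :=
  (h.integrable_left_mul_density hf hint).prod_left_ae

variable [IsFiniteMeasure ν]

theorem ae_integrable_density (h : HasJointDensity X Y p ν μ κ) :
    ∀ᵐ y ∂κ, Integrable (p · y) μ := by
  simpa only [Pi.one_apply, one_mul] using
    h.ae_integrable_mul_density (f := 1) measurable_one (integrable_const 1)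

theorem ae_posteriorMean_mul_likelihoodIntegral_one (h : HasJointDensity X Y p ν μ κ) : ∀ᵐ y ∂κ,
    posteriorMean μ p f y * likelihoodIntegral μ p 1 y = likelihoodIntegral μ p f y :=
  h.ae_integrable_density.mono fun y hy =>
    posteriorMean_mul_likelihoodIntegral_one (h.density_nonneg · y) hy

theorem ae_sq_posteriorMean_mul_likelihoodIntegral_one_le (h : HasJointDensity X Y p ν μ κ)
    (hf : Measurable f)
    (hfX : MemLp (fun ω => f (X ω)) 2 ν) : ∀ᵐ y ∂κ,
    posteriorMean μ p f y ^ 2 * likelihoodIntegral μ p 1 y ≤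
      likelihoodIntegral μ p (fun x => f x ^ 2) y := by
  filter_upwards [h.ae_integrable_density,
    h.ae_integrable_mul_density hf (hfX.integrable one_le_two),
    h.ae_integrable_mul_density (hf.pow_const 2) hfX.integrable_sq] with y hp hfp hf2p
  exact sq_posteriorMean_mul_likelihoodIntegral_one_le (h.density_nonneg · y) hp hfp hf2p

theorem integrable_posteriorMean_comp (h : HasJointDensity X Y p ν μ κ) (hf : Measurable f)
    (hint : Integrable (fun ω => f (X ω)) ν) :
    Integrable (fun ω => posteriorMean μ p f (Y ω)) ν := by
  have hm := h.measurable_posteriorMean hf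
  have hmp : Measurable fun q : α × β => posteriorMean μ p f q.2 * p q.1 q.2 :=
    (hm.comp measurable_snd).mul h.measurable_density
  rw [h.integrable_comp_iff (φ := fun q => posteriorMean μ p f q.2) (hm.comp measurable_snd),
    integrable_prod_iff' hmp.aestronglyMeasurable]
  refine ⟨h.ae_integrable_density.mono fun y hy =>
    hy.const_mul (posteriorMean μ p f y), ?_⟩
  refine (h.integrable_likelihoodIntegral hf hint).norm.congr ?_
  filter_upwards [h.ae_posteriorMean_mul_likelihoodIntegral_one (f := f)] with y bayes
  simp only [norm_mul, Real.norm_of_nonneg (h.density_nonneg _ _)]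
  rw [integral_const_mul_density, ← bayes, norm_mul,
    Real.norm_of_nonneg (h.likelihoodIntegral_one_nonneg y)]

/-- Bayes' formula. -/
theorem condExp_ae_eq_posteriorMean (h : HasJointDensity X Y p ν μ κ)
    (hf : Measurable f) (hint : Integrable (fun ω => f (X ω)) ν) :
    ν[fun ω => f (X ω) | MeasurableSpace.comap Y inferInstance] =ᵐ[ν]
      fun ω => posteriorMean μ p f (Y ω) := by
  have hm := h.measurable_posteriorMean hf
  have hpost := h.integrable_posteriorMean_comp hf hint
  refine (ae_eq_condExp_of_forall_setIntegral_eq h.measurable_right.comap_le hint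
    (fun _ _ _ => hpost.integrableOn) ?_
    (hm.comp (comap_measurable Y)).stronglyMeasurable.aestronglyMeasurable).symm
  rintro _ ⟨B, hB, rfl⟩ -
  calc ∫ ω in Y ⁻¹' B, posteriorMean μ p f (Y ω) ∂ν
      = ∫ y in B, ∫ x, posteriorMean μ p f y * p x y ∂μ ∂κ :=
        h.setIntegral_comp (φ := fun q => posteriorMean μ p f q.2) (hm.comp measurable_snd) hpost hB
    _ = ∫ y in B, likelihoodIntegral μ p f y ∂κ := by
        refine integral_congr_ae (ae_restrict_of_ae ?_)
        filter_upwards [h.ae_posteriorMean_mul_likelihoodIntegral_one (f := f)] with y bayes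
        rw [integral_const_mul_density, bayes]
    _ = ∫ ω in Y ⁻¹' B, f (X ω) ∂ν := h.setIntegral_likelihoodIntegral hf hint hB

theorem integral_sq_condExp_eq (h : HasJointDensity X Y p ν μ κ)
    (hf : Measurable f) (hfX : MemLp (fun ω => f (X ω)) 2 ν) :
    ∫ ω, ν[fun ω => f (X ω) | MeasurableSpace.comap Y inferInstance] ω ^ 2 ∂ν =
      ∫ y, posteriorMean μ p f y ^ 2 * likelihoodIntegral μ p 1 y ∂κ := by
  have bayes : (fun ω =>
      ν[fun ω => f (X ω) | MeasurableSpace.comap Y inferInstance] ω ^ 2) =ᵐ[ν]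
        fun ω => posteriorMean μ p f (Y ω) ^ 2 :=
    (h.condExp_ae_eq_posteriorMean hf (hfX.integrable one_le_two)).fun_comp (· ^ 2)
  have hpost : Integrable (fun ω => posteriorMean μ p f (Y ω) ^ 2) ν :=
    (hfX.condExp one_le_two).integrable_sq.congr bayes
  calc _ = ∫ ω in Y ⁻¹' Set.univ, posteriorMean μ p f (Y ω) ^ 2 ∂ν := by
        rw [integral_congr_ae bayes, Set.preimage_univ, setIntegral_univ]
    _ = ∫ y in Set.univ, ∫ x, posteriorMean μ p f y ^ 2 * p x y ∂μ ∂κ :=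
        h.setIntegral_comp (φ := fun q => posteriorMean μ p f q.2 ^ 2)
          (((h.measurable_posteriorMean hf).comp measurable_snd).pow_const 2) hpost .univ
    _ = _ := by simp only [integral_const_mul_density, setIntegral_univ]

theorem integral_sq_condExp_congr (h : HasJointDensity X Y p ν μ κ)
    {Ω' : Type*} [MeasurableSpace Ω'] {X' : Ω' → α} {Y' : Ω' → β}
    {ν' : Measure Ω'} [IsFiniteMeasure ν'] (h' : HasJointDensity X' Y' p ν' μ κ)
    (hf : Measurable f) (hfX : MemLp (fun ω => f (X ω)) 2 ν)
    (hfX' : MemLp (fun ω => f (X' ω)) 2 ν') :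
    ∫ ω, ν[fun ω => f (X ω) | MeasurableSpace.comap Y inferInstance] ω ^ 2 ∂ν =
      ∫ ω, ν'[fun ω => f (X' ω) | MeasurableSpace.comap Y' inferInstance] ω ^ 2 ∂ν' := by
  rw [h.integral_sq_condExp_eq hf hfX, h'.integral_sq_condExp_eq hf hfX']

end HasJointDensity

/-- The integrand is dominated by the posterior second moment, whose integral does not depend on
the parameter, so Pratt's lemma applies. -/
theorem continuous_integral_sq_condExp [IsProbabilityMeasure ν] [SFinite κ] {S : Type*}
    [TopologicalSpace S] [FirstCountableTopology S] {Y : S → Ω → β} {p : S → α → β → ℝ} {C : β → ℝ}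
    (h : ∀ s, HasJointDensity X (Y s) (p s) ν (ν.map X) κ) (hp_pos : ∀ s x y, 0 < p s x y)
    (hp_le : ∀ s x y, p s x y ≤ C y) (hp_cont : ∀ x y, Continuous fun s => p s x y)
    (hf : Measurable f) (hfX : MemLp (fun ω => f (X ω)) 2 ν) :
    Continuous fun s =>
      ∫ ω, ν[fun ω => f (X ω) | MeasurableSpace.comap (Y s) inferInstance] ω ^ 2 ∂ν := by
  refine continuous_iff_seqContinuous.2 fun u s hu => ?_
  have hX : Measurable X := (h s).measurable_left
  have : IsProbabilityMeasure (ν.map X) := Measure.isProbabilityMeasure_map hX.aemeasurable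
  have hf_law : MemLp f 2 (ν.map X) :=
    (memLp_map_measure_iff hf.aestronglyMeasurable hX.aemeasurable).2 hfX
  have hp_meas (s : S) (y : β) : AEStronglyMeasurable (p s · y) (ν.map X) :=
    ((h s).measurable_density.comp measurable_prodMk_right).aestronglyMeasurable
  have hp_norm (s : S) (x : α) (y : β) : ‖p s x y‖ ≤ C y :=
    (Real.norm_of_nonneg (hp_pos s x y).le).trans_le (hp_le s x y)
  have cont_moment {g : α → ℝ} (hg : Integrable g (ν.map X)) (y : β) :
      Continuous fun s => likelihoodIntegral (ν.map X) (p s) g y :=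
    continuous_likelihoodIntegral hg (hp_meas · y) (hp_norm · · y) (hp_cont · y)
  have cont_integrand (y : β) : Continuous fun s =>
      posteriorMean (ν.map X) (p s) f y ^ 2 * likelihoodIntegral (ν.map X) (p s) 1 y :=
    ((continuous_posteriorMean (hf_law.integrable one_le_two) (hp_meas · y) (hp_pos · · y)
      (hp_norm · · y) (hp_cont · y)).pow 2).mul (cont_moment (integrable_const 1) y)
  have hint (s : S) := (h s).integrable_likelihoodIntegral (hf.pow_const 2) hfX.integrable_sq
  simp only [Function.comp_def, (h _).integral_sq_condExp_eq hf hfX]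
  refine tendsto_integral_of_tendsto_integral_bound
    (fun n => (((h (u n)).measurable_posteriorMean hf).pow_const 2 |>.mul
      ((h (u n)).measurable_likelihoodIntegral measurable_one)).aestronglyMeasurable)
    (fun n => hint (u n)) (hint s) (fun n => ?_)
    (.of_forall fun y => ((cont_integrand y).tendsto s).comp hu)
    (.of_forall fun y => ((cont_moment hf_law.integrable_sq y).tendsto s).comp hu) ?_
  · filter_upwards [(h (u n)).ae_sq_posteriorMean_mul_likelihoodIntegral_one_le hf hfX] with y hy
    rwa [Real.norm_of_nonneg (mul_nonneg (sq_nonneg _) ((h (u n)).likelihoodIntegral_one_nonneg y))]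
  · simp only [(h _).integral_likelihoodIntegral (hf.pow_const 2) hfX.integrable_sq]
    exact tendsto_const_nhds

end BayesFormula

section GaussianNoise

variable {Ω : Type*} [MeasurableSpace Ω] {ν : Measure Ω}

theorem gaussianPDFReal_le (m : ℝ) (v : ℝ≥0) (y : ℝ) :
    gaussianPDFReal m v y ≤ (√(2 * Real.pi * v))⁻¹ := by
  refine mul_le_of_le_one_right (by positivity) (Real.exp_le_one_iff.2 ?_)
  exact div_nonpos_of_nonpos_of_nonneg (neg_nonpos.2 (sq_nonneg _)) (by positivity)

theorem continuous_gaussianPDFReal_mean (v : ℝ≥0) (y : ℝ) :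
    Continuous fun m => gaussianPDFReal m v y := by
  unfold gaussianPDFReal
  fun_prop

theorem lintegral_const_add_gaussianReal {v : ℝ≥0} (hv : v ≠ 0) (c : ℝ) {φ : ℝ → ℝ≥0∞}
    (hφ : Measurable φ) :
    ∫⁻ w, φ (c + w) ∂(gaussianReal 0 v) = ∫⁻ y, ENNReal.ofReal (gaussianPDFReal c v y) * φ y := by
  rw [← lintegral_map hφ (measurable_const_add c), gaussianReal_map_const_add, zero_add,
    gaussianReal_of_var_ne_zero _ hv,
    lintegral_withDensity_eq_lintegral_mul _ (measurable_gaussianPDF _ _) hφ]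
  rfl

theorem hasLaw_const_mul_add_const_mul_gaussianReal {U V : Ω → ℝ} {v : ℝ≥0} {a b : ℝ}
    (hU : HasLaw U (gaussianReal 0 v) ν) (hV : HasLaw V (gaussianReal 0 v) ν)
    (hindep : IndepFun U V ν) (hab : a ^ 2 + b ^ 2 = 1) :
    HasLaw (fun ω => a * U ω + b * V ω) (gaussianReal 0 v) ν := by
  have hsum := IndepFun.hasLaw_fun_add (gaussianReal_const_mul hU a) (gaussianReal_const_mul hV b)
    (hindep.comp (measurable_const_mul a) (measurable_const_mul b))
  have hvar : NNReal.mk (a ^ 2) (sq_nonneg a) + NNReal.mk (b ^ 2) (sq_nonneg b) = 1 :=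
    NNReal.eq hab
  rwa [gaussianReal_conv_gaussianReal, mul_zero, mul_zero, add_zero, ← add_mul, hvar, one_mul]
    at hsum

variable [IsProbabilityMeasure ν]

theorem hasJointDensity_add_gaussianReal {α : Type*} [MeasurableSpace α] {X : Ω → α} {W : Ω → ℝ}
    {c : α → ℝ} {v : ℝ≥0} (hv : v ≠ 0) (hX : Measurable X) (hW : Measurable W)
    (hc : Measurable c) (hlaw : HasLaw W (gaussianReal 0 v) ν) (hindep : IndepFun X W ν) :
    HasJointDensity X (fun ω => c (X ω) + W ω) (fun x => gaussianPDFReal (c x) v) ν (ν.map X)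
      volume := by
  have hpdf : Measurable fun q : α × ℝ => gaussianPDFReal (c q.1) v q.2 := by
    unfold gaussianPDFReal
    fun_prop
  have hXY : Measurable fun ω => (X ω, c (X ω) + W ω) := by fun_prop
  have hXW : HasLaw (fun ω => (X ω, W ω)) ((ν.map X).prod (gaussianReal 0 v)) ν :=
    hindep.hasLaw_prod (hX.measurePreserving ν).hasLaw hlaw
  refine ⟨hX, (hc.comp hX).add hW, hpdf, fun x y => gaussianPDFReal_nonneg _ _ _, ?_⟩
  refine Measure.ext_of_lintegral _ fun φ hφ => ?_
  have hshift : Measurable fun q : α × ℝ => φ (q.1, c q.1 + q.2) := by fun_prop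
  calc ∫⁻ q, φ q ∂(ν.map fun ω => (X ω, c (X ω) + W ω))
      = ∫⁻ ω, φ (X ω, c (X ω) + W ω) ∂ν := lintegral_map hφ hXY
    _ = ∫⁻ q, φ (q.1, c q.1 + q.2) ∂((ν.map X).prod (gaussianReal 0 v)) :=
        hXW.lintegral_comp hshift.aemeasurable
    _ = ∫⁻ x, (∫⁻ y, ENNReal.ofReal (gaussianPDFReal (c x) v y) * φ (x, y)) ∂(ν.map X) := by
        rw [lintegral_prod _ hshift.aemeasurable]
        exact lintegral_congr fun x =>
          lintegral_const_add_gaussianReal hv (c x) (hφ.comp measurable_prodMk_left)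
    _ = ∫⁻ q, φ q ∂(((ν.map X).prod volume).withDensity
          fun q => ENNReal.ofReal (gaussianPDFReal (c q.1) v q.2)) := by
        rw [lintegral_withDensity_eq_lintegral_mul _ hpdf.ennreal_ofReal hφ,
          lintegral_prod _ (hpdf.ennreal_ofReal.mul hφ).aemeasurable]
        rfl

theorem indepFun_comp_fst_prodMk_snd {Ω' α β : Type*} [MeasurableSpace Ω'] [MeasurableSpace α]
    [MeasurableSpace β] (ρ : Measure Ω') [IsProbabilityMeasure ρ] {X : Ω → α} {Y : Ω → β}
    (hX : Measurable X) (hY : Measurable Y) (hindep : IndepFun X Y ν) :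
    IndepFun (fun q : Ω × Ω' => X q.1) (fun q => (Y q.1, q.2)) (ν.prod ρ) := by
  have hX_law := hX.measurePreserving ν
  have hY_law := hY.measurePreserving ν
  have hXY_law : MeasurePreserving (fun ω => (X ω, Y ω)) ν ((ν.map X).prod (ν.map Y)) :=
    (hindep.hasLaw_prod hX_law.hasLaw hY_law.hasLaw).measurePreserving (hX.prodMk hY)
  have hassoc := (measurePreserving_prodAssoc (ν.map X) (ν.map Y) ρ).comp
    (hXY_law.prod (MeasurePreserving.id ρ))
  exact (indepFun_iff_hasLaw_prodMk_prod (hX_law.comp measurePreserving_fst).hasLaw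
    (hY_law.prod (MeasurePreserving.id ρ)).hasLaw).2 hassoc.hasLaw

end GaussianNoise

/-- `Θ` and `W` are the input and the noise of a scalar Gaussian channel: `W` is a standard normal
variable independent of `Θ`. The signal-to-noise ratio enters only through the observation
`√γ * Θ + W`. -/
structure IsGaussianChannel {Ω : Type*} [MeasurableSpace Ω] (Θ W : Ω → ℝ) (ν : Measure Ω) :
    Prop where
  measurable_input : Measurable Θ
  measurable_noise : Measurable W
  hasLaw_noise : HasLaw W (gaussianReal 0 1) ν
  indepFun : IndepFun Θ W ν

namespace IsGaussianChannel

variable {Ω : Type*} [MeasurableSpace Ω] {ν : Measure Ω} [IsProbabilityMeasure ν] {Θ W : Ω → ℝ}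

theorem hasJointDensity (h : IsGaussianChannel Θ W ν) (s : ℝ) :
    HasJointDensity Θ (fun ω => s * Θ ω + W ω) (fun θ => gaussianPDFReal (s * θ) 1) ν (ν.map Θ)
      volume :=
  hasJointDensity_add_gaussianReal one_ne_zero h.measurable_input h.measurable_noise
    (measurable_const_mul s) h.hasLaw_noise h.indepFun

theorem prod_gaussianReal (h : IsGaussianChannel Θ W ν) {a b : ℝ} (hab : a ^ 2 + b ^ 2 = 1) :
    IsGaussianChannel (fun q : Ω × ℝ => Θ q.1) (fun q => a * W q.1 + b * q.2)
      (ν.prod (gaussianReal 0 1)) where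
  measurable_input := h.measurable_input.comp measurable_fst
  measurable_noise := by
    have := h.measurable_noise
    fun_prop
  hasLaw_noise := hasLaw_const_mul_add_const_mul_gaussianReal
    (h.hasLaw_noise.fun_comp measurePreserving_fst.hasLaw) measurePreserving_snd.hasLaw
    (indepFun_prod h.measurable_noise measurable_id) hab
  indepFun := (indepFun_comp_fst_prodMk_snd _ h.measurable_input h.measurable_noise
    h.indepFun).comp measurable_id (ψ := fun z : ℝ × ℝ => a * z.1 + b * z.2) (by fun_prop)

theorem continuous_seF (h : IsGaussianChannel Θ W ν) (hΘ : MemLp Θ 2 ν) :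
    Continuous (seF ν Θ W) :=
  (continuous_integral_sq_condExp h.hasJointDensity
    (fun _ _ _ => gaussianPDFReal_pos _ _ _ one_ne_zero) (fun _ _ _ => gaussianPDFReal_le _ _ _)
    (fun θ y => (continuous_gaussianPDFReal_mean 1 y).comp (continuous_mul_const θ))
    measurable_id hΘ).comp Real.continuous_sqrt

/-- With `Z` a fresh standard normal and `V = a W + b Z`, the observation `a s Θ + V` has the same
law as `a s Θ + W` and is the degradation `a (s Θ + W) + b Z` of `s Θ + W`. -/
theorem integral_sq_condExp_mul_le (h : IsGaussianChannel Θ W ν) (hΘ : MemLp Θ 2 ν) {a : ℝ}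
    (ha : a ^ 2 ≤ 1) (s : ℝ) :
    ∫ ω, ν[Θ | MeasurableSpace.comap (fun ω => a * s * Θ ω + W ω) inferInstance] ω ^ 2 ∂ν ≤
      ∫ ω, ν[Θ | MeasurableSpace.comap (fun ω => s * Θ ω + W ω) inferInstance] ω ^ 2 ∂ν := by
  set b := √(1 - a ^ 2)
  have hab : a ^ 2 + b ^ 2 = 1 := by
    rw [Real.sq_sqrt (sub_nonneg.2 ha), add_sub_cancel]
  have hΘfst : (ν.prod (gaussianReal 0 1)).map (fun q => Θ q.1) = ν.map Θ :=
    ((h.measurable_input.measurePreserving ν).comp measurePreserving_fst).map_eq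
  have hdegraded := (h.prod_gaussianReal hab).hasJointDensity (a * s)
  rw [hΘfst] at hdegraded
  calc _ = ∫ q, (ν.prod (gaussianReal 0 1))[fun q => Θ q.1 | MeasurableSpace.comap
          (fun q => a * s * Θ q.1 + (a * W q.1 + b * q.2)) inferInstance] q ^ 2
            ∂(ν.prod (gaussianReal 0 1)) :=
        (h.hasJointDensity (a * s)).integral_sq_condExp_congr hdegraded measurable_id hΘ
          (hΘ.comp_fst _)
    _ = ∫ q, (ν.prod (gaussianReal 0 1))[fun q => Θ q.1 | MeasurableSpace.comap
          (fun q => a * (s * Θ q.1 + W q.1) + b * q.2) inferInstance] q ^ 2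
            ∂(ν.prod (gaussianReal 0 1)) := by
        simp only [mul_add, mul_assoc, add_assoc]
    _ ≤ _ := integral_sq_condExp_comap_prod_le _ (h.hasJointDensity s).measurable_right
        (T := fun z : ℝ × ℝ => a * z.1 + b * z.2) (by fun_prop) hΘ

theorem monotone_seF (h : IsGaussianChannel Θ W ν) (hΘ : MemLp Θ 2 ν) :
    Monotone (seF ν Θ W) := by
  intro γ₁ γ₂ hγ
  have hsqrt : √γ₁ ≤ √γ₂ := Real.sqrt_le_sqrt hγ
  have hratio : (√γ₁ / √γ₂) ^ 2 ≤ 1 :=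
    pow_le_one₀ (by positivity) (div_le_one_of_le₀ hsqrt (Real.sqrt_nonneg _))
  have hscale : √γ₁ / √γ₂ * √γ₂ = √γ₁ :=
    div_mul_cancel_of_imp fun h0 => le_antisymm (hsqrt.trans h0.le) (Real.sqrt_nonneg _)
  simpa only [seF, hscale] using h.integral_sq_condExp_mul_le hΘ hratio √γ₂

theorem seF_mem_Icc (h : IsGaussianChannel Θ W ν) (hΘ : MemLp Θ 2 ν) (γ : ℝ) :
    seF ν Θ W γ ∈ Set.Icc 0 (∫ ω, Θ ω ^ 2 ∂ν) :=
  ⟨integral_nonneg fun _ => sq_nonneg _,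
    integral_sq_condExp_le (h.hasJointDensity √γ).measurable_right.comap_le hΘ⟩

end IsGaussianChannel

/-- **Properties of the scalar state-evolution map.** For square-integrable `Θ` and a standard
Gaussian `G` independent of `Θ`, the map `F(γ) = E[(E[Θ | √γΘ + G])²]` is (a) non-decreasing
and (b) continuous on `[0,∞)`; and (c) for any `λ > 0` and starting point `γ₀ ≥ 0`, the
iterates `γ_{k+1} = λ² F(γ_k)` form a monotone sequence converging to a fixed point
`γ_∞ ∈ [0, λ² E[Θ²]]` with `γ_∞ = λ² F(γ_∞)`. -/
theorem seF_monotone_continuous_and_fixed_point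
    {Ω : Type*} [MeasurableSpace Ω] (ν : Measure Ω) [IsProbabilityMeasure ν]
    (Θ : Ω → ℝ) (hΘm : Measurable Θ)
    (hΘsq : MeasureTheory.Integrable (fun ω => Θ ω ^ 2) ν)
    (W : Ω → ℝ) (hWm : Measurable W) (hW : ν.map W = gaussianReal 0 1)
    (hindep : IndepFun Θ W ν) :
    MonotoneOn (seF ν Θ W) (Set.Ici 0) ∧
    ContinuousOn (seF ν Θ W) (Set.Ici 0) ∧
    (∀ lam : ℝ, 0 < lam → ∀ γ0 : ℝ, 0 ≤ γ0 → ∀ γseq : ℕ → ℝ,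
      γseq 0 = γ0 → (∀ k, γseq (k + 1) = lam ^ 2 * seF ν Θ W (γseq k)) →
      (Monotone γseq ∨ Antitone γseq) ∧
      ∃ γinf ∈ Set.Icc (0 : ℝ) (lam ^ 2 * ∫ ω, Θ ω ^ 2 ∂ν),
        Tendsto γseq atTop (nhds γinf) ∧ γinf = lam ^ 2 * seF ν Θ W γinf) := by
  have channel : IsGaussianChannel Θ W ν := ⟨hΘm, hWm, ⟨hWm.aemeasurable, hW⟩, hindep⟩
  have hΘ : MemLp Θ 2 ν := (memLp_two_iff_integrable_sq hΘm.aestronglyMeasurable).2 hΘsq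
  have hmono := channel.monotone_seF hΘ
  have hcont := channel.continuous_seF hΘ
  refine ⟨hmono.monotoneOn _, hcont.continuousOn, fun lam _ γ0 _ γseq hzero hsucc => ?_⟩
  let step : ℝ → ℝ := fun γ => lam ^ 2 * seF ν Θ W γ
  have step_mono : Monotone step := hmono.const_mul (sq_nonneg lam)
  have step_mem (γ : ℝ) : step γ ∈ Set.Icc 0 (lam ^ 2 * ∫ ω, Θ ω ^ 2 ∂ν) :=
    ⟨mul_nonneg (sq_nonneg lam) (channel.seF_mem_Icc hΘ γ).1,
      mul_le_mul_of_nonneg_left (channel.seF_mem_Icc hΘ γ).2 (sq_nonneg lam)⟩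
  obtain rfl : γseq = fun k => step^[k] γ0 := by
    funext k
    induction k with
    | zero => exact hzero
    | succ k ih => rw [hsucc, ih, Function.iterate_succ_apply']
  obtain ⟨γinf, hmem, hlim, hfix⟩ :=
    exists_tendsto_iterate_isFixedPt step_mono (hcont.const_mul (lam ^ 2)) step_mem γ0
  exact ⟨monotone_or_antitone_iterate step_mono γ0, γinf, hmem, hlim, hfix.symm⟩

end
end

section
/- Let G = (V, E) be a finite tree with |V| = n, let 𝒳 be a finite nonempty set, and for each edge (i,j) ∈ E let ψ_{ij} : 𝒳 × 𝒳 → (0, ∞) be strictly positive, with ψ_{ij}(x,y) = ψ_{ji}(y,x). Let μ be the probability distribution on 𝒳^V given by μ(x) = (1/Z) Π_{(i,j)∈E} ψ_{ij}(x_i, x_j), and for each edge (i,j) let μ_{(i,j)} be the analogous distribution with the factor ψ_{ij} removed. Initialize, for each directed edge i→j, an arbitrary probability distribution ν^{(0)}_{i→j} on 𝒳, and define belief propagation updates ν^{(t+1)}_{i→j}(x_i) = (1/Z_{i→j}) Π_{k ∈ ∂i \ {j}} Σ_{x_k ∈ 𝒳} ψ_{ik}(x_i, x_k) ν^{(t)}_{k→i}(x_k),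 where ∂i is the set of neighbors of i and Z_{i→j} normalizes the result to a probability distribution. Then for every t ≥ n and every directed edge i→j, ν^{(t)}_{i→j}(x) = μ_{(i,j)}(x_i = x) for all x ∈ 𝒳, i.e., belief propagation computes the exact single-site marginals of the edge-removed measures on trees. -/
noncomputable section

/-! Deleting an edge `ij` of a forest leaves a component of `i`, its branch. A branch is its root
`i` together with the disjoint branches hanging off the other neighbours of `i`, and the edges
inside it split accordingly. Functions of disjoint sets of coordinates are independent under the
uniform distribution on configurations, so the marginals at the roots of the branches satisfy the
sum-product recursion up to constants, which normalization removes. By induction on the size of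
its branch, each message is therefore the marginal at the root of the branch Gibbs measure. The
remaining edges of `G - ij` avoid the branch, so they contribute only another constant. -/

namespace BeliefPropagation

open Finset
open scoped BigOperators

section Independence

variable {ι κ : Type*} {α : ι → Type*} {R : Type*} [Fintype ι] [DecidableEq ι]
  [∀ i, Fintype (α i)] [CommSemiring R] [Algebra ℚ≥0 R]

lemma expect_mul_of_dependsOn {f g : (∀ i, α i) → R} {S : Set ι} (hf : DependsOn f S)
    (hg : DependsOn g Sᶜ) : 𝔼 c, f c * g c = (𝔼 c, f c) * 𝔼 c, g c := by
  classical
  rcases isEmpty_or_nonempty (∀ i, α i) with _ | _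
  · simp
  -- Swapping the coordinates of `c` and `d` outside `S` preserves the uniform law of `(c, d)`.
  let exchange (p : (∀ i, α i) × (∀ i, α i)) := (S.piecewise p.1 p.2, S.piecewise p.2 p.1)
  have exchange_involutive : Function.Involutive exchange := fun p ↦ by
    ext v <;> by_cases hv : v ∈ S <;> simp [exchange, hv]
  calc
    𝔼 c, f c * g c = 𝔼 p : (∀ i, α i) × (∀ i, α i), f p.1 * g p.1 := by
      rw [← univ_product_univ, expect_product' univ univ fun c _ ↦ f c * g c]
      simp only [Fintype.expect_const]
    _ = 𝔼 p : (∀ i, α i) × (∀ i, α i), f p.1 * g p.2 :=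
      Fintype.expect_equiv exchange_involutive.toPerm _ _ fun p ↦ congr_arg₂ _
        (hf fun v hv ↦ by simp [exchange, hv]) (hg fun v hv ↦ by simp_all [exchange])
    _ = (𝔼 c, f c) * 𝔼 c, g c := by
      rw [← univ_product_univ, expect_product' univ univ fun c d ↦ f c * g d, expect_mul_expect]

lemma expect_prod_of_dependsOn [Nonempty (∀ i, α i)] {K : Finset κ} {f : κ → (∀ i, α i) → R}
    {S : κ → Set ι} (hS : (K : Set κ).PairwiseDisjoint S)
    (hf : ∀ k ∈ K, DependsOn (f k) (S k)) :
    𝔼 c, ∏ k ∈ K, f k c = ∏ k ∈ K, 𝔼 c, f k c := by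
  classical
  induction K using Finset.induction_on with
  | empty => simp only [prod_empty, Fintype.expect_one]
  | insert a K ha ih =>
    rw [coe_insert, Set.pairwiseDisjoint_insert] at hS
    have dependsOn_compl : DependsOn (fun c ↦ ∏ k ∈ K, f k c) (S a)ᶜ := fun c d hcd ↦
      prod_congr rfl fun k hk ↦ hf k (mem_insert_of_mem hk) fun v hv ↦
        hcd v ((hS.2 k hk (by grind)).notMem_of_mem_right hv)
    simp only [prod_insert ha]
    rw [expect_mul_of_dependsOn (hf a (mem_insert_self a K)) dependsOn_compl,
      ih hS.1 fun k hk ↦ hf k (mem_insert_of_mem hk)]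

end Independence

section Normalized

variable {X 𝕜 : Type*} [Fintype X] [Semifield 𝕜]

/-- The rescaling of `f` to total mass `1`; it is `0` when `f` has total mass `0`. -/
def normalized (f : X → 𝕜) (x : X) : 𝕜 := f x / ∑ y, f y

lemma normalized_const_mul {a : 𝕜} (ha : a ≠ 0) (f : X → 𝕜) :
    normalized (fun x ↦ a * f x) = normalized f := by
  ext x
  simp only [normalized, ← mul_sum, mul_div_mul_left _ _ ha]

end Normalized

section Marginal

variable {V X 𝕜 : Type*} [Fintype V] [DecidableEq V] [Fintype X] [DecidableEq X]
  [CommSemiring 𝕜]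

/-- The unnormalized marginal at the site `i` of the measure on configurations with weight `w`. -/
def marginal (w : (V → X) → 𝕜) (i : V) (x : X) : 𝕜 := ∑ c with c i = x, w c

lemma sum_marginal (w : (V → X) → 𝕜) (i : V) : ∑ x, marginal w i x = ∑ c, w c := by
  simp only [marginal, sum_fiberwise]

lemma sum_mul_marginal (h : X → 𝕜) (w : (V → X) → 𝕜) (i : V) :
    ∑ x, h x * marginal w i x = ∑ c, h (c i) * w c := by
  rw [← sum_fiberwise univ (fun c : V → X ↦ c i)]
  refine sum_congr rfl fun x _ ↦ ?_
  rw [marginal, mul_sum]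
  exact sum_congr rfl fun c hc ↦ by rw [(mem_filter.mp hc).2]

lemma marginal_one (i : V) (x : X) :
    marginal (fun _ ↦ (1 : 𝕜)) i x = (Fintype.card X : 𝕜) ^ (Fintype.card V - 1) := by
  rw [marginal, sum_const, nsmul_one, ← Fintype.piFinset_univ,
    Fintype.card_filter_piFinset_const_eq_of_mem _ _ (mem_univ x), card_univ, Nat.cast_pow]

variable [Algebra ℚ≥0 𝕜]

lemma marginal_mul_of_dependsOn {w r : (V → X) → 𝕜} {S : Set V} {i : V} (hi : i ∈ S)
    (hw : DependsOn w S) (hr : DependsOn r Sᶜ) (x : X) :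
    marginal (fun c ↦ w c * r c) i x = (𝔼 c, r c) * marginal w i x := by
  have indicator_dependsOn : DependsOn (fun c ↦ if c i = x then w c else 0) S :=
    fun c d hcd ↦ by simp only [hcd i hi, hw hcd]
  calc
    marginal (fun c ↦ w c * r c) i x = ∑ c, (if c i = x then w c else 0) * r c := by
      simp only [marginal, sum_filter, ite_mul, zero_mul]
    _ = (Fintype.card (V → X) : 𝕜) *
        ((𝔼 c, if c i = x then w c else 0) * 𝔼 c, r c) := by
      rw [← expect_mul_of_dependsOn indicator_dependsOn hr, Fintype.card_mul_expect]
    _ = (𝔼 c, r c) * marginal w i x := by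
      rw [← mul_assoc, Fintype.card_mul_expect, mul_comm, marginal, sum_filter]

lemma marginal_of_dependsOn_compl {r : (V → X) → 𝕜} {i : V} (hr : DependsOn r {i}ᶜ) (x : X) :
    marginal r i x = (Fintype.card X : 𝕜) ^ (Fintype.card V - 1) * 𝔼 c, r c := by
  rw [← marginal_one i x, mul_comm]
  simpa only [one_mul] using
    marginal_mul_of_dependsOn (Set.mem_singleton i) (fun _ _ _ ↦ (rfl : (1 : 𝕜) = 1)) hr x

end Marginal

lemma normalized_marginal_apply {V X 𝕜 : Type*} [Fintype V] [DecidableEq V] [Fintype X]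
    [DecidableEq X] [Semifield 𝕜] (w : (V → X) → 𝕜) (i : V) (x : X) :
    normalized (marginal w i) x = (∑ c with c i = x, w c) / ∑ c, w c := by
  rw [normalized, sum_marginal, marginal]

section Branch

variable {V : Type*} {G : SimpleGraph V} {i j k l u v : V}

/-- The branch of `G` rooted at `i` and pointing away from `j`: the vertices that `i` still reaches
once the edge `ij` is deleted. -/
def branch (G : SimpleGraph V) (i j : V) : Set V :=
  {v | (G.deleteEdges {s(i, j)}).Reachable i v}

lemma root_mem_branch (G : SimpleGraph V) (i j : V) : i ∈ branch G i j :=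
  SimpleGraph.Reachable.refl i

lemma mem_branch_of_adj (hu : u ∈ branch G i j) (huv : G.Adj u v) (hne : s(u, v) ≠ s(i, j)) :
    v ∈ branch G i j :=
  SimpleGraph.Reachable.trans hu
    (SimpleGraph.deleteEdges_adj.mpr ⟨huv, by simpa only [Set.mem_singleton_iff]⟩).reachable

lemma branch_induction {motive : V → Prop} (root : motive i)
    (step : ∀ u v, u ∈ branch G i j → G.Adj u v → s(u, v) ≠ s(i, j) → motive u → motive v)
    (hv : v ∈ branch G i j) : motive v := by
  induction (SimpleGraph.reachable_iff_reflTransGen i v).mp hv with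
  | refl => exact root
  | @tail u v hiu huv ih =>
    have hu := (SimpleGraph.reachable_iff_reflTransGen i u).mpr hiu
    obtain ⟨hadj, hne⟩ := SimpleGraph.deleteEdges_adj.mp huv
    exact step u v hu hadj hne (ih hu)

lemma disjoint_branch_swap (hG : G.IsAcyclic) (hij : G.Adj i j) :
    Disjoint (branch G i j) (branch G j i) := by
  rw [Set.disjoint_left]
  intro v hi hj
  rw [branch, Set.mem_ofPred_eq, Sym2.eq_swap] at hj
  exact SimpleGraph.isBridge_iff.mp (SimpleGraph.isAcyclic_iff_forall_adj_isBridge.mp hG hij)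
    (hi.trans hj.symm)

lemma notMem_branch (hG : G.IsAcyclic) (hij : G.Adj i j) : j ∉ branch G i j :=
  (disjoint_branch_swap hG hij).notMem_of_mem_right (root_mem_branch G j i)

lemma branch_subset_branch (hG : G.IsAcyclic) (hik : G.Adj i k) (hkj : k ≠ j) :
    branch G k i ⊆ branch G i j := by
  have hi : i ∉ branch G k i := notMem_branch hG hik.symm
  intro v hv
  refine branch_induction ?_ (fun u v hu huv hne ih ↦ ?_) hv
  · exact mem_branch_of_adj (root_mem_branch G i j) hik (by grind)
  · have hv : v ∈ branch G k i := mem_branch_of_adj hu huv hne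
    exact mem_branch_of_adj ih huv (by grind)

lemma branch_ssubset_branch (hG : G.IsAcyclic) (hik : G.Adj i k) (hkj : k ≠ j) :
    branch G k i ⊂ branch G i j :=
  (Set.ssubset_iff_of_subset (branch_subset_branch hG hik hkj)).mpr
    ⟨i, root_mem_branch G i j, notMem_branch hG hik.symm⟩

lemma disjoint_branch_of_ne (hG : G.IsAcyclic) (hik : G.Adj i k) (hil : G.Adj i l)
    (hkl : k ≠ l) : Disjoint (branch G k i) (branch G l i) :=
  (disjoint_branch_swap hG hil).mono_left (branch_subset_branch hG hik hkl)

lemma exists_mem_branch_of_ne_root (hv : v ∈ branch G i j) (hvi : v ≠ i) :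
    ∃ k, G.Adj i k ∧ k ≠ j ∧ v ∈ branch G k i := by
  let motive (v : V) : Prop := v = i ∨ ∃ k, G.Adj i k ∧ k ≠ j ∧ v ∈ branch G k i
  refine Or.resolve_left
    (branch_induction (motive := motive) (.inl rfl) (fun u w _ huw hne ih ↦ ?_) hv) hvi
  rcases eq_or_ne w i with hwi | hwi
  · exact .inl hwi
  · rcases ih with rfl | ⟨k, hik, hkj, hu⟩
    · exact .inr ⟨w, huw, by grind, root_mem_branch G w u⟩
    · by_cases huwk : s(u, w) = s(k, i)
      · have hwk : w = k := by grind
        exact .inr ⟨k, hik, hkj, hwk ▸ root_mem_branch G w i⟩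
      · exact .inr ⟨k, hik, hkj, mem_branch_of_adj hu huw huwk⟩

end Branch

section BranchEdges

variable {V : Type*} [Fintype V] [DecidableEq V] {G : SimpleGraph V} [DecidableRel G.Adj]
  {i j l u v : V}

open Classical in
/-- The edges of `G` with both endpoints in `branch G i j`. -/
def branchEdges (G : SimpleGraph V) [DecidableRel G.Adj] (i j : V) : Finset (Sym2 V) :=
  {e ∈ G.edgeFinset | ∀ v ∈ e, v ∈ branch G i j}

lemma mk_mem_branchEdges :
    s(u, v) ∈ branchEdges G i j ↔ G.Adj u v ∧ u ∈ branch G i j ∧ v ∈ branch G i j := by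
  simp [branchEdges]

lemma mem_edgeFinset_of_mem_branchEdges {e : Sym2 V} (he : e ∈ branchEdges G i j) :
    e ∈ G.edgeFinset := by
  classical exact (mem_filter.mp he).1

lemma mem_branch_of_mem_branchEdges {e : Sym2 V} (he : e ∈ branchEdges G i j) (hv : v ∈ e) :
    v ∈ branch G i j := by
  classical exact (mem_filter.mp he).2 v hv

lemma mk_notMem_branchEdges (hG : G.IsAcyclic) (hil : G.Adj i l) (k : V) :
    s(i, k) ∉ branchEdges G l i := fun h ↦
  notMem_branch hG hil.symm (mem_branch_of_mem_branchEdges h (Sym2.mem_mk_left i k))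

lemma branchEdges_eq_biUnion (hG : G.IsAcyclic) (hij : G.Adj i j) :
    branchEdges G i j =
      ((G.neighborFinset i).erase j).biUnion fun k ↦ insert s(i, k) (branchEdges G k i) := by
  have hj : j ∉ branch G i j := notMem_branch hG hij
  ext e
  induction e with | _ u v
  simp only [mem_biUnion, mem_erase, SimpleGraph.mem_neighborFinset, mem_insert,
    mk_mem_branchEdges]
  constructor
  · rintro ⟨huv, hu, hv⟩
    rcases eq_or_ne u i with rfl | hui
    · exact ⟨v, ⟨by grind, huv⟩, .inl rfl⟩
    rcases eq_or_ne v i with rfl | hvi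
    · exact ⟨u, ⟨by grind, huv.symm⟩, .inl Sym2.eq_swap⟩
    obtain ⟨k, hik, hkj, huk⟩ := exists_mem_branch_of_ne_root hu hui
    exact ⟨k, ⟨hkj, hik⟩, .inr ⟨huv, huk, mem_branch_of_adj huk huv (by grind)⟩⟩
  · rintro ⟨k, ⟨hkj, hik⟩, huv | ⟨huv, hu, hv⟩⟩
    · rw [← mk_mem_branchEdges, huv, mk_mem_branchEdges]
      exact ⟨hik, root_mem_branch G i j,
        branch_subset_branch hG hik hkj (root_mem_branch G k i)⟩
    · exact ⟨huv, branch_subset_branch hG hik hkj hu, branch_subset_branch hG hik hkj hv⟩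

lemma pairwiseDisjoint_insert_branchEdges (hG : G.IsAcyclic) (i : V) :
    (G.neighborFinset i : Set V).PairwiseDisjoint
      fun k ↦ insert s(i, k) (branchEdges G k i) := by
  intro k hk l hl hkl
  rw [mem_coe, SimpleGraph.mem_neighborFinset] at hk hl
  have branchEdges_disjoint : Disjoint (branchEdges G k i) (branchEdges G l i) := by
    refine disjoint_left.mpr fun e hek hel ↦ ?_
    induction e with | _ u v
    exact (disjoint_branch_of_ne hG hk hl hkl).notMem_of_mem_left
      (mk_mem_branchEdges.mp hek).2.1 (mk_mem_branchEdges.mp hel).2.1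
  simp only [Function.onFun, disjoint_insert_left, disjoint_insert_right, mem_insert, not_or]
  exact ⟨⟨by grind, mk_notMem_branchEdges hG hk l⟩, mk_notMem_branchEdges hG hl k,
    branchEdges_disjoint⟩

lemma branchEdges_subset_edgeFinset_erase (hG : G.IsAcyclic) (hij : G.Adj i j) :
    branchEdges G i j ⊆ G.edgeFinset.erase s(i, j) := fun _ he ↦
  mem_erase.mpr ⟨fun h ↦ notMem_branch hG hij
      (mem_branch_of_mem_branchEdges he (h ▸ Sym2.mem_mk_right i j)),
    mem_edgeFinset_of_mem_branchEdges he⟩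

lemma notMem_branch_of_mem_edgeFinset_erase_sdiff {e : Sym2 V}
    (he : e ∈ G.edgeFinset.erase s(i, j) \ branchEdges G i j) (hv : v ∈ e) :
    v ∉ branch G i j := by
  obtain ⟨u, rfl⟩ := hv
  rw [mem_sdiff, mem_erase, SimpleGraph.mem_edgeFinset, SimpleGraph.mem_edgeSet,
    mk_mem_branchEdges] at he
  exact fun hv ↦ he.2 ⟨he.1.2, hv, mem_branch_of_adj hv he.1.2 he.1.1⟩

end BranchEdges

section GibbsWeight

variable {V X 𝕜 : Type*} {ψ : V → V → X → X → 𝕜}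

/-- The unnormalized Gibbs weight of the configuration `c` for the pair potentials `ψ` on the edge
set `E`. The symmetry of `ψ` makes the factor of an edge independent of its orientation. -/
def gibbsWeight [CommMonoid 𝕜] (ψ : V → V → X → X → 𝕜)
    (hsym : ∀ i j x y, ψ i j x y = ψ j i y x) (E : Finset (Sym2 V)) (c : V → X) : 𝕜 :=
  ∏ e ∈ E, Sym2.lift ⟨fun u v ↦ ψ u v (c u) (c v), fun _ _ ↦ hsym _ _ _ _⟩ e

lemma dependsOn_gibbsWeight [CommMonoid 𝕜] (hsym : ∀ i j x y, ψ i j x y = ψ j i y x)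
    {E : Finset (Sym2 V)} {S : Set V} (hE : ∀ e ∈ E, ∀ v ∈ e, v ∈ S) :
    DependsOn (gibbsWeight ψ hsym E) S := by
  refine fun c d hcd ↦ prod_congr rfl fun e he ↦ ?_
  induction e with | _ u v
  simp only [Sym2.lift_mk, hcd u (hE _ he u (Sym2.mem_mk_left u v)),
    hcd v (hE _ he v (Sym2.mem_mk_right u v))]

lemma gibbsWeight_pos [CommSemiring 𝕜] [PartialOrder 𝕜] [IsStrictOrderedRing 𝕜]
    {G : SimpleGraph V} [Fintype G.edgeSet] (hpos : ∀ i j, G.Adj i j → ∀ x y, 0 < ψ i j x y)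
    (hsym : ∀ i j x y, ψ i j x y = ψ j i y x) {E : Finset (Sym2 V)} (hE : E ⊆ G.edgeFinset)
    (c : V → X) : 0 < gibbsWeight ψ hsym E c := by
  refine prod_pos fun e he ↦ ?_
  induction e with | _ u v
  exact hpos u v (SimpleGraph.mem_edgeFinset.mp (hE he)) _ _

lemma gibbsWeight_edgeFinset_erase [CommMonoid 𝕜] [Fintype V] [LinearOrder V]
    {G : SimpleGraph V} [DecidableRel G.Adj] (hsym : ∀ i j x y, ψ i j x y = ψ j i y x)
    (i j : V) (c : V → X) :
    gibbsWeight ψ hsym (G.edgeFinset.erase s(i, j)) c =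
      ∏ e : V × V with e.1 < e.2 ∧ G.Adj e.1 e.2 ∧ ¬(e.1 = i ∧ e.2 = j) ∧ ¬(e.1 = j ∧ e.2 = i),
        ψ e.1 e.2 (c e.1) (c e.2) := by
  refine (prod_nbij (fun e : V × V ↦ s(e.1, e.2)) ?_ ?_ ?_ fun _ _ ↦ rfl).symm
  · rintro ⟨u, v⟩ he
    simp_all
  · rintro ⟨u, v⟩ he ⟨u', v'⟩ he' h
    simp only [coe_filter, Set.mem_ofPred_eq] at he he'
    grind
  · intro e he
    induction e with | _ u v
    simp only [coe_erase, Set.mem_sdiff, mem_coe, SimpleGraph.mem_edgeFinset,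
      SimpleGraph.mem_edgeSet, Set.mem_singleton_iff, Sym2.eq_iff] at he
    rcases he.1.ne.lt_or_gt with huv | hvu
    · exact ⟨(u, v), by simp_all, rfl⟩
    · exact ⟨(v, u), by simp_all [he.1.symm, imp_not_comm], Sym2.eq_swap⟩

lemma gibbsWeight_branchEdges [CommMonoid 𝕜] [Fintype V] [DecidableEq V] {G : SimpleGraph V}
    [DecidableRel G.Adj] (hG : G.IsAcyclic) (hsym : ∀ i j x y, ψ i j x y = ψ j i y x) {i j : V}
    (hij : G.Adj i j) (c : V → X) :
    gibbsWeight ψ hsym (branchEdges G i j) c =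
      ∏ k ∈ (G.neighborFinset i).erase j,
        ψ i k (c i) (c k) * gibbsWeight ψ hsym (branchEdges G k i) c := by
  rw [gibbsWeight, branchEdges_eq_biUnion hG hij, prod_biUnion
    ((pairwiseDisjoint_insert_branchEdges hG i).subset (coe_subset.mpr (erase_subset _ _)))]
  refine prod_congr rfl fun k hk ↦ ?_
  have hik : G.Adj i k := (G.mem_neighborFinset i k).mp (mem_of_mem_erase hk)
  rw [prod_insert (mk_notMem_branchEdges hG hik k), Sym2.lift_mk, gibbsWeight]

end GibbsWeight

section SumProduct

variable {V X 𝕜 : Type*} [Fintype V] [DecidableEq V] [Fintype X] [Semifield 𝕜]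
  {G : SimpleGraph V} [DecidableRel G.Adj] {ψ : V → V → X → X → 𝕜} {i j : V}

/-- The unnormalized belief propagation update at `i → j` of the messages `m`, where `m k i` is the
message from `k` to `i`. -/
def sumProduct (G : SimpleGraph V) [DecidableRel G.Adj] (ψ : V → V → X → X → 𝕜)
    (m : V → V → X → 𝕜) (i j : V) (x : X) : 𝕜 :=
  ∏ k ∈ (G.neighborFinset i).erase j, ∑ y, ψ i k x y * m k i y

lemma normalized_sumProduct_of_eq_normalized {m m' : V → V → X → 𝕜}
    (hm : ∀ k, G.Adj i k → k ≠ j → m k i = normalized (m' k i))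
    (hne : ∀ k, G.Adj i k → ∑ y, m' k i y ≠ 0) :
    normalized (sumProduct G ψ m i j) = normalized (sumProduct G ψ m' i j) := by
  let a : 𝕜 := ∏ k ∈ (G.neighborFinset i).erase j, (∑ y, m' k i y)⁻¹
  have ha : a ≠ 0 := prod_ne_zero_iff.mpr fun k hk ↦
    inv_ne_zero (hne k ((G.mem_neighborFinset i k).mp (mem_of_mem_erase hk)))
  rw [← normalized_const_mul ha (sumProduct G ψ m' i j)]
  congr 1
  ext x
  rw [sumProduct, sumProduct, ← prod_mul_distrib]
  refine prod_congr rfl fun k hk ↦ ?_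
  rw [mem_erase, SimpleGraph.mem_neighborFinset] at hk
  rw [hm k hk.2 hk.1, mul_sum]
  exact sum_congr rfl fun y _ ↦ by rw [normalized]; ring

end SumProduct

section BranchMarginal

variable {V X 𝕜 : Type*} [Fintype V] [DecidableEq V] [Fintype X] [DecidableEq X] [Semifield 𝕜]
  {G : SimpleGraph V} [DecidableRel G.Adj] {ψ : V → V → X → X → 𝕜} {i j : V}

/-- The unnormalized marginal at the root `i` of the Gibbs measure on the edges of
`branch G i j`: the exact value of the message `i → j` up to normalization. -/
def branchMarginal (G : SimpleGraph V) [DecidableRel G.Adj] (ψ : V → V → X → X → 𝕜)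
    (hsym : ∀ i j x y, ψ i j x y = ψ j i y x) (i j : V) : X → 𝕜 :=
  marginal (gibbsWeight ψ hsym (branchEdges G i j)) i

lemma branchMarginal_eq_mul_sumProduct [CharZero 𝕜] [Nonempty X] (hG : G.IsAcyclic)
    (hsym : ∀ i j x y, ψ i j x y = ψ j i y x) (hij : G.Adj i j) (x : X) :
    branchMarginal G ψ hsym i j x =
      (Fintype.card X : 𝕜) ^ (Fintype.card V - 1) *
        (∏ _k ∈ (G.neighborFinset i).erase j, (Fintype.card (V → X) : 𝕜)⁻¹) *
        sumProduct G ψ (branchMarginal G ψ hsym) i j x := by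
  let K := (G.neighborFinset i).erase j
  let f (k : V) (c : V → X) : 𝕜 := ψ i k x (c k) * gibbsWeight ψ hsym (branchEdges G k i) c
  have adj_of_mem {k} (hk : k ∈ K) : G.Adj i k :=
    (G.mem_neighborFinset i k).mp (mem_of_mem_erase hk)
  have dependsOn_branch (k) : DependsOn (f k) (branch G k i) := fun c d hcd ↦ by
    simp only [f, hcd k (root_mem_branch G k i), dependsOn_gibbsWeight hsym
      (fun _ he _ hv ↦ mem_branch_of_mem_branchEdges he hv) hcd]
  have dependsOn_compl_root : DependsOn (fun c ↦ ∏ k ∈ K, f k c) {i}ᶜ := fun c d hcd ↦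
    prod_congr rfl fun k hk ↦ dependsOn_branch k fun v hv ↦
      hcd v fun hvi ↦ notMem_branch hG (adj_of_mem hk).symm (hvi ▸ hv)
  have branches_disjoint : (K : Set V).PairwiseDisjoint fun k ↦ branch G k i :=
    fun k hk l hl ↦ disjoint_branch_of_ne hG (adj_of_mem hk) (adj_of_mem hl)
  calc
    branchMarginal G ψ hsym i j x = marginal (fun c ↦ ∏ k ∈ K, f k c) i x :=
      sum_congr rfl fun c hc ↦ by
        rw [gibbsWeight_branchEdges hG hsym hij, (mem_filter.mp hc).2]
    _ = (Fintype.card X : 𝕜) ^ (Fintype.card V - 1) * ∏ k ∈ K, 𝔼 c, f k c := by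
      rw [marginal_of_dependsOn_compl dependsOn_compl_root,
        expect_prod_of_dependsOn branches_disjoint fun k _ ↦ dependsOn_branch k]
    _ = _ := by
      rw [mul_assoc, sumProduct, ← prod_mul_distrib]
      simp only [branchMarginal, sum_mul_marginal, Fintype.expect_eq_sum_div_card,
        div_eq_inv_mul, K, f]

lemma normalized_sumProduct_branchMarginal [CharZero 𝕜] [Nonempty X] (hG : G.IsAcyclic)
    (hsym : ∀ i j x y, ψ i j x y = ψ j i y x) (hij : G.Adj i j) :
    normalized (sumProduct G ψ (branchMarginal G ψ hsym) i j) =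
      normalized (branchMarginal G ψ hsym i j) := by
  rw [funext (branchMarginal_eq_mul_sumProduct hG hsym hij)]
  refine (normalized_const_mul (mul_ne_zero ?_ ?_) _).symm
  · exact pow_ne_zero _ (Nat.cast_ne_zero.mpr Fintype.card_ne_zero)
  · exact prod_ne_zero_iff.mpr fun _ _ ↦
      inv_ne_zero (Nat.cast_ne_zero.mpr Fintype.card_ne_zero)

variable [LinearOrder 𝕜] [IsStrictOrderedRing 𝕜] [Nonempty X]

lemma sum_branchMarginal_pos (hpos : ∀ i j, G.Adj i j → ∀ x y, 0 < ψ i j x y)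
    (hsym : ∀ i j x y, ψ i j x y = ψ j i y x) (i j : V) :
    0 < ∑ x, branchMarginal G ψ hsym i j x := by
  rw [branchMarginal, sum_marginal]
  exact sum_pos (fun c _ ↦ gibbsWeight_pos hpos hsym
    (fun _ he ↦ mem_edgeFinset_of_mem_branchEdges he) c) univ_nonempty

lemma normalized_marginal_edgeFinset_erase (hG : G.IsAcyclic)
    (hpos : ∀ i j, G.Adj i j → ∀ x y, 0 < ψ i j x y)
    (hsym : ∀ i j x y, ψ i j x y = ψ j i y x) (hij : G.Adj i j) :
    normalized (marginal (gibbsWeight ψ hsym (G.edgeFinset.erase s(i, j))) i) =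
      normalized (branchMarginal G ψ hsym i j) := by
  let outside := G.edgeFinset.erase s(i, j) \ branchEdges G i j
  have outside_subset : outside ⊆ G.edgeFinset := sdiff_subset.trans (erase_subset _ _)
  have gibbsWeight_eq : gibbsWeight ψ hsym (G.edgeFinset.erase s(i, j)) =
      fun c ↦ gibbsWeight ψ hsym (branchEdges G i j) c * gibbsWeight ψ hsym outside c :=
    funext fun c ↦ by
      rw [mul_comm]
      exact (prod_sdiff (branchEdges_subset_edgeFinset_erase hG hij)).symm
  have expect_ne_zero : (𝔼 c, gibbsWeight ψ hsym outside c) ≠ 0 :=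
    (expect_pos (fun c _ ↦ gibbsWeight_pos hpos hsym outside_subset c) univ_nonempty).ne'
  rw [gibbsWeight_eq, branchMarginal, ← normalized_const_mul expect_ne_zero
    (marginal (gibbsWeight ψ hsym (branchEdges G i j)) i)]
  exact congr_arg normalized <| funext <| marginal_mul_of_dependsOn (root_mem_branch G i j)
    (dependsOn_gibbsWeight hsym fun _ he _ hv ↦ mem_branch_of_mem_branchEdges he hv)
    (dependsOn_gibbsWeight hsym fun _ he _ hv ↦
      notMem_branch_of_mem_edgeFinset_erase_sdiff he hv)

lemma message_eq_normalized_branchMarginal (hG : G.IsAcyclic)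
    (hpos : ∀ i j, G.Adj i j → ∀ x y, 0 < ψ i j x y)
    (hsym : ∀ i j x y, ψ i j x y = ψ j i y x) {ν : ℕ → V → V → X → 𝕜}
    (hupd : ∀ t i j, G.Adj i j → ν (t + 1) i j = normalized (sumProduct G ψ (ν t) i j))
    {t : ℕ} (hij : G.Adj i j) (ht : (branch G i j).ncard ≤ t) :
    ν t i j = normalized (branchMarginal G ψ hsym i j) := by
  induction t generalizing i j with
  | zero =>
    have : 0 < (branch G i j).ncard := (Set.ncard_pos).mpr ⟨i, root_mem_branch G i j⟩
    omega
  | succ t ih =>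
    have incoming (k) (hik : G.Adj i k) (hkj : k ≠ j) :
        ν t k i = normalized (branchMarginal G ψ hsym k i) :=
      ih hik.symm <| Nat.le_of_lt_succ <|
        (Set.ncard_lt_ncard (branch_ssubset_branch hG hik hkj)).trans_le ht
    rw [hupd t i j hij, normalized_sumProduct_of_eq_normalized incoming
      fun k _ ↦ (sum_branchMarginal_pos hpos hsym k i).ne',
      normalized_sumProduct_branchMarginal hG hsym hij]

end BranchMarginal

end BeliefPropagation

open BeliefPropagation in
theorem belief_propagation_exact_on_trees_general {V X 𝕜 : Type*} [Fintype V] [DecidableEq V]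
    {G : SimpleGraph V} [DecidableRel G.Adj] (hG : G.IsAcyclic)
    [Fintype X] [Nonempty X] [DecidableEq X] [Semifield 𝕜] [LinearOrder 𝕜] [IsStrictOrderedRing 𝕜]
    {ψ : V → V → X → X → 𝕜}
    (hpos : ∀ i j, G.Adj i j → ∀ x y, 0 < ψ i j x y)
    (hsym : ∀ i j x y, ψ i j x y = ψ j i y x)
    {ν : ℕ → V → V → X → 𝕜}
    (hupd : ∀ t i j, G.Adj i j → ν (t + 1) i j = normalized (sumProduct G ψ (ν t) i j))
    {t : ℕ} {i j : V} (hij : G.Adj i j) (ht : (branch G i j).ncard ≤ t) :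
    ν t i j = normalized (marginal (gibbsWeight ψ hsym (G.edgeFinset.erase s(i, j))) i) := by
  rw [message_eq_normalized_branchMarginal hG hpos hsym hupd hij ht,
    normalized_marginal_edgeFinset_erase hG hpos hsym hij]

/-- **Belief propagation is exact on trees.** Let `G` be a finite tree on `n` vertices with
strictly positive symmetric pairwise potentials `ψ_{ij}`, and let `μ_{(i,j)}` be the Gibbs
measure with the factor of edge `(i,j)` removed.  Then, starting from arbitrary probability
distributions as initial messages, after `t ≥ n` rounds of the belief propagation (sum-product)
update
`ν^{(t+1)}_{i→j}(x) ∝ Π_{k ∈ ∂i∖{j}} Σ_y ψ_{ik}(x,y) ν^{(t)}_{k→i}(y)`,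
each message equals the exact single-site marginal: `ν^{(t)}_{i→j}(x) = μ_{(i,j)}(x_i = x)`. -/
theorem belief_propagation_exact_on_trees
    (n : ℕ) (G : SimpleGraph (Fin n)) [DecidableRel G.Adj] (hT : G.IsTree)
    (X : Type*) [Fintype X] [Nonempty X] [DecidableEq X]
    (ψ : Fin n → Fin n → X → X → ℝ)
    (hpos : ∀ i j, G.Adj i j → ∀ x y, 0 < ψ i j x y)
    (hsym : ∀ i j x y, ψ i j x y = ψ j i y x)
    (ν : ℕ → Fin n → Fin n → X → ℝ)
    (hinit : ∀ i j, G.Adj i j → (∀ x, 0 ≤ ν 0 i j x) ∧ ∑ x, ν 0 i j x = 1)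
    (hupd : ∀ t i j, G.Adj i j → ∀ x : X,
      ν (t + 1) i j x =
        (∏ k ∈ (G.neighborFinset i).erase j, ∑ y, ψ i k x y * ν t k i y) /
        (∑ x', ∏ k ∈ (G.neighborFinset i).erase j, ∑ y, ψ i k x' y * ν t k i y)) :
    ∀ t, n ≤ t → ∀ i j, G.Adj i j → ∀ x : X,
      ν t i j x =
        (∑ c ∈ Finset.univ.filter (fun c : Fin n → X => c i = x),
          ∏ e ∈ Finset.univ.filter (fun e : Fin n × Fin n =>
            e.1 < e.2 ∧ G.Adj e.1 e.2 ∧ ¬(e.1 = i ∧ e.2 = j) ∧ ¬(e.1 = j ∧ e.2 = i)),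
            ψ e.1 e.2 (c e.1) (c e.2)) /
        (∑ c : Fin n → X,
          ∏ e ∈ Finset.univ.filter (fun e : Fin n × Fin n =>
            e.1 < e.2 ∧ G.Adj e.1 e.2 ∧ ¬(e.1 = i ∧ e.2 = j) ∧ ¬(e.1 = j ∧ e.2 = i)),
            ψ e.1 e.2 (c e.1) (c e.2)) := by
  intro t ht i j hij x
  simp only [← BeliefPropagation.gibbsWeight_edgeFinset_erase hsym,
    ← BeliefPropagation.normalized_marginal_apply]
  exact congrFun (belief_propagation_exact_on_trees_general hT.isAcyclic hpos hsym
    (fun t i j hij ↦ funext (hupd t i j hij)) hij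
    ((Set.ncard_le_card _).trans (by rwa [Nat.card_fin]))) x

end
end

section
/- Fix k_max ≥ 2 and ξ_2,…,ξ_{k_max} ≥ 0, and let H_n be the mixed p-spin Hamiltonian with mixture ξ, extended to [−1,1]^n by the same polynomial formula. Then for every ε > 0, lim_{n→∞} P( for every m ∈ [−1,1]^n there exists σ ∈ {−1,1}^n with H_n(σ) ≥ H_n(m) − nε ) = 1. -/
open MeasureTheory ProbabilityTheory Filter
open scoped NNReal ENNReal

noncomputable section

/-- The point of the hypercube `{-1,1}^n` indexed by a Boolean vector. -/
def signVec {n : ℕ} (b : Fin n → Bool) : Fin n → ℝ := fun i => if b i then 1 else -1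
/-- The mixed `p`-spin Hamiltonian with mixture coefficients `ξ_k`, `2 ≤ k ≤ kmax`:
`H_n(σ) = Σ_{k=2}^{kmax} √ξ_k n^{−(k−1)/2} Σ_{i_1,…,i_k} g^{(k)}_{i_1…i_k} σ_{i_1}⋯σ_{i_k}`. -/
def mixedHamiltonian (kmax n : ℕ) (ξ : ℕ → ℝ) (g : (k : ℕ) → (Fin k → Fin n) → ℝ)
    (σ : Fin n → ℝ) : ℝ :=
  ∑ k ∈ Finset.Icc 2 kmax, Real.sqrt (ξ k) * ((n : ℝ) ^ (-(((k : ℝ) - 1) / 2))) *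
    ∑ idx : Fin k → Fin n, g k idx * ∏ j, σ (idx j)

/-!
A polynomial that is affine in each coordinate attains its maximum over a box at a vertex, so the
monomials with pairwise distinct indices can be rounded for free. The monomials with a repeated
index contribute only `o(n)`, uniformly on `[-1,1]^n`: replacing `x_{i_1} ⋯ x_{i_k}` by
`y_{1,i_1} ⋯ y_{k,i_k}` makes their sum affine in each of `k n` variables, hence bounded by its
values at the `2 ^ (k n)` sign vectors `y`. At a sign vector the normalised sum is sub-Gaussian with
variance proxy bounded in `n`, because there are at most `k ^ 2 n ^ (k - 1)` such monomials; it
therefore exceeds `δ n` with probability at most `2 exp (-a n ^ 2)`, which beats the union bound.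
-/

section SeparatelyAffine

variable {ι κ : Type*} [DecidableEq ι]

/-- Functions of several real variables that are convex in each variable separately; these are the
functions whose maximum over a box is attained at a vertex. -/
def SeparatelyConvex (F : (ι → ℝ) → ℝ) : Prop :=
  ∀ x i, ConvexOn ℝ Set.univ fun t => F (Function.update x i t)

/-- Functions of several real variables that are affine in each variable separately, such as
polynomials without repeated variables in any monomial. -/
def SeparatelyAffine (F : (ι → ℝ) → ℝ) : Prop :=
  ∀ x i, ∃ a b : ℝ, ∀ t, F (Function.update x i t) = a + b * t

lemma SeparatelyAffine.sum {s : Finset κ} {F : κ → (ι → ℝ) → ℝ}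
    (hF : ∀ k ∈ s, SeparatelyAffine (F k)) : SeparatelyAffine fun x => ∑ k ∈ s, F k x := by
  intro x i
  choose! a b hab using fun k hk => hF k hk x i
  refine ⟨∑ k ∈ s, a k, ∑ k ∈ s, b k, fun t => ?_⟩
  rw [Finset.sum_mul, ← Finset.sum_add_distrib]
  exact Finset.sum_congr rfl fun k hk => hab k hk t

lemma SeparatelyAffine.const_mul {F : (ι → ℝ) → ℝ} (hF : SeparatelyAffine F) (c : ℝ) :
    SeparatelyAffine fun x => c * F x := by
  intro x i
  obtain ⟨a, b, hab⟩ := hF x i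
  exact ⟨c * a, c * b, fun t => by simp only [hab]; ring⟩

lemma separatelyAffine_prod [Fintype κ] {e : κ → ι} (he : Function.Injective e) :
    SeparatelyAffine fun x => ∏ j, x (e j) := by
  classical
  intro x i
  by_cases hi : i ∈ Set.range e
  · obtain ⟨j, rfl⟩ := hi
    refine ⟨0, ∏ l ∈ Finset.univ \ {j}, x (e l), fun t => ?_⟩
    have hcomp := Function.update_comp_eq_of_injective x he j t
    calc ∏ l, Function.update x (e j) t (e l)
        = ∏ l, Function.update (x ∘ e) j t l := Finset.prod_congr rfl fun l _ => congrFun hcomp l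
      _ = 0 + (∏ l ∈ Finset.univ \ {j}, x (e l)) * t := by
        rw [Finset.prod_update_of_mem (Finset.mem_univ j), zero_add, mul_comm]; rfl
  · refine ⟨∏ j, x (e j), 0, fun t => ?_⟩
    rw [zero_mul, add_zero]
    exact Finset.prod_congr rfl fun j _ =>
      Function.update_of_ne (fun h => hi ⟨j, h⟩) t x

lemma SeparatelyAffine.separatelyConvex_comp {F : (ι → ℝ) → ℝ} (hF : SeparatelyAffine F)
    {φ : ℝ → ℝ} (hφ : ConvexOn ℝ Set.univ φ) : SeparatelyConvex fun x => φ (F x) := by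
  intro x i
  obtain ⟨a, b, hab⟩ := hF x i
  have hline (t : ℝ) : F (Function.update x i t) = AffineMap.lineMap a (a + b) t := by
    simp [hab, AffineMap.lineMap_apply, mul_comm, add_comm]
  simpa only [hline] using! hφ.comp_affineMap (AffineMap.lineMap a (a + b))

lemma SeparatelyConvex.exists_endpoint_ge {F : (ι → ℝ) → ℝ} (hF : SeparatelyConvex F)
    {x : ι → ℝ} {i : ι} {a b : ℝ} (hx : x i ∈ Set.Icc a b) :
    ∃ t, (t = a ∨ t = b) ∧ F x ≤ F (Function.update x i t) := by
  have hmax := (hF x i).le_max_of_mem_Icc (Set.mem_univ a) (Set.mem_univ b) hx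
  rw [Function.update_eq_self] at hmax
  rcases le_max_iff.1 hmax with ha | hb
  · exact ⟨a, .inl rfl, ha⟩
  · exact ⟨b, .inr rfl, hb⟩

lemma SeparatelyConvex.exists_vertex_ge [Fintype ι] {F : (ι → ℝ) → ℝ} (hF : SeparatelyConvex F)
    {a b x : ι → ℝ} (hx : ∀ i, x i ∈ Set.Icc (a i) (b i)) :
    ∃ v ∈ Fintype.piFinset fun i => ({a i, b i} : Finset ℝ), F x ≤ F v := by
  suffices partially_rounded : ∀ s : Finset ι, ∃ y : ι → ℝ, (∀ i, y i ∈ Set.Icc (a i) (b i)) ∧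
      (∀ i ∈ s, y i = a i ∨ y i = b i) ∧ F x ≤ F y by
    obtain ⟨v, -, hv, hFv⟩ := partially_rounded Finset.univ
    exact ⟨v, by simpa using hv, hFv⟩
  intro s
  induction s using Finset.induction_on with
  | empty => exact ⟨x, hx, by simp, le_rfl⟩
  | insert i s _ ih =>
    obtain ⟨y, hy, hys, hFy⟩ := ih
    obtain ⟨t, ht, hFt⟩ := hF.exists_endpoint_ge (hy i)
    have hab : a i ≤ b i := (hx i).1.trans (hx i).2
    refine ⟨Function.update y i t, fun j => ?_, fun j hj => ?_, hFy.trans hFt⟩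
    · rcases eq_or_ne j i with rfl | hji
      · rw [Function.update_self]
        rcases ht with rfl | rfl
        · exact Set.left_mem_Icc.2 hab
        · exact Set.right_mem_Icc.2 hab
      · rw [Function.update_of_ne hji]
        exact hy j
    · rcases eq_or_ne j i with rfl | hji
      · rwa [Function.update_self]
      · rw [Function.update_of_ne hji]
        exact hys j (Finset.mem_of_mem_insert_of_ne hj hji)

end SeparatelyAffine

section Collisions

variable (ι α : Type*) [Fintype ι] [DecidableEq ι] [Fintype α] [DecidableEq α]

/-- The multi-indices `ι → α` in which some index is repeated. -/
def collisions : Finset (ι → α) := {f | ¬ Function.Injective f}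

variable {ι}

lemma card_filter_apply_eq_mul_card_le {i j : ι} (hij : i ≠ j) :
    Finset.card {f : ι → α | f i = f j} * Fintype.card α ≤
      Fintype.card α ^ Fintype.card ι := by
  rw [← Fintype.card_fun, ← Finset.card_univ, ← Finset.card_univ, ← Finset.card_product]
  refine Finset.card_le_card_of_injOn (fun p => Function.update p.1 j p.2)
    (fun _ _ => Finset.mem_coe.2 (Finset.mem_univ _)) ?_
  rintro ⟨f, s⟩ hf ⟨f', s'⟩ hf' hupdate
  simp only [Finset.coe_product, Set.mem_prod, Finset.mem_coe, Finset.mem_filter,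
    Finset.mem_univ, true_and, and_true] at hf hf'
  have happly (l : ι) : Function.update f j s l = Function.update f' j s' l :=
    congrFun hupdate l
  have happly_ne (l : ι) (hl : l ≠ j) : f l = f' l := by simpa [hl] using happly l
  refine Prod.ext (funext fun l => ?_) (by simpa using happly j)
  rcases eq_or_ne l j with rfl | hl
  · exact hf.symm.trans ((happly_ne i hij).trans hf')
  · exact happly_ne l hl

variable (ι)

lemma card_collisions_mul_card_le :
    (collisions ι α).card * Fintype.card α ≤
      Fintype.card ι ^ 2 * Fintype.card α ^ Fintype.card ι := by
  have hcover : collisions ι α ⊆ (Finset.univ : Finset ι).offDiag.biUnion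
      fun p => {f | f p.1 = f p.2} := by
    intro f hf
    obtain ⟨i, j, hfij, hij⟩ := Function.not_injective_iff.1 (Finset.mem_filter.1 hf).2
    simp only [Finset.mem_biUnion, Finset.mem_offDiag, Finset.mem_filter, Finset.mem_univ, true_and]
    exact ⟨(i, j), hij, hfij⟩
  calc (collisions ι α).card * Fintype.card α
      ≤ (∑ p ∈ (Finset.univ : Finset ι).offDiag,
          Finset.card {f : ι → α | f p.1 = f p.2}) * Fintype.card α := by
        gcongr
        exact (Finset.card_le_card hcover).trans Finset.card_biUnion_le
    _ ≤ ∑ _p ∈ (Finset.univ : Finset ι).offDiag, Fintype.card α ^ Fintype.card ι := by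
        rw [Finset.sum_mul]
        exact Finset.sum_le_sum fun p hp =>
          card_filter_apply_eq_mul_card_le α (Finset.mem_offDiag.1 hp).2.2
    _ ≤ Fintype.card ι ^ 2 * Fintype.card α ^ Fintype.card ι := by
        rw [Finset.sum_const, smul_eq_mul, Finset.offDiag_card, Finset.card_univ, sq]
        gcongr
        exact Nat.sub_le _ _

end Collisions

section TensorForm

variable {ι α : Type*} [Fintype ι]

/-- The form `∑ g_{i_1…i_k} x_{i_1} ⋯ x_{i_k}` of a tensor `g` with its entries outside `S` set to
zero. A multi-index is a function from the set `ι` of tensor slots to the set `α` of sites. -/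
def tensorForm (S : Finset (ι → α)) (g : (ι → α) → ℝ) (x : α → ℝ) : ℝ :=
  ∑ f ∈ S, g f * ∏ j, x (f j)

/-- The decoupled version of `tensorForm`, in which every tensor slot is contracted with its own
vector: the vector of slot `j` is `fun i => y (j, i)`. -/
def decoupledForm (S : Finset (ι → α)) (g : (ι → α) → ℝ) (y : ι × α → ℝ) : ℝ :=
  ∑ f ∈ S, g f * ∏ j, y (j, f j)

lemma separatelyAffine_tensorForm [DecidableEq α] {S : Finset (ι → α)} (g : (ι → α) → ℝ)
    (hS : ∀ f ∈ S, Function.Injective f) : SeparatelyAffine (tensorForm S g) :=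
  .sum fun f hf => (separatelyAffine_prod (hS f hf)).const_mul (g f)

lemma separatelyAffine_decoupledForm [DecidableEq ι] [DecidableEq α] (S : Finset (ι → α))
    (g : (ι → α) → ℝ) : SeparatelyAffine (decoupledForm S g) :=
  .sum fun f _ =>
    (separatelyAffine_prod fun _ _ h => congrArg Prod.fst h).const_mul (g f)

end TensorForm

section SubGaussian

variable {Ω : Type*} [MeasurableSpace Ω] {μ : Measure Ω} {X : Ω → ℝ} {c v : ℝ≥0}

lemma hasSubgaussianMGF_of_map_eq_gaussianReal (hX : μ.map X = gaussianReal 0 v) :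
    HasSubgaussianMGF X v μ where
  integrable_exp_mul t := by
    have : NeZero μ :=
      ⟨fun hμ => IsProbabilityMeasure.ne_zero (gaussianReal 0 v) (by simp [← hX, hμ])⟩
    rw [← mgf_pos_iff, mgf_gaussianReal hX]
    positivity
  mgf_le t := by simp [mgf_gaussianReal hX]

lemma hasSubgaussianMGF_of_le (hX : HasSubgaussianMGF X c μ) (hcv : c ≤ v) :
    HasSubgaussianMGF X v μ where
  integrable_exp_mul := hX.integrable_exp_mul
  mgf_le t := (hX.mgf_le t).trans (by gcongr)

lemma hasSubgaussianMGF_sum_mul {κ : Type*} {X : κ → Ω → ℝ} (hindep : iIndepFun X μ)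
    (hX : ∀ i, HasSubgaussianMGF (X i) c μ) (S : Finset κ) (w : κ → ℝ)
    (hv : c * ∑ i ∈ S, w i ^ 2 ≤ (v : ℝ)) :
    HasSubgaussianMGF (fun ω => ∑ i ∈ S, w i * X i ω) v μ := by
  have hindep_mul : iIndepFun (fun i ω => w i * X i ω) μ :=
    hindep.comp (fun i x => w i * x) fun i => by fun_prop
  refine hasSubgaussianMGF_of_le
    (.sum_of_iIndepFun hindep_mul fun i _ => (hX i).const_mul (w i))
    (NNReal.coe_le_coe.1 (le_of_eq_of_le ?_ hv))
  rw [NNReal.coe_sum, Finset.mul_sum]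
  exact Finset.sum_congr rfl fun i _ => mul_comm _ _

lemma measureReal_le_abs_le_of_hasSubgaussianMGF (hX : HasSubgaussianMGF X v μ)
    {T : ℝ} (hT : 0 ≤ T) :
    μ.real {ω | T ≤ |X ω|} ≤ 2 * Real.exp (-T ^ 2 / (2 * v)) := by
  have hunion : {ω | T ≤ |X ω|} = {ω | T ≤ X ω} ∪ {ω | T ≤ (-X) ω} := by
    ext ω
    exact le_abs (a := T)
  rw [hunion, two_mul]
  exact (measureReal_union_le _ _).trans
    (add_le_add (hX.measure_ge_le hT) (hX.neg.measure_ge_le hT))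

lemma measureReal_exists_cube_le_abs_le [IsFiniteMeasure μ] {β : Type*} [Fintype β]
    [DecidableEq β] {F : Ω → (β → ℝ) → ℝ} (hF : ∀ ω, SeparatelyAffine (F ω))
    (hsub : ∀ y : β → ℝ, (∀ p, y p ^ 2 = 1) → HasSubgaussianMGF (fun ω => F ω y) v μ)
    {T : ℝ} (hT : 0 ≤ T) :
    μ.real {ω | ∃ y : β → ℝ, (∀ p, y p ∈ Set.Icc (-1 : ℝ) 1) ∧ T ≤ |F ω y|} ≤
      2 ^ Fintype.card β * (2 * Real.exp (-T ^ 2 / (2 * v))) := by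
  let vertices : Finset (β → ℝ) := Fintype.piFinset fun _ => {-1, 1}
  have hcard : vertices.card = 2 ^ Fintype.card β := by
    simp [vertices, Finset.card_pair (show (-1 : ℝ) ≠ 1 by norm_num)]
  have hcover : {ω | ∃ y : β → ℝ, (∀ p, y p ∈ Set.Icc (-1 : ℝ) 1) ∧ T ≤ |F ω y|} ⊆
      ⋃ y ∈ vertices, {ω | T ≤ |F ω y|} := by
    rintro ω ⟨y, hy, hTy⟩
    obtain ⟨z, hz, hyz⟩ :=
      ((hF ω).separatelyConvex_comp (convexOn_univ_norm (E := ℝ))).exists_vertex_ge hy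
    exact Set.mem_biUnion (Finset.mem_coe.2 hz) (hTy.trans hyz)
  have htail : ∀ y ∈ vertices, μ.real {ω | T ≤ |F ω y|} ≤ 2 * Real.exp (-T ^ 2 / (2 * v)) := by
    intro y hy
    have hsign (p : β) : y p = -1 ∨ y p = 1 := by simpa using Fintype.mem_piFinset.1 hy p
    exact measureReal_le_abs_le_of_hasSubgaussianMGF
      (hsub y fun p => by rcases hsign p with h | h <;> simp [h]) hT
  calc _ ≤ μ.real (⋃ y ∈ vertices, {ω | T ≤ |F ω y|}) := 
      measureReal_mono hcover (measure_ne_top μ _)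
    _ ≤ ∑ y ∈ vertices, μ.real {ω | T ≤ |F ω y|} := measureReal_biUnion_finset_le _ _
    _ ≤ vertices.card • (2 * Real.exp (-T ^ 2 / (2 * v))) := Finset.sum_le_card_nsmul _ _ _ htail
    _ = 2 ^ Fintype.card β * (2 * Real.exp (-T ^ 2 / (2 * v))) := by
      rw [hcard, nsmul_eq_mul, Nat.cast_pow, Nat.cast_ofNat]

variable {ι α : Type*} [Fintype ι] {g : Ω → (ι → α) → ℝ}

lemma hasSubgaussianMGF_mul_decoupledForm (hindep : iIndepFun (fun f ω => g ω f) μ)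
    (hsub : ∀ f, HasSubgaussianMGF (fun ω => g ω f) c μ) (S : Finset (ι → α)) (r : ℝ)
    (hv : c * (r ^ 2 * S.card) ≤ (v : ℝ)) {y : ι × α → ℝ} (hy : ∀ p, y p ^ 2 = 1) :
    HasSubgaussianMGF (fun ω => r * decoupledForm S (g ω) y) v μ := by
  have hw : ∑ f ∈ S, (r * ∏ j, y (j, f j)) ^ 2 = r ^ 2 * S.card := by
    simp only [mul_pow, ← Finset.prod_pow, hy, Finset.prod_const_one, mul_one, Finset.sum_const,
      nsmul_eq_mul, mul_comm]
  convert hasSubgaussianMGF_sum_mul hindep hsub S (fun f => r * ∏ j, y (j, f j)) (hw ▸ hv)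
    using 2 with ω
  rw [decoupledForm, Finset.mul_sum]
  exact Finset.sum_congr rfl fun f _ => by ring

lemma measureReal_exists_cube_le_abs_mul_tensorForm_le [Fintype α]
    (hindep : iIndepFun (fun f ω => g ω f) μ)
    (hsub : ∀ f, HasSubgaussianMGF (fun ω => g ω f) c μ) (S : Finset (ι → α)) (r : ℝ)
    (hv : c * (r ^ 2 * S.card) ≤ (v : ℝ)) {T : ℝ} (hT : 0 ≤ T) :
    μ.real {ω | ∃ x : α → ℝ, (∀ i, x i ∈ Set.Icc (-1 : ℝ) 1) ∧
        T ≤ |r * tensorForm S (g ω) x|} ≤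
      2 ^ (Fintype.card ι * Fintype.card α) * (2 * Real.exp (-T ^ 2 / (2 * v))) := by
  classical
  have := hindep.isProbabilityMeasure
  rw [← Fintype.card_prod]
  refine (measureReal_mono ?_).trans <| measureReal_exists_cube_le_abs_le
    (fun ω => (separatelyAffine_decoupledForm S (g ω)).const_mul r)
    (fun y hy => hasSubgaussianMGF_mul_decoupledForm hindep hsub S r hv hy) hT
  rintro ω ⟨x, hx, hTx⟩
  exact ⟨fun p => x p.2, fun p => hx p.2, hTx⟩

end SubGaussian

section Limits

lemma tendsto_two_pow_mul_exp_neg_sq (k : ℕ) {a : ℝ} (ha : 0 < a) :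
    Tendsto (fun n : ℕ => (2 : ℝ) ^ (k * n) * Real.exp (-(a * n ^ 2))) atTop (nhds 0) := by
  have hexponent : Tendsto (fun x : ℝ => x * (k * Real.log 2 + -(a * x))) atTop atBot :=
    tendsto_id.atTop_mul_atBot₀ <| tendsto_atBot_add_const_left _ _ <|
      tendsto_neg_atTop_atBot.comp (tendsto_id.const_mul_atTop ha)
  refine (Real.tendsto_exp_atBot.comp (hexponent.comp tendsto_natCast_atTop_atTop)).congr
    fun n => ?_
  have htwo : (2 : ℝ) ^ (k * n) = Real.exp ((k * n : ℕ) * Real.log 2) := by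
    rw [Real.exp_nat_mul, Real.exp_log two_pos]
  rw [htwo, ← Real.exp_add]
  simp only [Function.comp_apply]
  push_cast
  ring_nf

lemma tendsto_measure_one_of_compl_subset {Ω γ : Type*} [MeasurableSpace Ω] {μ : Measure Ω}
    [IsProbabilityMeasure μ] {l : Filter γ} {good bad : γ → Set Ω}
    (hsub : ∀ i, (good i)ᶜ ⊆ bad i) (hbad : Tendsto (fun i => μ.real (bad i)) l (nhds 0)) :
    Tendsto (fun i => μ (good i)) l (nhds 1) := by
  refine (ENNReal.tendsto_toReal_iff (fun i => measure_ne_top μ _) ENNReal.one_ne_top).1 ?_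
  refine tendsto_of_tendsto_of_tendsto_of_le_of_le (g := fun i => 1 - μ.real (bad i))
    (by simpa using hbad.const_sub 1) tendsto_const_nhds (fun i => ?_) fun i => measureReal_le_one
  have huniv : good i ∪ bad i = Set.univ := Set.compl_subset_iff_union.1 (hsub i)
  have hunion := measureReal_union_le (μ := μ) (good i) (bad i)
  rw [huniv, probReal_univ] at hunion
  exact sub_le_iff_le_add.2 hunion

end Limits

section SpinHamiltonian

/-- The normalisation `n^{-(k-1)/2}` of the degree-`k` interaction, under which the Hamiltonian has
order `n` on the cube. -/
def spinScaling (n k : ℕ) : ℝ := (n : ℝ) ^ (-(((k : ℝ) - 1) / 2))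

/-- The mixed spin Hamiltonian with real coefficients `γ k` (which play the role of `√ξ_k`) and
degrees `k` ranging over an arbitrary finite set, possibly including an external field `k = 1`. -/
def spinHamiltonian (degrees : Finset ℕ) (γ : ℕ → ℝ) (n : ℕ) (g : (k : ℕ) → (Fin k → Fin n) → ℝ)
    (x : Fin n → ℝ) : ℝ :=
  ∑ k ∈ degrees, γ k * spinScaling n k * tensorForm Finset.univ (g k) x

lemma spinScaling_sq_mul_pow {n : ℕ} (hn : 0 < n) (k : ℕ) :
    spinScaling n k ^ 2 * (n : ℝ) ^ k = n := by
  have hn' : (0 : ℝ) < n := Nat.cast_pos.2 hn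
  rw [spinScaling, ← Real.rpow_mul_natCast hn'.le, ← Real.rpow_natCast (n : ℝ) k,
    ← Real.rpow_add hn']
  convert Real.rpow_one (n : ℝ) using 2
  push_cast
  ring

lemma spinScaling_sq_mul_card_collisions_le {n : ℕ} (hn : 0 < n) (k : ℕ) :
    spinScaling n k ^ 2 * (collisions (Fin k) (Fin n)).card ≤ (k : ℝ) ^ 2 := by
  have hn' : (0 : ℝ) < n := Nat.cast_pos.2 hn
  have hcard : ((collisions (Fin k) (Fin n)).card : ℝ) * n ≤ (k : ℝ) ^ 2 * (n : ℝ) ^ k := by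
    have := card_collisions_mul_card_le (Fin k) (Fin n)
    rw [Fintype.card_fin, Fintype.card_fin] at this
    exact_mod_cast this
  refine le_of_mul_le_mul_right ?_ hn'
  calc spinScaling n k ^ 2 * (collisions (Fin k) (Fin n)).card * n
      = spinScaling n k ^ 2 * ((collisions (Fin k) (Fin n)).card * n) := mul_assoc _ _ _
    _ ≤ spinScaling n k ^ 2 * ((k : ℝ) ^ 2 * (n : ℝ) ^ k) := by gcongr
    _ = (k : ℝ) ^ 2 * (spinScaling n k ^ 2 * (n : ℝ) ^ k) := by ring
    _ = (k : ℝ) ^ 2 * n := by rw [spinScaling_sq_mul_pow hn]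

lemma tendsto_measureReal_exists_cube_le_abs_collisions {Ω : Type*} [MeasurableSpace Ω]
    {μ : Measure Ω} {k : ℕ} {g : Ω → (n : ℕ) → (Fin k → Fin n) → ℝ} {c : ℝ≥0}
    (hindep : ∀ n, iIndepFun (fun f ω => g ω n f) μ)
    (hsub : ∀ n f, HasSubgaussianMGF (fun ω => g ω n f) c μ) {δ : ℝ} (hδ : 0 < δ) :
    Tendsto (fun n : ℕ => μ.real {ω | ∃ x : Fin n → ℝ, (∀ i, x i ∈ Set.Icc (-1 : ℝ) 1) ∧
      δ * n ≤ |spinScaling n k * tensorForm (collisions (Fin k) (Fin n)) (g ω n) x|})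
      atTop (nhds 0) := by
  -- The summand `1` keeps the proxy positive when `c = 0` or `k = 0`.
  let v : ℝ≥0 := c * k ^ 2 + 1
  have hv : (0 : ℝ) < v := by positivity
  have hrate : 0 < δ ^ 2 / (2 * v) := div_pos (pow_pos hδ 2) (mul_pos two_pos hv)
  have hlim := (tendsto_two_pow_mul_exp_neg_sq k hrate).const_mul 2
  rw [mul_zero] at hlim
  refine tendsto_of_tendsto_of_tendsto_of_le_of_le' tendsto_const_nhds hlim
    (Eventually.of_forall fun n => measureReal_nonneg) ?_
  filter_upwards [eventually_gt_atTop 0] with n hn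
  have hproxy : c * (spinScaling n k ^ 2 * (collisions (Fin k) (Fin n)).card) ≤ (v : ℝ) :=
    calc (c : ℝ) * (spinScaling n k ^ 2 * (collisions (Fin k) (Fin n)).card)
        ≤ (c : ℝ) * (k : ℝ) ^ 2 := by
          gcongr
          exact spinScaling_sq_mul_card_collisions_le hn k
      _ ≤ (v : ℝ) := by simp [v]
  refine (measureReal_exists_cube_le_abs_mul_tensorForm_le (hindep n) (hsub n) _ _ hproxy
    (by positivity)).trans_eq ?_
  rw [Fintype.card_fin, Fintype.card_fin]
  ring_nf

variable {n : ℕ}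

lemma signVec_mem_Icc (b : Fin n → Bool) (i : Fin n) : signVec b i ∈ Set.Icc (-1 : ℝ) 1 := by
  unfold signVec
  split_ifs <;> simp

lemma SeparatelyAffine.exists_signVec_ge {F : (Fin n → ℝ) → ℝ} (hF : SeparatelyAffine F)
    {x : Fin n → ℝ} (hx : ∀ i, x i ∈ Set.Icc (-1 : ℝ) 1) : ∃ b, F x ≤ F (signVec b) := by
  obtain ⟨v, hv, hFv⟩ := (hF.separatelyConvex_comp (convexOn_id convex_univ)).exists_vertex_ge hx
  have hsign (i : Fin n) : v i = -1 ∨ v i = 1 := by simpa using Fintype.mem_piFinset.1 hv i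
  have hv_eq : v = signVec fun i => decide (v i = 1) := by
    funext i
    rcases hsign i with h | h <;> norm_num [signVec, h]
  exact ⟨_, hv_eq ▸ hFv⟩

variable {degrees : Finset ℕ} {γ : ℕ → ℝ} {g : (k : ℕ) → (Fin k → Fin n) → ℝ}

lemma spinHamiltonian_eq_add (x : Fin n → ℝ) :
    spinHamiltonian degrees γ n g x =
      ∑ k ∈ degrees, γ k * spinScaling n k * tensorForm (collisions (Fin k) (Fin n))ᶜ (g k) x +
      ∑ k ∈ degrees, γ k * (spinScaling n k * tensorForm (collisions (Fin k) (Fin n)) (g k) x) := by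
  rw [← Finset.sum_add_distrib]
  refine Finset.sum_congr rfl fun k _ => ?_
  rw [← mul_assoc, ← mul_add]
  exact congrArg _ (Finset.sum_compl_add_sum _ _).symm

lemma exists_signVec_spinHamiltonian_ge {D : ℝ}
    (hD : ∀ k ∈ degrees, ∀ x : Fin n → ℝ, (∀ i, x i ∈ Set.Icc (-1 : ℝ) 1) →
      |spinScaling n k * tensorForm (collisions (Fin k) (Fin n)) (g k) x| ≤ D)
    {x : Fin n → ℝ} (hx : ∀ i, x i ∈ Set.Icc (-1 : ℝ) 1) :
    ∃ b, spinHamiltonian degrees γ n g x - 2 * (∑ k ∈ degrees, |γ k|) * D ≤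
      spinHamiltonian degrees γ n g (signVec b) := by
  have hcollision (z : Fin n → ℝ) (hz : ∀ i, z i ∈ Set.Icc (-1 : ℝ) 1) :
      |∑ k ∈ degrees,
        γ k * (spinScaling n k * tensorForm (collisions (Fin k) (Fin n)) (g k) z)| ≤
        (∑ k ∈ degrees, |γ k|) * D := by
    rw [Finset.sum_mul]
    refine (Finset.abs_sum_le_sum_abs _ _).trans (Finset.sum_le_sum fun k hk => ?_)
    rw [abs_mul]
    exact mul_le_mul_of_nonneg_left (hD k hk z hz) (abs_nonneg _)
  have haffine : SeparatelyAffine fun z : Fin n → ℝ => ∑ k ∈ degrees,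
      γ k * spinScaling n k * tensorForm (collisions (Fin k) (Fin n))ᶜ (g k) z :=
    .sum fun k _ => (separatelyAffine_tensorForm (g k) fun f hf => by
      simpa [collisions] using hf).const_mul _
  obtain ⟨b, hb⟩ := haffine.exists_signVec_ge hx
  refine ⟨b, ?_⟩
  rw [spinHamiltonian_eq_add, spinHamiltonian_eq_add]
  have hx_le := (abs_le.1 (hcollision x hx)).2
  have hb_ge := (abs_le.1 (hcollision (signVec b) (signVec_mem_Icc b))).1
  linarith

end SpinHamiltonian

theorem rounding_convex_hull_to_cube_general (degrees : Finset ℕ) (γ : ℕ → ℝ) (c : ℕ → ℝ≥0)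
    {Ω : Type*} [MeasurableSpace Ω] (μ : Measure Ω) [IsProbabilityMeasure μ]
    (g : Ω → (n : ℕ) → (k : ℕ) → (Fin k → Fin n) → ℝ)
    (hindep : ∀ n, ∀ k ∈ degrees, iIndepFun (fun f ω => g ω n k f) μ)
    (hsub : ∀ n, ∀ k ∈ degrees, ∀ f, HasSubgaussianMGF (fun ω => g ω n k f) (c k) μ)
    {ε : ℝ} (hε : 0 < ε) :
    Tendsto (fun n : ℕ =>
      μ {ω | ∀ m : Fin n → ℝ, (∀ i, m i ∈ Set.Icc (-1 : ℝ) 1) →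
          ∃ b : Fin n → Bool,
            spinHamiltonian degrees γ n (g ω n) m - (n : ℝ) * ε ≤
              spinHamiltonian degrees γ n (g ω n) (signVec b)})
      atTop (nhds 1) := by
  set G : ℝ := ∑ k ∈ degrees, |γ k|
  have hG : 0 < 2 * (G + 1) := by
    linarith [Finset.sum_nonneg fun k (_ : k ∈ degrees) => abs_nonneg (γ k)]
  let δ : ℝ := ε / (2 * (G + 1))
  have hδ : 0 < δ := div_pos hε hG
  have hGδ : 2 * G * δ ≤ ε := by
    rw [mul_div_assoc', div_le_iff₀ hG]
    linarith
  let bad (n k : ℕ) : Set Ω := {ω | ∃ x : Fin n → ℝ, (∀ i, x i ∈ Set.Icc (-1 : ℝ) 1) ∧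
    δ * n ≤ |spinScaling n k * tensorForm (collisions (Fin k) (Fin n)) (g ω n k) x|}
  have hbad : Tendsto (fun n => μ.real (⋃ k ∈ degrees, bad n k)) atTop (nhds 0) := by
    have hsum : Tendsto (fun n => ∑ k ∈ degrees, μ.real (bad n k)) atTop (nhds 0) := by
      rw [← Finset.sum_const_zero (s := degrees)]
      exact tendsto_finsetSum degrees fun k hk =>
        tendsto_measureReal_exists_cube_le_abs_collisions (fun n => hindep n k hk)
          (fun n => hsub n k hk) hδ
    exact squeeze_zero (fun n => measureReal_nonneg)
      (fun n => measureReal_biUnion_finset_le degrees (bad n)) hsum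
  refine tendsto_measure_one_of_compl_subset (fun n => Set.compl_subset_comm.1 ?_) hbad
  intro ω hω m hm
  simp only [bad, Set.mem_compl_iff, Set.mem_iUnion, not_exists, Set.mem_ofPred_eq, not_and,
    not_le] at hω
  obtain ⟨b, hb⟩ := exists_signVec_spinHamiltonian_ge (γ := γ)
    (fun k hk x hx => (hω k hk x hx).le) hm
  refine ⟨b, le_trans ?_ hb⟩
  have hloss : 2 * G * (δ * n) ≤ n * ε := by
    rw [← mul_assoc, mul_comm (n : ℝ)]
    gcongr
  exact sub_le_sub_left hloss _

/-- **Rounding to the hypercube** (Sellke). For the mixed `p`-spin Hamiltonian extended to the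
convex hull `[−1,1]^n` of the hypercube, for every `ε > 0`, with probability tending to one,
every `m ∈ [−1,1]^n` admits a hypercube point `σ ∈ {−1,1}^n` with `H_n(σ) ≥ H_n(m) − nε`. -/
theorem rounding_convex_hull_to_cube (kmax : ℕ) (hkmax : 2 ≤ kmax) (ξ : ℕ → ℝ)
    (hξ : ∀ k ∈ Finset.Icc 2 kmax, 0 ≤ ξ k)
    {Ω : Type*} [MeasurableSpace Ω] (μ : Measure Ω) [IsProbabilityMeasure μ]
    (g : Ω → (n : ℕ) → (k : ℕ) → (Fin k → Fin n) → ℝ)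
    (hmeas : ∀ n k idx, Measurable fun ω => g ω n k idx)
    (hindep : ∀ n : ℕ, iIndepFun
      (fun (p : Σ k : {k : ℕ // 2 ≤ k ∧ k ≤ kmax}, Fin k.1 → Fin n) =>
        fun ω => g ω n p.1.1 p.2) μ)
    (hgauss : ∀ n : ℕ, ∀ (p : Σ k : {k : ℕ // 2 ≤ k ∧ k ≤ kmax}, Fin k.1 → Fin n),
      μ.map (fun ω => g ω n p.1.1 p.2) = gaussianReal 0 1) :
    ∀ ε : ℝ, 0 < ε →
      Tendsto (fun n : ℕ =>
        μ {ω | ∀ m : Fin n → ℝ, (∀ i, m i ∈ Set.Icc (-1 : ℝ) 1) →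
            ∃ b : Fin n → Bool,
              mixedHamiltonian kmax n ξ (g ω n) m - (n : ℝ) * ε ≤
                mixedHamiltonian kmax n ξ (g ω n) (signVec b)})
        atTop (nhds 1) := by
  intro ε hε
  exact rounding_convex_hull_to_cube_general (Finset.Icc 2 kmax) (fun k => √(ξ k)) (fun _ => 1) μ g
    (fun n k hk => (hindep n).precomp (g := fun f : Fin k → Fin n => ⟨⟨k, Finset.mem_Icc.1 hk⟩, f⟩)
      fun _ _ h => eq_of_heq (Sigma.mk.inj h).2)
    (fun n k hk f =>
      hasSubgaussianMGF_of_map_eq_gaussianReal (hgauss n ⟨⟨k, Finset.mem_Icc.1 hk⟩, f⟩)) hε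

end
end

section
/- Let n range over even integers and let Σ_n := {σ ∈ {−1,1}^n : Σ_i σ_i = 0}. Let A_n ~ GOE(n) and let c* := lim_{n→∞} (1/(2n)) E[ max_{σ ∈ Σ_n} ⟨σ, A_n σ⟩ ] (this limit exists). Let G_n be an Erdős–Rényi random graph on n vertices in which each of the C(n,2) possible edges is present independently with probability p_n, where n p_n → ∞ and p_n ≤ 1/2, and let A_{G_n} be its adjacency matrix. Then, in probability, (1/(2n)) · max_{σ ∈ Σ_n} ⟨σ, A_{G_n} σ⟩ / √(n p_n (1 − p_n)) → c* as n → ∞. -/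
open MeasureTheory ProbabilityTheory Filter
open scoped NNReal ENNReal

noncomputable section

/-- A random symmetric matrix `A : Ω → (Fin n → Fin n → ℝ)` has the `GOE(n)` distribution:
entries are measurable, the matrix is symmetric, the upper-triangular entries (including the
diagonal) are independent, diagonal entries are `N(0, 2/n)` and off-diagonal entries are
`N(0, 1/n)`. -/
def IsGOE {Ω : Type*} [MeasurableSpace Ω] (μ : Measure Ω) (n : ℕ)
    (A : Ω → Fin n → Fin n → ℝ) : Prop :=
  (∀ i j, Measurable fun ω => A ω i j) ∧
  (∀ ω, ∀ i j, A ω i j = A ω j i) ∧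
  iIndepFun
    (fun (p : {p : Fin n × Fin n // p.1 ≤ p.2}) => fun ω => A ω p.1.1 p.1.2) μ ∧
  (∀ i : Fin n, μ.map (fun ω => A ω i i) = gaussianReal 0 (2 / (n : ℝ≥0))) ∧
  (∀ i j : Fin n, i < j → μ.map (fun ω => A ω i j) = gaussianReal 0 (1 / (n : ℝ≥0)))

/-- The maximum of the quadratic form `⟨σ, Aσ⟩` over the balanced hypercube
`Σ_N = {σ ∈ {−1,1}^N : Σ_i σ_i = 0}`. -/
def balMax (N : ℕ) (A : Fin N → Fin N → ℝ) : ℝ :=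
  ⨆ b : {b : Fin N → Bool // 2 * (Finset.univ.filter (fun i => b i = true)).card = N},
    ∑ i, ∑ j, signVec b.1 i * A i j * signVec b.1 j

/-!
For a symmetric matrix, `⟨σ, Aσ⟩ / 2` is, up to the trace, a linear form in the entries above the
diagonal with coefficients `σ_i σ_j = ±1`. Balanced `σ` all give these coefficients the same sum
`-N / 2`, so centering the adjacency matrix shifts every `⟨σ, Aσ⟩ / 2` by the same `p N / 2`, which
vanishes after the normalization.

The maximum of at most `2 ^ N` linear forms is within `N / β` of the free energy at inverse
temperature `β`, whose third derivative in each entry is at most `2 β ^ 2`. Replacing the `N ^ 2`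
centered Bernoulli entries by Gaussians of the same variance `1 / N` one at a time (Lindeberg)
therefore costs `N (1 / β + O(β ^ 2) (1 / √(N p (1 - p)) + 1 / √N))` in expectation: let
`N p (1 - p) → ∞` first and `β → ∞` afterwards. Since the maximum is `1`-Lipschitz in each entry,
the Efron–Stein inequality bounds its variance by `N`, and Chebyshev's inequality turns the limit
of the means into a limit in probability.
-/

section ProductMeasure

variable {ι : Type*} [Fintype ι] [DecidableEq ι] {E : ι → Type*} [∀ i, MeasurableSpace (E i)]

lemma measurePreserving_update_pi (μ : ∀ i, Measure (E i)) [∀ i, IsProbabilityMeasure (μ i)]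
    (i : ι) (ν : Measure (E i)) [IsProbabilityMeasure ν] :
    MeasurePreserving (fun z : (∀ j, E j) × E i => Function.update z.1 i z.2)
      ((Measure.pi μ).prod ν) (Measure.pi (Function.update μ i ν)) := by
  have hprob : ∀ j, IsProbabilityMeasure (Function.update μ i ν j) :=
    (Function.forall_update_iff μ fun _ ρ => IsProbabilityMeasure ρ).mpr
      ⟨inferInstance, fun _ _ => inferInstance⟩
  refine ⟨measurable_update', (Measure.pi_eq fun s hs => ?_).symm⟩
  have hpreimage : (fun z : (∀ j, E j) × E i => Function.update z.1 i z.2) ⁻¹' Set.univ.pi s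
      = Set.univ.pi (Function.update s i Set.univ) ×ˢ s i := by
    ext z
    simp only [Set.mem_preimage, Set.mem_univ_pi, Set.mem_prod,
      Function.forall_update_iff z.1 fun j y => y ∈ s j,
      Function.forall_update_iff s fun j t => z.1 j ∈ t, Set.mem_univ, true_and]
    exact and_comm
  rw [Measure.map_apply measurable_update' (.univ_pi hs), hpreimage, Measure.prod_prod,
    Measure.pi_pi, ← Finset.prod_erase_mul Finset.univ _ (Finset.mem_univ i),
    ← Finset.prod_erase_mul Finset.univ (fun j => Function.update μ i ν j (s j))
      (Finset.mem_univ i)]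
  simp only [Function.update_self, measure_univ, mul_one]
  congr 1
  refine Finset.prod_congr rfl fun j hj => ?_
  rw [Function.update_of_ne (Finset.ne_of_mem_erase hj),
    Function.update_of_ne (Finset.ne_of_mem_erase hj)]

variable {V : Type*} [NormedAddCommGroup V] {F : (∀ j, E j) → V}

lemma integrable_update_prod (μ : ∀ i, Measure (E i)) [∀ i, IsProbabilityMeasure (μ i)]
    (i : ι) (ν : Measure (E i)) [IsProbabilityMeasure ν]
    (hF : Integrable F (Measure.pi (Function.update μ i ν))) :
    Integrable (fun z : (∀ j, E j) × E i => F (Function.update z.1 i z.2))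
      ((Measure.pi μ).prod ν) :=
  (measurePreserving_update_pi μ i ν).integrable_comp_of_integrable hF

lemma integral_pi_update [NormedSpace ℝ V] (μ : ∀ i, Measure (E i))
    [∀ i, IsProbabilityMeasure (μ i)] (i : ι) (ν : Measure (E i)) [IsProbabilityMeasure ν]
    (hF : Integrable F (Measure.pi (Function.update μ i ν))) :
    ∫ x, F x ∂Measure.pi (Function.update μ i ν)
      = ∫ x, ∫ t, F (Function.update x i t) ∂ν ∂Measure.pi μ := by
  have hmp := measurePreserving_update_pi μ i ν
  rw [← integral_prod _ (integrable_update_prod μ i ν hF), ← hmp.map_eq,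
    integral_map hmp.aemeasurable (hmp.map_eq ▸ hF.aestronglyMeasurable)]

end ProductMeasure

section Lipschitz

/-- `F` is Lipschitz in the coordinates of `s`, with its own constant `L i` in each of them, and
does not depend on the others. Keeping track of `s` lets coordinates be integrated out one at a
time. -/
def CoordLipschitz {ι : Type*} (L : ι → ℝ≥0) (s : Finset ι) (F : (ι → ℝ) → ℝ) : Prop :=
  ∀ x y, |F x - F y| ≤ ∑ i ∈ s, L i * |x i - y i|

namespace CoordLipschitz

variable {ι : Type*} {L : ι → ℝ≥0} {s : Finset ι} {F : (ι → ℝ) → ℝ}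

lemma of_le (h : ∀ x y, F x ≤ F y + ∑ i ∈ s, L i * |x i - y i|) : CoordLipschitz L s F := by
  intro x y
  have hyx := h y x
  simp only [abs_sub_comm (y _) (x _)] at hyx
  exact abs_sub_le_iff.mpr ⟨by linarith [h x y], by linarith⟩

lemma continuous (hF : CoordLipschitz L s F) : Continuous F := by
  refine continuous_iff_continuousAt.mpr fun y => tendsto_iff_dist_tendsto_zero.mpr ?_
  have hbound : Tendsto (fun x : ι → ℝ => ∑ i ∈ s, L i * |x i - y i|) (nhds y) (nhds 0) := by
    have hcont : Continuous fun x : ι → ℝ => ∑ i ∈ s, L i * |x i - y i| := by fun_prop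
    simpa using hcont.tendsto y
  exact squeeze_zero (fun _ => dist_nonneg) (fun x => hF x y) hbound

lemma memLp_pi [Fintype ι] (hF : CoordLipschitz L s F) {r : ℝ≥0∞} (μ : ι → Measure ℝ)
    [∀ i, IsProbabilityMeasure (μ i)] (hμ : ∀ i, MemLp id r (μ i)) :
    MemLp F r (Measure.pi μ) := by
  have hcoord (i : ι) : MemLp (fun x : ι → ℝ => L i * |x i|) r (Measure.pi μ) := by
    have heval : MemLp (fun x : ι → ℝ => x i) r (Measure.pi μ) :=
      (hμ i).comp_measurePreserving (measurePreserving_eval μ i)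
    exact heval.norm.const_mul _
  have hsum : MemLp (fun x : ι → ℝ => ∑ i ∈ s, L i * |x i|) r (Measure.pi μ) :=
    memLp_finsetSum s fun i _ => hcoord i
  have hbound : MemLp (fun x : ι → ℝ => |F 0| + ∑ i ∈ s, L i * |x i|) r (Measure.pi μ) :=
    (memLp_const |F 0|).add hsum
  refine hbound.mono' hF.continuous.aestronglyMeasurable (ae_of_all _ fun x => ?_)
  have h0 : |F x - F 0| ≤ ∑ i ∈ s, L i * |x i| := by simpa using hF x 0
  have htriangle : |F x| ≤ |F x - F 0| + |F 0| := by simpa using abs_add_le (F x - F 0) (F 0)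
  rw [Real.norm_eq_abs]
  linarith

lemma integrable_pi [Fintype ι] (hF : CoordLipschitz L s F) (μ : ι → Measure ℝ)
    [∀ i, IsProbabilityMeasure (μ i)] (hμ : ∀ i, Integrable id (μ i)) :
    Integrable F (Measure.pi μ) :=
  memLp_one_iff_integrable.mp (hF.memLp_pi μ fun i => memLp_one_iff_integrable.mpr (hμ i))

lemma lipschitzWith_update [DecidableEq ι] {i : ι} (hF : CoordLipschitz L (insert i s) F)
    (hi : i ∉ s) (x : ι → ℝ) : LipschitzWith (L i) fun t => F (Function.update x i t) := by
  refine LipschitzWith.of_dist_le_mul fun t u => (hF _ _).trans_eq ?_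
  have hzero : ∑ j ∈ s, L j * |Function.update x i t j - Function.update x i u j| = 0 :=
    Finset.sum_eq_zero fun j hj => by
      have hji : j ≠ i := ne_of_mem_of_not_mem hj hi
      simp [Function.update_of_ne hji]
  rw [Finset.sum_insert hi, hzero, add_zero, Function.update_self, Function.update_self,
    Real.dist_eq]

lemma integral_update [DecidableEq ι] {i : ι} (hF : CoordLipschitz L (insert i s) F)
    (hi : i ∉ s) (ν : Measure ℝ) [IsProbabilityMeasure ν]
    (hν : ∀ x, Integrable (fun t => F (Function.update x i t)) ν) :
    CoordLipschitz L s fun x => ∫ t, F (Function.update x i t) ∂ν := by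
  intro x y
  rw [← integral_sub (hν x) (hν y), ← Real.norm_eq_abs]
  have hpointwise : ∀ t, ‖F (Function.update x i t) - F (Function.update y i t)‖
      ≤ ∑ j ∈ s, L j * |x j - y j| := fun t => (hF _ _).trans_eq <| by
    rw [Finset.sum_insert hi, Function.update_self, Function.update_self, sub_self, abs_zero,
      mul_zero, zero_add]
    refine Finset.sum_congr rfl fun j hj => ?_
    have hji : j ≠ i := ne_of_mem_of_not_mem hj hi
    rw [Function.update_of_ne hji, Function.update_of_ne hji]
  simpa using norm_integral_le_of_norm_le_const (μ := ν) (ae_of_all _ hpointwise)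

end CoordLipschitz

end Lipschitz

section Variance

lemma variance_prod_eq {α β : Type*} [MeasurableSpace α] [MeasurableSpace β] {μ : Measure α}
    {ν : Measure β} [IsProbabilityMeasure μ] [IsProbabilityMeasure ν] {H : α × β → ℝ}
    (hH : MemLp H 2 (μ.prod ν)) :
    Var[H; μ.prod ν] = ∫ x, Var[fun y => H (x, y); ν] ∂μ + Var[fun x => ∫ y, H (x, y) ∂ν; μ] := by
  have hH1 : Integrable H (μ.prod ν) := hH.integrable one_le_two
  have hsq : Integrable (fun z => H z ^ 2) (μ.prod ν) := hH.integrable_sq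
  have hslice : ∀ᵐ x ∂μ, MemLp (fun y => H (x, y)) 2 ν := by
    filter_upwards [hH.aestronglyMeasurable.prodMk_left, hsq.prod_right_ae] with x hmeas hintegrable
    exact (memLp_two_iff_integrable_sq hmeas).mpr hintegrable
  have hvar : ∀ᵐ x ∂μ, Var[fun y => H (x, y); ν]
      = ∫ y, H (x, y) ^ 2 ∂ν - (∫ y, H (x, y) ∂ν) ^ 2 := by
    filter_upwards [hslice] with x hx using variance_eq_sub hx
  have hmean : MemLp (fun x => ∫ y, H (x, y) ∂ν) 2 μ := by
    have hmeas := hH.aestronglyMeasurable.integral_prod_right'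
    refine (memLp_two_iff_integrable_sq hmeas).mpr ?_
    refine hsq.integral_prod_left.mono' (hmeas.pow 2) ?_
    filter_upwards [hvar] with x hx
    rw [Real.norm_of_nonneg (sq_nonneg _)]
    linarith [variance_nonneg (fun y => H (x, y)) ν]
  rw [integral_congr_ae hvar, integral_sub hsq.integral_prod_left hmean.integrable_sq,
    variance_eq_sub hH, variance_eq_sub hmean]
  simp only [Pi.pow_apply]
  rw [integral_prod _ hsq, integral_prod _ hH1]
  ring

lemma memLp_comp_of_lipschitzWith {Ω : Type*} [MeasurableSpace Ω] {μ : Measure Ω}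
    [IsFiniteMeasure μ] {X : Ω → ℝ} {f : ℝ → ℝ} {K : ℝ≥0} {r : ℝ≥0∞} (hf : LipschitzWith K f)
    (hX : MemLp X r μ) : MemLp (fun ω => f (X ω)) r μ := by
  have hcentered : MemLp ((fun t => f t - f 0) ∘ X) r μ :=
    LipschitzWith.comp_memLp (K := K)
      (LipschitzWith.of_dist_le_mul fun t u => by simpa using hf.dist_le_mul t u) (by simp) hX
  refine (hcentered.add (memLp_const (f 0))).ae_eq (ae_of_all _ fun ω => ?_)
  simp

lemma variance_comp_le_of_lipschitzWith {Ω : Type*} [MeasurableSpace Ω] {μ : Measure Ω}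
    [IsProbabilityMeasure μ] {X : Ω → ℝ} {f : ℝ → ℝ} {K : ℝ≥0} (hf : LipschitzWith K f)
    (hX : MemLp X 2 μ) : Var[fun ω => f (X ω); μ] ≤ K ^ 2 * Var[X; μ] := by
  have hfX := hf.continuous.comp_aestronglyMeasurable hX.aestronglyMeasurable
  have hsq : Integrable (fun ω => (X ω - μ[X]) ^ 2) μ :=
    (hX.sub (memLp_const _)).integrable_sq
  have hlip : ∀ ω, (f (X ω) - f μ[X]) ^ 2 ≤ K ^ 2 * (X ω - μ[X]) ^ 2 := fun ω => by
    have h := hf.dist_le_mul (X ω) μ[X]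
    rw [Real.dist_eq, Real.dist_eq] at h
    rw [← sq_abs (f _ - _), ← sq_abs (X ω - _), ← mul_pow]
    gcongr
  calc Var[fun ω => f (X ω); μ]
      = Var[fun ω => f (X ω) - f μ[X]; μ] := (variance_sub_const hfX _).symm
    _ ≤ ∫ ω, (f (X ω) - f μ[X]) ^ 2 ∂μ :=
        variance_le_expectation_sq (hfX.sub aestronglyMeasurable_const)
    _ ≤ ∫ ω, K ^ 2 * (X ω - μ[X]) ^ 2 ∂μ :=
        integral_mono_of_nonneg (ae_of_all _ fun _ => sq_nonneg _) (hsq.const_mul _)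
          (ae_of_all _ hlip)
    _ = K ^ 2 * Var[X; μ] := by
        rw [integral_const_mul, variance_eq_integral hX.aestronglyMeasurable.aemeasurable]

lemma CoordLipschitz.variance_pi_le {ι : Type*} [Fintype ι] {L : ι → ℝ≥0} {s : Finset ι}
    {F : (ι → ℝ) → ℝ} (hF : CoordLipschitz L s F) (μ : ι → Measure ℝ)
    [∀ i, IsProbabilityMeasure (μ i)] (hμ : ∀ i, MemLp id 2 (μ i)) :
    Var[F; Measure.pi μ] ≤ ∑ i ∈ s, L i ^ 2 * Var[id; μ i] := by
  classical
  induction s using Finset.induction_on generalizing F with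
  | empty =>
    have hconst : F = fun _ => F 0 := funext fun x => by
      simpa [CoordLipschitz, sub_eq_zero] using hF x 0
    rw [hconst, variance_eq_integral aemeasurable_const]
    simp
  | insert i s hi ih =>
    have hslice (x : ι → ℝ) := hF.lipschitzWith_update hi x
    have hmean : CoordLipschitz L s fun x => ∫ t, F (Function.update x i t) ∂μ i :=
      hF.integral_update hi (μ i) fun x =>
        (memLp_comp_of_lipschitzWith (hslice x) (hμ i)).integrable one_le_two
    have hmp := measurePreserving_update_pi μ i (μ i)
    rw [Function.update_eq_self] at hmp
    have hF2 := hF.memLp_pi μ hμ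
    have hslices : ∫ x, Var[fun t => F (Function.update x i t); μ i] ∂Measure.pi μ
        ≤ L i ^ 2 * Var[id; μ i] := by
      refine (integral_mono_of_nonneg (ae_of_all _ fun x => variance_nonneg _ _)
        (integrable_const (L i ^ 2 * Var[id; μ i]))
        (ae_of_all _ fun x => variance_comp_le_of_lipschitzWith (hslice x) (hμ i))).trans_eq ?_
      simp
    calc Var[F; Measure.pi μ]
        = Var[fun z : (ι → ℝ) × ℝ => F (Function.update z.1 i z.2); (Measure.pi μ).prod (μ i)] :=
          (hmp.variance_fun_comp hF2.aestronglyMeasurable.aemeasurable).symm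
      _ = ∫ x, Var[fun t => F (Function.update x i t); μ i] ∂Measure.pi μ
            + Var[fun x => ∫ t, F (Function.update x i t) ∂μ i; Measure.pi μ] :=
          variance_prod_eq (hF2.comp_measurePreserving hmp)
      _ ≤ ∑ j ∈ insert i s, L j ^ 2 * Var[id; μ j] := by
          rw [Finset.sum_insert hi]
          exact add_le_add hslices (ih hmean)

end Variance

section Lindeberg

/-- `f` is a quadratic polynomial up to an error `C * |t| ^ 3`, uniformly over the whole line: the
regularity of a test function that the Lindeberg replacement argument needs in each coordinate. -/
def HasQuadraticApprox (C : ℝ) (f : ℝ → ℝ) : Prop :=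
  ∃ a b c : ℝ, ∀ t, |f t - (a + b * t + c * t ^ 2)| ≤ C * |t| ^ 3

/-- Two laws on the line with finite third moments, the same mean and the same second moment. -/
structure MatchTwoMoments (μ ν : Measure ℝ) : Prop where
  memLp_left : MemLp id 3 μ
  memLp_right : MemLp id 3 ν
  mean_eq : ∫ t, t ∂μ = ∫ t, t ∂ν
  sq_eq : ∫ t, t ^ 2 ∂μ = ∫ t, t ^ 2 ∂ν

variable {μ ν : Measure ℝ} {C : ℝ} {f : ℝ → ℝ}

lemma integrable_abs_cube_of_memLp_id (hμ : MemLp id 3 μ) : Integrable (fun t => |t| ^ 3) μ := by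
  simpa using hμ.integrable_norm_pow (by norm_num)

lemma integral_quadratic [IsProbabilityMeasure μ] (hμ : MemLp id 2 μ) (a b c : ℝ) :
    Integrable (fun t => a + b * t + c * t ^ 2) μ ∧
      ∫ t, (a + b * t + c * t ^ 2) ∂μ = a + b * ∫ t, t ∂μ + c * ∫ t, t ^ 2 ∂μ := by
  have hlin : Integrable (fun t => b * t) μ := (hμ.integrable one_le_two).const_mul b
  have hsq : Integrable (fun t => c * t ^ 2) μ := hμ.integrable_sq.const_mul c
  have haffine : Integrable (fun t => a + b * t) μ := (integrable_const a).add hlin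
  refine ⟨haffine.add hsq, ?_⟩
  rw [integral_add haffine hsq, integral_add (integrable_const a) hlin, integral_const_mul,
    integral_const_mul]
  simp

lemma abs_integral_sub_integral_quadratic_le [IsProbabilityMeasure μ] (hμ : MemLp id 3 μ)
    (hf : Integrable f μ) {a b c : ℝ} (h : ∀ t, |f t - (a + b * t + c * t ^ 2)| ≤ C * |t| ^ 3) :
    |∫ t, f t ∂μ - (a + b * ∫ t, t ∂μ + c * ∫ t, t ^ 2 ∂μ)| ≤ C * ∫ t, |t| ^ 3 ∂μ := by
  obtain ⟨hintegrable, heq⟩ :=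
    integral_quadratic (hμ.mono_exponent (by norm_num : (2 : ℝ≥0∞) ≤ 3)) a b c
  rw [← heq, ← integral_sub hf hintegrable, ← integral_const_mul, ← Real.norm_eq_abs]
  exact norm_integral_le_of_norm_le ((integrable_abs_cube_of_memLp_id hμ).const_mul C)
    (ae_of_all _ h)

lemma HasQuadraticApprox.abs_integral_sub_le [IsProbabilityMeasure μ] [IsProbabilityMeasure ν]
    (hf : HasQuadraticApprox C f) (hμν : MatchTwoMoments μ ν) (hfμ : Integrable f μ)
    (hfν : Integrable f ν) :
    |∫ t, f t ∂μ - ∫ t, f t ∂ν| ≤ C * (∫ t, |t| ^ 3 ∂μ + ∫ t, |t| ^ 3 ∂ν) := by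
  obtain ⟨a, b, c, h⟩ := hf
  have hleft := abs_integral_sub_integral_quadratic_le hμν.memLp_left hfμ h
  have hright := abs_integral_sub_integral_quadratic_le hμν.memLp_right hfν h
  rw [hμν.mean_eq, hμν.sq_eq] at hleft
  rw [abs_sub_comm] at hright
  exact (abs_sub_le _ _ _).trans ((add_le_add hleft hright).trans_eq (by ring))

variable {ι : Type*} [Fintype ι] [DecidableEq ι] {L : ι → ℝ≥0} {F : (ι → ℝ) → ℝ}

lemma CoordLipschitz.integrable_update (hF : CoordLipschitz L Finset.univ F) (i : ι)
    [IsFiniteMeasure ν] (hν : Integrable id ν) (x : ι → ℝ) :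
    Integrable (fun t => F (Function.update x i t)) ν := by
  have hslice : LipschitzWith (L i) fun t => F (Function.update x i t) :=
    lipschitzWith_update (s := Finset.univ.erase i)
      (by rwa [Finset.insert_erase (Finset.mem_univ i)]) (Finset.notMem_erase i _) x
  exact memLp_one_iff_integrable.mp
    (memLp_comp_of_lipschitzWith hslice (memLp_one_iff_integrable.mpr hν))

lemma abs_integral_pi_sub_update_le (hF : CoordLipschitz L Finset.univ F) (ρ : ι → Measure ℝ)
    [∀ i, IsProbabilityMeasure (ρ i)] (hρ : ∀ i, Integrable id (ρ i)) (i : ι) (ν : Measure ℝ)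
    [IsProbabilityMeasure ν] (hmatch : MatchTwoMoments (ρ i) ν)
    (hquad : ∀ x, HasQuadraticApprox C fun t => F (Function.update x i t)) :
    |∫ x, F x ∂Measure.pi ρ - ∫ x, F x ∂Measure.pi (Function.update ρ i ν)|
      ≤ C * (∫ t, |t| ^ 3 ∂ρ i + ∫ t, |t| ^ 3 ∂ν) := by
  have hν : Integrable id ν := hmatch.memLp_right.integrable (by norm_num)
  have hprob : ∀ j, IsProbabilityMeasure (Function.update ρ i ν j) :=
    (Function.forall_update_iff ρ fun _ σ => IsProbabilityMeasure σ).mpr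
      ⟨inferInstance, fun _ _ => inferInstance⟩
  have hFρ : Integrable F (Measure.pi (Function.update ρ i (ρ i))) := by
    rw [Function.update_eq_self]
    exact hF.integrable_pi ρ hρ
  have hFν : Integrable F (Measure.pi (Function.update ρ i ν)) :=
    hF.integrable_pi _ <| (Function.forall_update_iff ρ fun _ σ => Integrable id σ).mpr
      ⟨hν, fun j _ => hρ j⟩
  have hslices (x : ι → ℝ) := (hquad x).abs_integral_sub_le hmatch
    (hF.integrable_update i (hρ i) x) (hF.integrable_update i hν x)
  conv_lhs => rw [← Function.update_eq_self i ρ, Function.update_idem]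
  rw [integral_pi_update ρ i (ρ i) hFρ, integral_pi_update ρ i ν hFν,
    ← integral_sub (integrable_update_prod ρ i (ρ i) hFρ).integral_prod_left
      (integrable_update_prod ρ i ν hFν).integral_prod_left, ← Real.norm_eq_abs]
  refine (norm_integral_le_of_norm_le_const (ae_of_all _ hslices)).trans_eq ?_
  simp

theorem abs_integral_pi_sub_integral_pi_le (hF : CoordLipschitz L Finset.univ F)
    (hquad : ∀ x i, HasQuadraticApprox C fun t => F (Function.update x i t))
    (μ ν : ι → Measure ℝ) [∀ i, IsProbabilityMeasure (μ i)] [∀ i, IsProbabilityMeasure (ν i)]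
    (hmatch : ∀ i, MatchTwoMoments (μ i) (ν i)) :
    |∫ x, F x ∂Measure.pi μ - ∫ x, F x ∂Measure.pi ν|
      ≤ ∑ i, C * (∫ t, |t| ^ 3 ∂μ i + ∫ t, |t| ^ 3 ∂ν i) := by
  suffices hreplaced : ∀ s : Finset ι,
      |∫ x, F x ∂Measure.pi μ - ∫ x, F x ∂Measure.pi (s.piecewise ν μ)|
        ≤ ∑ i ∈ s, C * (∫ t, |t| ^ 3 ∂μ i + ∫ t, |t| ^ 3 ∂ν i) by
    simpa using hreplaced Finset.univ
  intro s
  induction s using Finset.induction_on with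
  | empty => simp
  | insert i s hi ih =>
    set ρ := s.piecewise ν μ with hρ
    have hρi : ρ i = μ i := Finset.piecewise_eq_of_notMem s ν μ hi
    have hprob : ∀ j, IsProbabilityMeasure (ρ j) := fun j =>
      Finset.piecewise_cases s ν μ (fun σ => IsProbabilityMeasure σ) inferInstance inferInstance
    have hintegrable : ∀ j, Integrable id (ρ j) := fun j =>
      Finset.piecewise_cases s ν μ (fun σ => Integrable id σ)
        ((hmatch j).memLp_right.integrable (by norm_num))
        ((hmatch j).memLp_left.integrable (by norm_num))
    have hswap := abs_integral_pi_sub_update_le hF ρ hintegrable i (ν i) (hρi ▸ hmatch i)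
      fun x => hquad x i
    rw [Finset.piecewise_insert, ← hρ, Finset.sum_insert hi, add_comm, ← hρi]
    exact (abs_sub_le _ _ _).trans (add_le_add ih hswap)

end Lindeberg

section Taylor

lemma abs_le_mul_abs_pow_succ_of_hasDerivAt {f f' : ℝ → ℝ} {K : ℝ} {k : ℕ} (hf0 : f 0 = 0)
    (hf : ∀ u, HasDerivAt f (f' u) u) (hf' : ∀ u, |f' u| ≤ K * |u| ^ k) (u : ℝ) :
    |f u| ≤ K * |u| ^ (k + 1) := by
  have hK : 0 ≤ K := by simpa using (abs_nonneg _).trans (hf' 1)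
  have hbound : ∀ v ∈ Set.uIcc 0 u, ‖f' v‖ ≤ K * |u| ^ k := fun v hv => by
    have hvu : |v| ≤ |u| := by simpa using Set.abs_sub_left_of_mem_uIcc hv
    exact (hf' v).trans (by gcongr)
  have hmvt := (convex_uIcc 0 u).norm_image_sub_le_of_norm_hasDerivWithin_le
    (fun v _ => (hf v).hasDerivWithinAt) hbound Set.left_mem_uIcc Set.right_mem_uIcc
  simpa only [hf0, sub_zero, Real.norm_eq_abs, pow_succ, mul_assoc] using hmvt

lemma hasQuadraticApprox_of_hasDerivAt {f f₁ f₂ f₃ : ℝ → ℝ} {K : ℝ}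
    (hf : ∀ u, HasDerivAt f (f₁ u) u) (hf₁ : ∀ u, HasDerivAt f₁ (f₂ u) u)
    (hf₂ : ∀ u, HasDerivAt f₂ (f₃ u) u) (hf₃ : ∀ u, |f₃ u| ≤ K) : HasQuadraticApprox K f := by
  have hsecond : ∀ u, |f₂ u - f₂ 0| ≤ K * |u| ^ 1 :=
    abs_le_mul_abs_pow_succ_of_hasDerivAt (sub_self _) (fun u => (hf₂ u).sub_const _)
      (by simpa using hf₃)
  have hfirst : ∀ u, |f₁ u - (f₁ 0 + f₂ 0 * u)| ≤ K * |u| ^ 2 :=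
    abs_le_mul_abs_pow_succ_of_hasDerivAt (by simp)
      (fun u => (hf₁ u).sub (by simpa using ((hasDerivAt_id u).const_mul (f₂ 0)).const_add (f₁ 0)))
      hsecond
  refine ⟨f 0, f₁ 0, f₂ 0 / 2, abs_le_mul_abs_pow_succ_of_hasDerivAt (by simp)
    (fun u => (hf u).sub ?_) hfirst⟩
  have hquad := (((hasDerivAt_id u).const_mul (f₁ 0)).const_add (f 0)).add
    (((hasDerivAt_id u).pow 2).const_mul (f₂ 0 / 2))
  refine hquad.congr_deriv ?_
  simp only [id, Nat.cast_ofNat, Nat.add_one_sub_one, pow_one]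
  ring

lemma HasQuadraticApprox.const_mul_comp_mul {C : ℝ} {f : ℝ → ℝ} (hf : HasQuadraticApprox C f)
    (r β : ℝ) : HasQuadraticApprox (C * (|r| * |β| ^ 3)) fun t => r * f (β * t) := by
  obtain ⟨a, b, c, h⟩ := hf
  refine ⟨r * a, r * b * β, r * c * β ^ 2, fun t => ?_⟩
  calc |r * f (β * t) - (r * a + r * b * β * t + r * c * β ^ 2 * t ^ 2)|
      = |r| * |f (β * t) - (a + b * (β * t) + c * (β * t) ^ 2)| := by
        rw [← abs_mul]
        ring_nf
    _ ≤ |r| * (C * |β * t| ^ 3) := by gcongr; exact h _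
    _ = C * (|r| * |β| ^ 3) * |t| ^ 3 := by
        rw [abs_mul]
        ring

/-- The partition function of one spin `±1` in the field `u`, with weight `P` on spin up and `Q` on
spin down. Its derivative is `biasedCosh P (-Q)`. -/
def biasedCosh (P Q u : ℝ) : ℝ := P * Real.exp u + Q * Real.exp (-u)

/-- The mean of the spin whose partition function is `biasedCosh P Q u`. -/
def magnetization (P Q u : ℝ) : ℝ := biasedCosh P (-Q) u / biasedCosh P Q u

variable {P Q : ℝ}

lemma hasDerivAt_biasedCosh (P Q u : ℝ) :
    HasDerivAt (biasedCosh P Q) (biasedCosh P (-Q) u) u := by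
  have h := ((Real.hasDerivAt_exp u).const_mul P).add ((hasDerivAt_neg u).exp.const_mul Q)
  exact h.congr_deriv (by rw [biasedCosh]; ring)

lemma biasedCosh_pos (hP : 0 ≤ P) (hQ : 0 ≤ Q) (hPQ : 0 < P + Q) (u : ℝ) :
    0 < biasedCosh P Q u := by
  calc 0 < (P + Q) * min (Real.exp u) (Real.exp (-u)) := by positivity
    _ = P * min (Real.exp u) (Real.exp (-u)) + Q * min (Real.exp u) (Real.exp (-u)) := by ring
    _ ≤ biasedCosh P Q u :=
        add_le_add (mul_le_mul_of_nonneg_left (min_le_left _ _) hP)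
          (mul_le_mul_of_nonneg_left (min_le_right _ _) hQ)

lemma abs_magnetization_le_one (hP : 0 ≤ P) (hQ : 0 ≤ Q) (u : ℝ) : |magnetization P Q u| ≤ 1 := by
  have hup : 0 ≤ P * Real.exp u := by positivity
  have hdown : 0 ≤ Q * Real.exp (-u) := by positivity
  rw [magnetization, abs_div]
  refine div_le_one_of_le₀ ?_ (abs_nonneg _)
  rw [biasedCosh, biasedCosh, abs_of_nonneg (add_nonneg hup hdown), neg_mul]
  exact abs_le.mpr ⟨by linarith, by linarith⟩

lemma hasDerivAt_magnetization {u : ℝ} (h : biasedCosh P Q u ≠ 0) :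
    HasDerivAt (magnetization P Q) (1 - magnetization P Q u ^ 2) u := by
  have hquot := (hasDerivAt_biasedCosh P (-Q) u).div (hasDerivAt_biasedCosh P Q u) h
  rw [neg_neg] at hquot
  refine hquot.congr_deriv ?_
  rw [magnetization]
  field_simp

lemma hasQuadraticApprox_log_biasedCosh (hP : 0 ≤ P) (hQ : 0 ≤ Q) (hPQ : 0 < P + Q) :
    HasQuadraticApprox 2 fun u => Real.log (biasedCosh P Q u) := by
  have hZ (u : ℝ) : biasedCosh P Q u ≠ 0 := (biasedCosh_pos hP hQ hPQ u).ne'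
  refine hasQuadraticApprox_of_hasDerivAt (f₁ := magnetization P Q)
    (f₂ := fun u => 1 - magnetization P Q u ^ 2)
    (f₃ := fun u => -(2 * magnetization P Q u * (1 - magnetization P Q u ^ 2)))
    (fun u => (hasDerivAt_biasedCosh P Q u).log (hZ u))
    (fun u => hasDerivAt_magnetization (hZ u))
    (fun u => ((hasDerivAt_magnetization (hZ u)).pow 2 |>.const_sub 1).congr_deriv ?_)
    fun u => ?_
  · simp
  · have hm := abs_magnetization_le_one hP hQ u
    have hm2 : |1 - magnetization P Q u ^ 2| ≤ 1 := by
      have hsq := (sq_le_one_iff_abs_le_one _).mpr hm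
      exact abs_le.mpr ⟨by linarith, by linarith [sq_nonneg (magnetization P Q u)]⟩
    calc |-(2 * magnetization P Q u * (1 - magnetization P Q u ^ 2))|
        = 2 * (|magnetization P Q u| * |1 - magnetization P Q u ^ 2|) := by
          rw [abs_neg, abs_mul, abs_mul, abs_two, mul_assoc]
      _ ≤ 2 := by linarith [mul_le_one₀ hm (abs_nonneg _) hm2]

end Taylor

section Energy

open scoped Matrix

variable {ι B : Type*} [Fintype ι] {L : ι → ℝ≥0}

lemma dotProduct_le_dotProduct_add {v : ι → ℝ} (hv : ∀ i, |v i| ≤ L i) (x y : ι → ℝ) :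
    v ⬝ᵥ x ≤ v ⬝ᵥ y + ∑ i, L i * |x i - y i| := by
  rw [← sub_le_iff_le_add', ← dotProduct_sub]
  refine Finset.sum_le_sum fun i _ => (le_abs_self _).trans ?_
  rw [abs_mul]
  exact mul_le_mul_of_nonneg_right (hv i) (abs_nonneg _)

/-- The largest value of the linear form `x` on the family of vectors `s`: the ground state energy
of the couplings `x`. -/
def maxEnergy (s : B → ι → ℝ) (x : ι → ℝ) : ℝ := ⨆ b, s b ⬝ᵥ x

lemma dotProduct_le_maxEnergy [Finite B] (s : B → ι → ℝ) (b : B) (x : ι → ℝ) :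
    s b ⬝ᵥ x ≤ maxEnergy s x :=
  le_ciSup (f := fun b => s b ⬝ᵥ x) (Set.finite_range _).bddAbove b

lemma coordLipschitz_maxEnergy [Finite B] [Nonempty B] {s : B → ι → ℝ}
    (hs : ∀ b i, |s b i| ≤ L i) : CoordLipschitz L Finset.univ (maxEnergy s) :=
  .of_le fun x y => ciSup_le fun b =>
    (dotProduct_le_dotProduct_add (hs b) x y).trans (by grw [dotProduct_le_maxEnergy s b y])

variable [Fintype B] {s : B → ι → ℝ} {β : ℝ}

/-- The free energy at inverse temperature `β`: a smooth approximation of `maxEnergy s` from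
above. -/
def freeEnergy (s : B → ι → ℝ) (β : ℝ) (x : ι → ℝ) : ℝ :=
  β⁻¹ * Real.log (∑ b, Real.exp (β * (s b ⬝ᵥ x)))

lemma freeEnergy_le_add_of_forall_dotProduct_le [Nonempty B] (hβ : 0 < β) {x y : ι → ℝ} {D : ℝ}
    (h : ∀ b, s b ⬝ᵥ x ≤ s b ⬝ᵥ y + D) : freeEnergy s β x ≤ freeEnergy s β y + D := by
  have hpos (z : ι → ℝ) : 0 < ∑ b, Real.exp (β * (s b ⬝ᵥ z)) := by positivity
  have hsum : ∑ b, Real.exp (β * (s b ⬝ᵥ x))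
      ≤ (∑ b, Real.exp (β * (s b ⬝ᵥ y))) * Real.exp (β * D) := by
    rw [Finset.sum_mul]
    gcongr with b
    rw [← Real.exp_add, ← mul_add]
    gcongr
    exact h b
  calc freeEnergy s β x
      ≤ β⁻¹ * Real.log ((∑ b, Real.exp (β * (s b ⬝ᵥ y))) * Real.exp (β * D)) := by
        unfold freeEnergy
        gcongr
    _ = freeEnergy s β y + D := by
        rw [Real.log_mul (hpos y).ne' (Real.exp_pos _).ne', Real.log_exp, freeEnergy, mul_add,
          inv_mul_cancel_left₀ hβ.ne']

lemma coordLipschitz_freeEnergy [Nonempty B] (hs : ∀ b i, |s b i| ≤ L i) (hβ : 0 < β) :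
    CoordLipschitz L Finset.univ (freeEnergy s β) :=
  .of_le fun x y => freeEnergy_le_add_of_forall_dotProduct_le hβ fun b =>
    dotProduct_le_dotProduct_add (hs b) x y

lemma maxEnergy_le_freeEnergy [Nonempty B] (hβ : 0 < β) (x : ι → ℝ) :
    maxEnergy s x ≤ freeEnergy s β x := by
  refine ciSup_le fun b => ?_
  rw [freeEnergy, le_inv_mul_iff₀ hβ, Real.le_log_iff_exp_le (by positivity)]
  exact Finset.single_le_sum (f := fun b => Real.exp (β * (s b ⬝ᵥ x)))
    (fun _ _ => (Real.exp_pos _).le) (Finset.mem_univ b)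

lemma freeEnergy_le_maxEnergy_add [Nonempty B] (hβ : 0 < β) (x : ι → ℝ) :
    freeEnergy s β x ≤ maxEnergy s x + β⁻¹ * Real.log (Fintype.card B) := by
  have h0 : freeEnergy s β 0 = β⁻¹ * Real.log (Fintype.card B) := by simp [freeEnergy]
  rw [add_comm, ← h0]
  exact freeEnergy_le_add_of_forall_dotProduct_le hβ fun b => by
    simpa using dotProduct_le_maxEnergy s b x

variable [DecidableEq ι]

lemma dotProduct_update (v x : ι → ℝ) (i : ι) (t : ℝ) :
    v ⬝ᵥ Function.update x i t = v ⬝ᵥ Function.update x i 0 + v i * t := by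
  have hsplit : Function.update x i t = Function.update x i 0 + Pi.single i t := by
    ext j
    by_cases h : j = i <;> simp [h]
  rw [hsplit, dotProduct_add, dotProduct_single]

lemma hasQuadraticApprox_freeEnergy_update [Nonempty B] (hβ : 0 < β) (x : ι → ℝ) {i : ι}
    (hs : ∀ b, |s b i| = 1) :
    HasQuadraticApprox (2 * β ^ 2) fun t => freeEnergy s β (Function.update x i t) := by
  set w : B → ℝ := fun b => Real.exp (β * (s b ⬝ᵥ Function.update x i 0)) with hw
  have hsplit (t : ℝ) : ∑ b, Real.exp (β * (s b ⬝ᵥ Function.update x i t))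
      = biasedCosh (∑ b with s b i = 1, w b) (∑ b with ¬ s b i = 1, w b) (β * t) := by
    rw [biasedCosh, Finset.sum_mul, Finset.sum_mul,
      ← Finset.sum_filter_add_sum_filter_not Finset.univ fun b => s b i = 1]
    congr 1 <;> refine Finset.sum_congr rfl fun b hb => ?_ <;>
      rw [dotProduct_update, hw, ← Real.exp_add]
    · rw [(Finset.mem_filter.mp hb).2]
      ring_nf
    · rw [(eq_or_eq_neg_of_abs_eq (hs b)).resolve_left (Finset.mem_filter.mp hb).2]
      ring_nf
  have hpos : 0 < ∑ b with s b i = 1, w b + ∑ b with ¬ s b i = 1, w b := by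
    rw [Finset.sum_filter_add_sum_filter_not]
    positivity
  have hlog := (hasQuadraticApprox_log_biasedCosh (Finset.sum_nonneg fun b _ => (Real.exp_pos _).le)
    (Finset.sum_nonneg fun b _ => (Real.exp_pos _).le) hpos).const_mul_comp_mul β⁻¹ β
  have hconst : 2 * (|β⁻¹| * |β| ^ 3) = 2 * β ^ 2 := by
    rw [abs_of_pos hβ, abs_of_pos (inv_pos.mpr hβ)]
    field_simp
  simpa only [freeEnergy, hsplit, hconst] using hlog

end Energy

section Comparison

variable {ι B : Type*} [Fintype ι] [Fintype B] [Nonempty B] {s : B → ι → ℝ} {β : ℝ}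

lemma integral_freeEnergy_mem_Icc (hs : ∀ b i, |s b i| = 1) (hβ : 0 < β)
    (μ : ι → Measure ℝ) [∀ i, IsProbabilityMeasure (μ i)] (hμ : ∀ i, Integrable id (μ i)) :
    ∫ x, freeEnergy s β x ∂Measure.pi μ
      ∈ Set.Icc (∫ x, maxEnergy s x ∂Measure.pi μ)
        (∫ x, maxEnergy s x ∂Measure.pi μ + β⁻¹ * Real.log (Fintype.card B)) := by
  have hs1 : ∀ b i, |s b i| ≤ (1 : ℝ≥0) := fun b i => (hs b i).le
  have hmax := (coordLipschitz_maxEnergy hs1).integrable_pi μ hμ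
  have hfree := (coordLipschitz_freeEnergy hs1 hβ).integrable_pi μ hμ
  refine ⟨integral_mono hmax hfree (maxEnergy_le_freeEnergy hβ), ?_⟩
  refine (integral_mono hfree (hmax.add (integrable_const _))
    (freeEnergy_le_maxEnergy_add hβ)).trans_eq ?_
  rw [integral_add' hmax (integrable_const _)]
  simp

theorem abs_integral_maxEnergy_sub_le (hs : ∀ b i, |s b i| = 1) (hβ : 0 < β)
    (μ ν : ι → Measure ℝ) [∀ i, IsProbabilityMeasure (μ i)] [∀ i, IsProbabilityMeasure (ν i)]
    (hmatch : ∀ i, MatchTwoMoments (μ i) (ν i)) :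
    |∫ x, maxEnergy s x ∂Measure.pi μ - ∫ x, maxEnergy s x ∂Measure.pi ν|
      ≤ β⁻¹ * Real.log (Fintype.card B)
        + ∑ i, 2 * β ^ 2 * (∫ t, |t| ^ 3 ∂μ i + ∫ t, |t| ^ 3 ∂ν i) := by
  classical
  have hreplace := abs_integral_pi_sub_integral_pi_le
    (coordLipschitz_freeEnergy (L := 1) (fun b i => (hs b i).le) hβ)
    (fun x i => hasQuadraticApprox_freeEnergy_update hβ x fun b => hs b i) μ ν hmatch
  obtain ⟨hμ, hμ'⟩ := integral_freeEnergy_mem_Icc hs hβ μ fun i =>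
    (hmatch i).memLp_left.integrable (by norm_num)
  obtain ⟨hν, hν'⟩ := integral_freeEnergy_mem_Icc hs hβ ν fun i =>
    (hmatch i).memLp_right.integrable (by norm_num)
  rw [abs_sub_le_iff] at hreplace ⊢
  constructor <;> linarith [hreplace.1, hreplace.2]

end Comparison

section BalancedSigns

open scoped Matrix

lemma maxEnergy_mul_add_const {ι B : Type*} [Fintype ι] [Finite B] [Nonempty B] {s : B → ι → ℝ}
    {κ : ℝ} (hs : ∀ b, ∑ i, s b i = κ) {a : ℝ} (ha : 0 ≤ a) (r : ℝ) (x : ι → ℝ) :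
    maxEnergy s (fun i => a * x i + r) = a * maxEnergy s x + r * κ := by
  have hform (b : B) : s b ⬝ᵥ (fun i => a * x i + r) = a * (s b ⬝ᵥ x) + r * κ := by
    simp only [dotProduct, mul_add, Finset.sum_add_distrib, ← hs b, Finset.mul_sum,
      mul_left_comm, mul_comm]
  simp only [maxEnergy, hform]
  rw [Real.mul_iSup_of_nonneg ha, ciSup_add (Set.finite_range _).bddAbove]

lemma sum_sum_eq_sum_diag_add_two_mul_sum_lt {α : Type*} [Fintype α] [LinearOrder α]
    {f : α → α → ℝ} (hf : ∀ i j, f i j = f j i) :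
    ∑ i, ∑ j, f i j = ∑ i, f i i + 2 * ∑ q : {q : α × α // q.1 < q.2}, f q.1.1 q.1.2 := by
  have hupper : ∑ q : {q : α × α // q.1 < q.2}, f q.1.1 q.1.2
      = ∑ i, ∑ j, if i < j then f i j else 0 := by
    rw [← Finset.sum_subtype (Finset.univ.filter fun q : α × α => q.1 < q.2) (by simp)
      fun q => f q.1 q.2, Finset.sum_filter, Fintype.sum_prod_type]
  have hlower : ∑ i, ∑ j, (if j < i then f i j else 0)
      = ∑ i, ∑ j, if i < j then f i j else 0 := by
    rw [Finset.sum_comm]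
    simp only [hf]
  have hdiag : ∑ i, f i i = ∑ i, ∑ j, if i = j then f i j else 0 := by simp
  have htrichotomy (i j : α) : f i j = (if i = j then f i j else 0)
      + ((if j < i then f i j else 0) + if i < j then f i j else 0) := by
    rcases lt_trichotomy i j with h | rfl | h
    · simp [h, h.ne, h.not_gt]
    · simp
    · simp [h, h.ne', h.not_gt]
  calc ∑ i, ∑ j, f i j
      = ∑ i, ∑ j, ((if i = j then f i j else 0)
          + ((if j < i then f i j else 0) + if i < j then f i j else 0)) :=
        Finset.sum_congr rfl fun i _ => Finset.sum_congr rfl fun j _ => htrichotomy i j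
    _ = _ := by
        simp only [Finset.sum_add_distrib]
        rw [hlower, ← hdiag, ← hupper, two_mul]

/-- The balanced hypercube `Σ_N`, as the index type of the supremum in `balMax`. -/
abbrev Bisection (N : ℕ) : Type :=
  {b : Fin N → Bool // 2 * (Finset.univ.filter (fun i => b i = true)).card = N}

/-- The possible edges of a graph on `Fin N`, as increasing pairs of vertices. -/
abbrev UpperPair (N : ℕ) : Type := {q : Fin N × Fin N // q.1 < q.2}

/-- The entries of a matrix above the diagonal. -/
def upperEntries {N : ℕ} (A : Fin N → Fin N → ℝ) (q : UpperPair N) : ℝ := A q.1.1 q.1.2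

/-- The sign `σ_i σ_j` that a balanced `σ` gives to a pair `i < j`: `+1` inside a block of the
bisection, `-1` across. -/
def pairSign {N : ℕ} (b : Bisection N) (q : UpperPair N) : ℝ :=
  signVec b.1 q.1.1 * signVec b.1 q.1.2

variable {N : ℕ}

instance nonempty_bisection_two_mul (n : ℕ) : Nonempty (Bisection (2 * n)) :=
  ⟨fun i => decide (i.1 < n), by
    simp only [decide_eq_true_eq, Fin.card_filter_val_lt]
    omega⟩

lemma signVec_mul_self (b : Fin N → Bool) (i : Fin N) : signVec b i * signVec b i = 1 := by
  by_cases h : b i <;> simp [signVec, h]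

lemma abs_pairSign (b : Bisection N) (q : UpperPair N) : |pairSign b q| = 1 := by
  simp only [pairSign, signVec]
  split_ifs <;> simp

lemma sum_signVec_bisection (b : Bisection N) : ∑ i, signVec b.1 i = 0 := by
  have hsign (i : Fin N) : signVec b.1 i = 2 * (if b.1 i = true then (1 : ℝ) else 0) - 1 := by
    rw [signVec]
    split_ifs <;> norm_num
  have hcard : 2 * ((Finset.univ.filter fun i => b.1 i = true).card : ℝ) = N := by
    exact_mod_cast b.2
  simp only [hsign, Finset.sum_sub_distrib, ← Finset.mul_sum, Finset.sum_boole, hcard,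
    Finset.sum_const, Finset.card_univ, Fintype.card_fin, nsmul_eq_mul, mul_one, sub_self]

lemma sum_signVec_mul_eq {A : Fin N → Fin N → ℝ} (hA : ∀ i j, A i j = A j i) (b : Bisection N) :
    ∑ i, ∑ j, signVec b.1 i * A i j * signVec b.1 j
      = ∑ i, A i i + 2 * (pairSign b ⬝ᵥ upperEntries A) := by
  have hdiag (i : Fin N) : signVec b.1 i * A i i * signVec b.1 i = A i i := by
    rw [mul_right_comm, signVec_mul_self, one_mul]
  rw [sum_sum_eq_sum_diag_add_two_mul_sum_lt fun i j => by rw [hA i j]; ring]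
  simp only [hdiag, dotProduct, pairSign, upperEntries, mul_right_comm]

lemma sum_pairSign (b : Bisection N) : ∑ q, pairSign b q = -(N / 2) := by
  have hsplit := sum_signVec_mul_eq (A := fun _ _ => 1) (fun _ _ => rfl) b
  have hones : pairSign b ⬝ᵥ upperEntries (fun _ _ => 1) = ∑ q, pairSign b q := by
    simp only [dotProduct, upperEntries, mul_one]
  simp only [mul_one, ← Finset.mul_sum, sum_signVec_bisection, mul_zero,
    Finset.sum_const_zero, hones, Finset.sum_const, Finset.card_univ, Fintype.card_fin,
    nsmul_eq_mul] at hsplit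
  linarith

lemma balMax_eq [Nonempty (Bisection N)] {A : Fin N → Fin N → ℝ} (hA : ∀ i j, A i j = A j i) :
    balMax N A = ∑ i, A i i + 2 * maxEnergy pairSign (upperEntries A) := by
  simp only [balMax, maxEnergy, sum_signVec_mul_eq hA]
  rw [Real.mul_iSup_of_nonneg zero_le_two, add_ciSup (Set.finite_range _).bddAbove]

lemma card_upperPair_le (N : ℕ) : (Fintype.card (UpperPair N) : ℝ) ≤ (N : ℝ) ^ 2 := by
  have hle := Fintype.card_subtype_le fun q : Fin N × Fin N => q.1 < q.2
  rw [Fintype.card_prod, Fintype.card_fin, ← sq] at hle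
  exact_mod_cast hle

lemma log_card_bisection_le (N : ℕ) [Nonempty (Bisection N)] :
    Real.log (Fintype.card (Bisection N)) ≤ N := by
  have hcard : (Fintype.card (Bisection N) : ℝ) ≤ 2 ^ N := by
    exact_mod_cast (Fintype.card_subtype_le _).trans_eq (by simp)
  calc Real.log (Fintype.card (Bisection N))
      ≤ Real.log (2 ^ N) := Real.log_le_log (by exact_mod_cast Fintype.card_pos) hcard
    _ = N * Real.log 2 := Real.log_pow _ _
    _ ≤ N := mul_le_of_le_one_right N.cast_nonneg (by linarith [Real.log_two_lt_d9])

end BalancedSigns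

section Laws

lemma memLp_id_bernoulliMeasure (x y : ℝ) (p : unitInterval) (r : ℝ≥0∞) :
    MemLp id r (bernoulliMeasure x y p) := by
  have hmap : bernoulliMeasure x y p
      = (bernoulliMeasure true false p).map fun b => if b then x else y := by
    rw [map_bernoulliMeasure]
    simp
  rw [hmap, memLp_map_measure_iff (by fun_prop) (by fun_prop)]
  exact .of_discrete

lemma hasLaw_bernoulliMeasure_of_bool {Ω : Type*} [MeasurableSpace Ω] {μ : Measure Ω}
    [IsProbabilityMeasure μ] {X : Ω → Bool} (hX : Measurable X) {p : unitInterval}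
    (hp : μ {ω | X ω = true} = ENNReal.ofReal p) : HasLaw X (bernoulliMeasure true false p) μ := by
  have hprob := Measure.isProbabilityMeasure_map (μ := μ) hX.aemeasurable
  have htrue : (μ.map X).real {true} = p := by
    rw [map_measureReal_apply hX (measurableSet_singleton _), measureReal_def]
    exact (congrArg ENNReal.toReal hp).trans (ENNReal.toReal_ofReal p.2.1)
  have hfalse : (μ.map X).real {false} = 1 - p := by
    rw [← htrue, ← probReal_compl_eq_one_sub (measurableSet_singleton _)]
    congr 1
    ext b
    simp
  refine ⟨hX.aemeasurable, Measure.ext_of_measureReal_singleton fun b => ?_⟩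
  cases b <;> simp [htrue, hfalse]

/-- The law of `(ε - p) / r` for a Bernoulli variable `ε` of parameter `p`. -/
def centeredBernoulli (p : unitInterval) (r : ℝ) : Measure ℝ :=
  bernoulliMeasure ((1 - p) / r) ((0 - p) / r) p

instance isProbabilityMeasure_centeredBernoulli (p : unitInterval) (r : ℝ) :
    IsProbabilityMeasure (centeredBernoulli p r) :=
  inferInstanceAs (IsProbabilityMeasure (bernoulliMeasure _ _ _))

variable (p : unitInterval) (r : ℝ)

lemma integral_id_centeredBernoulli : ∫ t, t ∂centeredBernoulli p r = 0 := by
  rw [centeredBernoulli, integral_bernoulliMeasure]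
  simp only [smul_eq_mul]
  ring

lemma integral_sq_centeredBernoulli :
    ∫ t, t ^ 2 ∂centeredBernoulli p r = p * (1 - p) / r ^ 2 := by
  rw [centeredBernoulli, integral_bernoulliMeasure]
  simp only [smul_eq_mul]
  ring

lemma variance_id_centeredBernoulli : Var[id; centeredBernoulli p r] = p * (1 - p) / r ^ 2 := by
  rw [variance_of_integral_eq_zero aemeasurable_id (integral_id_centeredBernoulli p r)]
  exact integral_sq_centeredBernoulli p r

lemma integral_abs_cube_centeredBernoulli_le {r : ℝ} (hr : 0 < r) :
    ∫ t, |t| ^ 3 ∂centeredBernoulli p r ≤ p * (1 - p) / r ^ 3 := by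
  obtain ⟨p, hp0, hp1⟩ := p
  have hp1' : 0 ≤ 1 - p := sub_nonneg.mpr hp1
  have hcube : p * (1 - p) ^ 3 + (1 - p) * p ^ 3 ≤ p * (1 - p) := by
    nlinarith [mul_nonneg hp0 hp1', mul_nonneg (mul_nonneg hp0 hp1') (mul_nonneg hp0 hp1')]
  rw [centeredBernoulli, integral_bernoulliMeasure]
  simp only [smul_eq_mul, abs_div, abs_of_nonneg hp1', abs_of_pos hr, zero_sub, abs_neg,
    abs_of_nonneg hp0, div_pow, mul_div_assoc', ← add_div]
  gcongr

lemma integral_sq_gaussianReal (v : ℝ≥0) : ∫ t, t ^ 2 ∂gaussianReal 0 v = v := by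
  have hvar := variance_id_gaussianReal (μ := 0) (v := v)
  rwa [variance_of_integral_eq_zero (by fun_prop) (by simp)] at hvar

lemma integral_abs_cube_gaussianReal (v : ℝ≥0) :
    ∫ t, |t| ^ 3 ∂gaussianReal 0 v = √v ^ 3 * ∫ t, |t| ^ 3 ∂gaussianReal 0 1 := by
  have hscale : gaussianReal 0 v = (gaussianReal 0 1).map fun t => √v * t := by
    rw [gaussianReal_map_const_mul, mul_zero, mul_one]
    congr 1
    ext
    simp
  rw [hscale, integral_map (by fun_prop) (by fun_prop), ← integral_const_mul]
  simp only [abs_mul, mul_pow, abs_of_nonneg (Real.sqrt_nonneg _)]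

lemma matchTwoMoments_centeredBernoulli_gaussianReal {v : ℝ≥0}
    (hv : p * (1 - p) / r ^ 2 = (v : ℝ)) :
    MatchTwoMoments (centeredBernoulli p r) (gaussianReal 0 v) where
  memLp_left := memLp_id_bernoulliMeasure _ _ p 3
  memLp_right := memLp_id_gaussianReal' 3 (by norm_num)
  mean_eq := by rw [integral_id_centeredBernoulli, integral_id_gaussianReal]
  sq_eq := by rw [integral_sq_centeredBernoulli, integral_sq_gaussianReal, hv]

end Laws

section GaussianOrthogonalEnsemble

variable {N : ℕ}

/-- The expected ground state energy of the bisections of `N` points under independent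
`N(0, 1/N)` couplings. -/
def gaussianGroundState (N : ℕ) : ℝ :=
  ∫ x, maxEnergy (pairSign (N := N)) x ∂Measure.pi fun _ => gaussianReal 0 (1 / (N : ℝ≥0))

lemma coordLipschitz_maxEnergy_pairSign [Nonempty (Bisection N)] :
    CoordLipschitz 1 Finset.univ (maxEnergy (pairSign (N := N))) :=
  coordLipschitz_maxEnergy fun b q => (abs_pairSign b q).le

lemma integrable_comp_of_hasLaw {Ω 𝓧 : Type*} [MeasurableSpace Ω] [MeasurableSpace 𝓧]
    {μ : Measure Ω} {ν : Measure 𝓧} {X : Ω → 𝓧} {f : 𝓧 → ℝ} (hX : HasLaw X ν μ)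
    (hf : Integrable f ν) : Integrable (fun ω => f (X ω)) μ :=
  (hX.map_eq ▸ hf).comp_aemeasurable hX.aemeasurable

variable {Ω : Type*} [MeasurableSpace Ω] {μ : Measure Ω} {A : Ω → Fin N → Fin N → ℝ}

lemma IsGOE.hasLaw_upperEntries (hA : IsGOE μ N A) :
    HasLaw (fun ω => upperEntries (A ω))
      (Measure.pi fun _ => gaussianReal 0 (1 / (N : ℝ≥0))) μ := by
  obtain ⟨hmeas, -, hindep, -, hoffDiag⟩ := hA
  have hinj : Function.Injective fun q : UpperPair N =>
      (⟨q.1, q.2.le⟩ : {q : Fin N × Fin N // q.1 ≤ q.2}) :=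
    fun _ _ h => Subtype.ext (Subtype.mk.inj h)
  exact (hindep.precomp hinj).hasLaw_pi fun q =>
    ⟨(hmeas _ _).aemeasurable, hoffDiag _ _ q.2⟩

lemma IsGOE.hasLaw_diag (hA : IsGOE μ N A) (i : Fin N) :
    HasLaw (fun ω => A ω i i) (gaussianReal 0 (2 / (N : ℝ≥0))) μ :=
  ⟨(hA.1 i i).aemeasurable, hA.2.2.2.1 i⟩

lemma IsGOE.integral_balMax [Nonempty (Bisection N)] (hA : IsGOE μ N A) :
    ∫ ω, balMax N (A ω) ∂μ = 2 * gaussianGroundState N := by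
  have hdiag_int (i : Fin N) : Integrable (fun ω => A ω i i) μ :=
    integrable_comp_of_hasLaw (hA.hasLaw_diag i)
      ((memLp_id_gaussianReal' 1 ENNReal.one_ne_top).integrable le_rfl)
  have hdiag_mean (i : Fin N) : ∫ ω, A ω i i ∂μ = 0 := by
    rw [(hA.hasLaw_diag i).integral_eq, integral_id_gaussianReal]
  have hmax_int : Integrable (maxEnergy (pairSign (N := N)))
      (Measure.pi fun _ => gaussianReal 0 (1 / (N : ℝ≥0))) :=
    coordLipschitz_maxEnergy_pairSign.integrable_pi _ fun _ =>
      (memLp_id_gaussianReal' 1 ENNReal.one_ne_top).integrable le_rfl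
  have hmax : ∫ ω, maxEnergy pairSign (upperEntries (A ω)) ∂μ = gaussianGroundState N :=
    hA.hasLaw_upperEntries.integral_comp hmax_int.1
  have hmax_int' : Integrable (fun ω => maxEnergy pairSign (upperEntries (A ω))) μ :=
    integrable_comp_of_hasLaw hA.hasLaw_upperEntries hmax_int
  simp only [balMax_eq (hA.2.1 _)]
  rw [integral_add (integrable_finsetSum _ fun i _ => hdiag_int i) (hmax_int'.const_mul 2),
    integral_finsetSum _ fun i _ => hdiag_int i, integral_const_mul, hmax]
  simp only [hdiag_mean, Finset.sum_const_zero, zero_add]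

end GaussianOrthogonalEnsemble

section ErdosRenyi

/-- `e` is the random edge indicator of an Erdős–Rényi graph on `Fin N` with edge probability
`p`: symmetric, without loops, and with independent edges. -/
structure IsErdosRenyi {Ω : Type*} [MeasurableSpace Ω] {N : ℕ} (μ : Measure Ω) (p : unitInterval)
    (e : Ω → Fin N → Fin N → Bool) : Prop where
  measurable (i j : Fin N) : Measurable fun ω => e ω i j
  symm (ω : Ω) (i j : Fin N) : e ω i j = e ω j i
  loopless (ω : Ω) (i : Fin N) : e ω i i = false
  indep : iIndepFun (fun (q : UpperPair N) ω => e ω q.1.1 q.1.2) μ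
  edge_prob (i j : Fin N) (hij : i < j) : μ {ω | e ω i j = true} = ENNReal.ofReal p

/-- The adjacency matrix of a graph given by its edge indicator. -/
def adjacency {N : ℕ} (e : Fin N → Fin N → Bool) (i j : Fin N) : ℝ := if e i j then 1 else 0

/-- The normalization `√(N p (1 - p))`, the standard deviation of an edge indicator times `√N`. -/
def edgeScale (N : ℕ) (p : unitInterval) : ℝ := √(N * p * (1 - p))

/-- The centered edge indicators, rescaled so as to have variance `1 / N`. -/
def standardizedEdges {N : ℕ} (p : unitInterval) (e : Fin N → Fin N → Bool) (q : UpperPair N) : ℝ :=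
  (upperEntries (adjacency e) q - p) / edgeScale N p

/-- The expected ground state energy of the bisections of `N` points under independent
standardized edge indicators. -/
def bernoulliGroundState (N : ℕ) (p : unitInterval) : ℝ :=
  ∫ x, maxEnergy (pairSign (N := N)) x ∂Measure.pi fun _ => centeredBernoulli p (edgeScale N p)

variable {N : ℕ} {p : unitInterval}

lemma mul_one_sub_eq_edgeScale_sq_div (hN : N ≠ 0) :
    (p : ℝ) * (1 - p) = edgeScale N p ^ 2 / N := by
  have hnonneg : (0 : ℝ) ≤ N * p * (1 - p) :=
    mul_nonneg (mul_nonneg N.cast_nonneg p.2.1) (sub_nonneg.mpr p.2.2)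
  rw [edgeScale, Real.sq_sqrt hnonneg]
  field

lemma ne_zero_of_edgeScale_pos (hs : 0 < edgeScale N p) : N ≠ 0 := by
  rintro rfl
  simp [edgeScale] at hs

lemma mul_one_sub_div_edgeScale_sq (hs : 0 < edgeScale N p) :
    (p : ℝ) * (1 - p) / edgeScale N p ^ 2 = 1 / N := by
  rw [mul_one_sub_eq_edgeScale_sq_div (ne_zero_of_edgeScale_pos hs)]
  field

lemma IsErdosRenyi.hasLaw_standardizedEdges {Ω : Type*} [MeasurableSpace Ω] {μ : Measure Ω}
    [IsProbabilityMeasure μ] {e : Ω → Fin N → Fin N → Bool} (he : IsErdosRenyi μ p e) :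
    HasLaw (fun ω => standardizedEdges p (e ω))
      (Measure.pi fun _ => centeredBernoulli p (edgeScale N p)) μ := by
  let standardize (b : Bool) : ℝ := ((if b then 1 else 0) - p) / edgeScale N p
  have hstandardize : HasLaw standardize (centeredBernoulli p (edgeScale N p))
      (bernoulliMeasure true false p) :=
    ⟨by fun_prop, by rw [map_bernoulliMeasure]; simp [standardize, centeredBernoulli]⟩
  exact (he.indep.comp (fun _ => standardize) fun _ => by fun_prop).hasLaw_pi fun q =>
    hstandardize.comp
      (hasLaw_bernoulliMeasure_of_bool (he.measurable _ _) (he.edge_prob _ _ q.2))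

lemma balMax_adjacency_div_edgeScale [Nonempty (Bisection N)] {e : Fin N → Fin N → Bool}
    (hsymm : ∀ i j, e i j = e j i) (hloopless : ∀ i, e i i = false)
    (hs : 0 < edgeScale N p) :
    1 / (2 * (N : ℝ)) * balMax N (adjacency e) / edgeScale N p
      = maxEnergy pairSign (standardizedEdges p e) / N - p / (2 * edgeScale N p) := by
  have hN : (N : ℝ) ≠ 0 := Nat.cast_ne_zero.mpr (ne_zero_of_edgeScale_pos hs)
  have hentries : upperEntries (adjacency e)
      = fun q => edgeScale N p * standardizedEdges p e q + p := by
    funext q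
    rw [standardizedEdges]
    field
  have hdiag (i : Fin N) : adjacency e i i = 0 := by simp [adjacency, hloopless]
  rw [balMax_eq fun i j => by simp only [adjacency, hsymm i j], hentries,
    maxEnergy_mul_add_const sum_pairSign hs.le]
  simp only [hdiag, Finset.sum_const_zero, zero_add]
  field

end ErdosRenyi

section SparseGraphs

variable {N : ℕ} {p : unitInterval}

theorem abs_bernoulliGroundState_sub_gaussianGroundState_le [Nonempty (Bisection N)] {β : ℝ}
    (hβ : 0 < β) (hs : 0 < edgeScale N p) :
    |bernoulliGroundState N p - gaussianGroundState N|
      ≤ N * (β⁻¹ + 2 * β ^ 2 *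
          ((edgeScale N p)⁻¹ + (∫ t, |t| ^ 3 ∂gaussianReal 0 1) / √N)) := by
  set s := edgeScale N p
  set κ := ∫ t, |t| ^ 3 ∂gaussianReal 0 1
  have hN : 0 < (N : ℝ) := Nat.cast_pos.mpr (ne_zero_of_edgeScale_pos hs).bot_lt
  have : 0 ≤ κ := integral_nonneg fun t => by positivity
  have hmatch : MatchTwoMoments (centeredBernoulli p s) (gaussianReal 0 (1 / (N : ℝ≥0))) :=
    matchTwoMoments_centeredBernoulli_gaussianReal p s <| by
      rw [mul_one_sub_div_edgeScale_sq hs]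
      simp
  have hbernoulli : ∫ t, |t| ^ 3 ∂centeredBernoulli p s ≤ s⁻¹ / N :=
    (integral_abs_cube_centeredBernoulli_le p hs).trans_eq <| by
      rw [mul_one_sub_eq_edgeScale_sq_div (ne_zero_of_edgeScale_pos hs)]
      field
  have hgaussian : ∫ t, |t| ^ 3 ∂gaussianReal 0 (1 / (N : ℝ≥0)) = κ / √N / N := by
    have hsqrt : √N ^ 3 = √N * N := by rw [pow_succ', Real.sq_sqrt hN.le]
    rw [integral_abs_cube_gaussianReal]
    simp only [NNReal.coe_div, NNReal.coe_one, NNReal.coe_natCast, Real.sqrt_div zero_le_one,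
      Real.sqrt_one, div_pow, one_pow, hsqrt]
    ring
  calc |bernoulliGroundState N p - gaussianGroundState N|
      ≤ β⁻¹ * Real.log (Fintype.card (Bisection N))
          + ∑ _q : UpperPair N, 2 * β ^ 2 * (∫ t, |t| ^ 3 ∂centeredBernoulli p s
            + ∫ t, |t| ^ 3 ∂gaussianReal 0 (1 / (N : ℝ≥0))) :=
        abs_integral_maxEnergy_sub_le abs_pairSign hβ _ _ fun _ => hmatch
    _ ≤ β⁻¹ * N + ∑ _q : UpperPair N, 2 * β ^ 2 * (s⁻¹ / N + κ / √N / N) := by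
        rw [hgaussian]
        gcongr
        exact log_card_bisection_le N
    _ ≤ β⁻¹ * N + (N : ℝ) ^ 2 * (2 * β ^ 2 * (s⁻¹ / N + κ / √N / N)) := by
        rw [Finset.sum_const, Finset.card_univ, nsmul_eq_mul]
        gcongr
        exact card_upperPair_le N
    _ = N * (β⁻¹ + 2 * β ^ 2 * (s⁻¹ + κ / √N)) := by field

lemma tendsto_bernoulliGroundState_sub_gaussianGroundState_div {ι : Type*} {l : Filter ι}
    {N : ι → ℕ} [∀ k, Nonempty (Bisection (N k))] {p : ι → unitInterval}
    (hN : Tendsto N l atTop) (hs : Tendsto (fun k => edgeScale (N k) (p k)) l atTop) :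
    Tendsto (fun k => (bernoulliGroundState (N k) (p k) - gaussianGroundState (N k)) / N k) l
      (nhds 0) := by
  set κ := ∫ t, |t| ^ 3 ∂gaussianReal 0 1
  have hsqrt : Tendsto (fun k => √(N k : ℝ)) l atTop :=
    Real.tendsto_sqrt_atTop.comp (tendsto_natCast_atTop_atTop.comp hN)
  refine Metric.tendsto_nhds.mpr fun ε hε => ?_
  have hβ : 0 < 2 / ε := by positivity
  have herror : Tendsto (fun k => (2 / ε)⁻¹ + 2 * (2 / ε) ^ 2 *
      ((edgeScale (N k) (p k))⁻¹ + κ / √(N k))) l (nhds (ε / 2)) := by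
    simpa using ((hs.inv_tendsto_atTop.add (hsqrt.const_div_atTop κ)).const_mul
      (2 * (2 / ε) ^ 2)).const_add (2 / ε)⁻¹
  filter_upwards [herror.eventually_lt_const (half_lt_self hε), hs.eventually_gt_atTop 0]
    with k hk hsk
  have hNk : 0 < (N k : ℝ) := Nat.cast_pos.mpr (ne_zero_of_edgeScale_pos hsk).bot_lt
  rw [dist_zero_right, Real.norm_eq_abs, abs_div, Nat.abs_cast]
  refine lt_of_le_of_lt ?_ hk
  rw [div_le_iff₀' hNk]
  exact abs_bernoulliGroundState_sub_gaussianGroundState_le hβ hsk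

lemma variance_maxEnergy_centeredBernoulli_le [Nonempty (Bisection N)] (hs : 0 < edgeScale N p) :
    Var[maxEnergy (pairSign (N := N));
      Measure.pi fun _ => centeredBernoulli p (edgeScale N p)] ≤ N := by
  calc Var[maxEnergy (pairSign (N := N));
        Measure.pi fun _ => centeredBernoulli p (edgeScale N p)]
      ≤ ∑ _q : UpperPair N, 1 ^ 2 * Var[id; centeredBernoulli p (edgeScale N p)] :=
        coordLipschitz_maxEnergy_pairSign.variance_pi_le _ fun _ =>
          memLp_id_bernoulliMeasure _ _ p 2
    _ = Fintype.card (UpperPair N) * (1 / N : ℝ) := by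
        rw [variance_id_centeredBernoulli, mul_one_sub_div_edgeScale_sq hs,
          Finset.sum_const, Finset.card_univ, nsmul_eq_mul, one_pow, one_mul]
    _ ≤ (N : ℝ) ^ 2 * (1 / N) := by
        gcongr
        exact card_upperPair_le N
    _ = N := by
        have := ne_zero_of_edgeScale_pos hs
        field

lemma IsErdosRenyi.measure_le_abs_maxEnergy_sub_le {Ω : Type*} [MeasurableSpace Ω]
    {μ : Measure Ω} [IsProbabilityMeasure μ] {e : Ω → Fin N → Fin N → Bool}
    [Nonempty (Bisection N)] (he : IsErdosRenyi μ p e) (hs : 0 < edgeScale N p) {δ : ℝ}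
    (hδ : 0 < δ) :
    μ {ω | δ ≤ |maxEnergy pairSign (standardizedEdges p (e ω)) / N - bernoulliGroundState N p / N|}
      ≤ ENNReal.ofReal ((δ ^ 2)⁻¹ / N) := by
  have hN : 0 < (N : ℝ) := Nat.cast_pos.mpr (ne_zero_of_edgeScale_pos hs).bot_lt
  set ν := Measure.pi fun _ : UpperPair N => centeredBernoulli p (edgeScale N p)
  have hlaw : HasLaw (fun ω => standardizedEdges p (e ω)) ν μ := he.hasLaw_standardizedEdges
  have hmemLp : MemLp (maxEnergy (pairSign (N := N))) 2 ν :=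
    coordLipschitz_maxEnergy_pairSign.memLp_pi _ fun _ => memLp_id_bernoulliMeasure _ _ p 2
  have hmeas : MeasurableSet
      {x | N * δ ≤ |maxEnergy (pairSign (N := N)) x - bernoulliGroundState N p|} :=
    measurableSet_le measurable_const
      ((coordLipschitz_maxEnergy_pairSign.continuous.measurable.sub_const _).abs)
  calc μ {ω | δ ≤ |maxEnergy pairSign (standardizedEdges p (e ω)) / N
        - bernoulliGroundState N p / N|}
      = ν {x | N * δ ≤ |maxEnergy pairSign x - bernoulliGroundState N p|} := by
        rw [← hlaw.map_eq, Measure.map_apply_of_aemeasurable hlaw.aemeasurable hmeas]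
        simp only [← sub_div, abs_div, Nat.abs_cast, le_div_iff₀' hN, Set.preimage_ofPred_eq]
    _ ≤ ENNReal.ofReal (Var[maxEnergy pairSign; ν] / (N * δ) ^ 2) :=
        meas_ge_le_variance_div_sq hmemLp (by positivity)
    _ ≤ ENNReal.ofReal (N / (N * δ) ^ 2) := by
        gcongr
        exact variance_maxEnergy_centeredBernoulli_le hs
    _ = ENNReal.ofReal ((δ ^ 2)⁻¹ / N) := by
        congr 1
        field

lemma tendsto_measure_le_abs_maxEnergy_sub {ι : Type*} {l : Filter ι} {Ω : ι → Type*}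
    [∀ k, MeasurableSpace (Ω k)] {μ : ∀ k, Measure (Ω k)} [∀ k, IsProbabilityMeasure (μ k)]
    {N : ι → ℕ} [∀ k, Nonempty (Bisection (N k))] {p : ι → unitInterval}
    {e : ∀ k, Ω k → Fin (N k) → Fin (N k) → Bool} (he : ∀ k, IsErdosRenyi (μ k) (p k) (e k))
    (hN : Tendsto N l atTop) (hs : Tendsto (fun k => edgeScale (N k) (p k)) l atTop) {δ : ℝ}
    (hδ : 0 < δ) :
    Tendsto (fun k => μ k {ω | δ ≤ |maxEnergy pairSign (standardizedEdges (p k) (e k ω)) / N k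
      - bernoulliGroundState (N k) (p k) / N k|}) l (nhds 0) := by
  have hbound : Tendsto (fun k => ENNReal.ofReal ((δ ^ 2)⁻¹ / N k)) l (nhds 0) := by
    simpa using ENNReal.tendsto_ofReal
      ((tendsto_natCast_atTop_atTop.comp hN).const_div_atTop (δ ^ 2)⁻¹)
  refine tendsto_of_tendsto_of_tendsto_of_le_of_le' tendsto_const_nhds hbound
    (.of_forall fun _ => zero_le) ?_
  filter_upwards [hs.eventually_gt_atTop 0] with k hsk
  exact (he k).measure_le_abs_maxEnergy_sub_le hsk hδ

lemma tendsto_measure_lt_abs_sub_of_tendsto {ι : Type*} {l : Filter ι} {Ω : ι → Type*}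
    [∀ k, MeasurableSpace (Ω k)] {μ : ∀ k, Measure (Ω k)} {Y : ∀ k, Ω k → ℝ} {a : ι → ℝ} {c : ℝ}
    (ha : Tendsto a l (nhds c))
    (hY : ∀ δ > 0, Tendsto (fun k => μ k {ω | δ ≤ |Y k ω - a k|}) l (nhds 0)) {ε : ℝ}
    (hε : 0 < ε) : Tendsto (fun k => μ k {ω | ε < |Y k ω - c|}) l (nhds 0) := by
  refine tendsto_of_tendsto_of_tendsto_of_le_of_le' tendsto_const_nhds (hY (ε / 2) (half_pos hε))
    (.of_forall fun _ => zero_le) ?_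
  filter_upwards [Metric.tendsto_nhds.mp ha (ε / 2) (half_pos hε)] with k hk
  refine measure_mono fun ω (hω : ε < |Y k ω - c|) => ?_
  rw [Real.dist_eq] at hk
  exact (by linarith [abs_sub_le (Y k ω) (a k) c] : ε / 2 ≤ |Y k ω - a k|)

lemma tendsto_mul_one_sub_atTop_of_le_half {ι : Type*} {l : Filter ι} {x p : ι → ℝ}
    (hx : Tendsto x l atTop) (hp : ∀ k, p k ≤ 1 / 2) :
    Tendsto (fun k => x k * (1 - p k)) l atTop := by
  refine tendsto_atTop_mono' l ?_ (hx.atTop_div_const two_pos)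
  filter_upwards [hx.eventually_ge_atTop 0] with k hk
  nlinarith [hp k]

end SparseGraphs

theorem sparse_bisection_universality_general
    {Ω₁ : ℕ → Type*} [∀ n, MeasurableSpace (Ω₁ n)] (μ₁ : ∀ n, Measure (Ω₁ n))
    (A : (n : ℕ) → Ω₁ n → Fin (2 * n) → Fin (2 * n) → ℝ)
    (hGOE : ∀ n, 1 ≤ n → IsGOE (μ₁ n) (2 * n) (A n))
    (cstar : ℝ)
    (hc : Tendsto (fun n : ℕ =>
        (1 / (2 * ((2 * n : ℕ) : ℝ))) * ∫ ω, balMax (2 * n) (A n ω) ∂μ₁ n)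
      atTop (nhds cstar))
    {Ω₂ : ℕ → Type*} [∀ n, MeasurableSpace (Ω₂ n)] (μ₂ : ∀ n, Measure (Ω₂ n))
    [∀ n, IsProbabilityMeasure (μ₂ n)]
    (p : ℕ → unitInterval)
    (hp : Tendsto (fun n : ℕ => ((2 * n : ℕ) : ℝ) * p n * (1 - p n)) atTop atTop)
    (e : (n : ℕ) → Ω₂ n → Fin (2 * n) → Fin (2 * n) → Bool)
    (he : ∀ n, IsErdosRenyi (μ₂ n) (p n) (e n)) (ε : ℝ) (hε : 0 < ε) :
    Tendsto (fun n : ℕ =>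
      μ₂ n {ω | ε <
        |1 / (2 * ((2 * n : ℕ) : ℝ)) * balMax (2 * n) (adjacency (e n ω)) /
          edgeScale (2 * n) (p n) - cstar|})
      atTop (nhds 0) := by
  have hN : Tendsto (fun n : ℕ => 2 * n) atTop atTop := tendsto_id.const_mul_atTop' two_pos
  have hs : Tendsto (fun n => edgeScale (2 * n) (p n)) atTop atTop :=
    Real.tendsto_sqrt_atTop.comp hp
  have hgauss : Tendsto (fun n : ℕ => gaussianGroundState (2 * n) / (2 * n : ℕ)) atTop
      (nhds cstar) := by
    refine hc.congr' ?_
    filter_upwards [eventually_ge_atTop 1] with n hn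
    rw [(hGOE n hn).integral_balMax]
    field
  have hmean : Tendsto (fun n => bernoulliGroundState (2 * n) (p n) / (2 * n : ℕ)
      - p n / (2 * edgeScale (2 * n) (p n))) atTop (nhds cstar) := by
    have hcenter := tendsto_bdd_div_atTop_nhds_zero (.of_forall fun n => (p n).2.1)
      (.of_forall fun n => (p n).2.2) (hs.const_mul_atTop two_pos)
    simpa [sub_div] using
      ((tendsto_bernoulliGroundState_sub_gaussianGroundState_div hN hs).add hgauss).sub hcenter
  refine tendsto_measure_lt_abs_sub_of_tendsto hmean (fun δ hδ => ?_) hε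
  refine (tendsto_measure_le_abs_maxEnergy_sub he hN hs hδ).congr' ?_
  filter_upwards [hs.eventually_gt_atTop 0] with n hsn
  simp only [balMax_adjacency_div_edgeScale ((he n).symm _) ((he n).loopless _) hsn,
    sub_sub_sub_cancel_right]

/-- **Universality of the extremal bisection of sparse Erdős–Rényi graphs**
(Dembo–Montanari–Sen).  Let `c*` be the limit of `(1/(2N)) E[max_{σ ∈ Σ_N} ⟨σ, A_N σ⟩]` for
`A_N ~ GOE(N)` over even `N`.  If `G_N` is an Erdős–Rényi graph with edge probability `p_N`,
`N p_N → ∞`, `p_N ≤ 1/2`, then `(1/(2N)) max_{σ ∈ Σ_N} ⟨σ, A_{G_N} σ⟩ / √(N p_N (1−p_N)) → c*`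
in probability (over even `N = 2n`). -/
theorem sparse_bisection_universality
    {Ω₁ : Type*} [MeasurableSpace Ω₁] (μ₁ : Measure Ω₁) [IsProbabilityMeasure μ₁]
    (A : (N : ℕ) → Ω₁ → Fin N → Fin N → ℝ)
    (hGOE : ∀ N, 1 ≤ N → IsGOE μ₁ N (A N))
    (cstar : ℝ)
    (hc : Tendsto (fun n : ℕ =>
        (1 / (2 * ((2 * n : ℕ) : ℝ))) * ∫ ω, balMax (2 * n) (A (2 * n) ω) ∂μ₁)
      atTop (nhds cstar))
    {Ω₂ : Type*} [MeasurableSpace Ω₂] (μ₂ : Measure Ω₂) [IsProbabilityMeasure μ₂]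
    (p : ℕ → ℝ) (hp : ∀ N, 0 ≤ p N ∧ p N ≤ 1 / 2)
    (hnp : Tendsto (fun N : ℕ => (N : ℝ) * p N) atTop atTop)
    (e : Ω₂ → (N : ℕ) → Fin N → Fin N → Bool)
    (hemeas : ∀ N i j, Measurable fun ω => e ω N i j)
    (hesym : ∀ ω N i j, e ω N i j = e ω N j i)
    (hediag : ∀ ω N i, e ω N i i = false)
    (heindep : ∀ N : ℕ, iIndepFun
      (fun (q : {q : Fin N × Fin N // q.1 < q.2}) => fun ω => e ω N q.1.1 q.1.2) μ₂)
    (heprob : ∀ N, ∀ i j : Fin N, i < j →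
      μ₂ {ω | e ω N i j = true} = ENNReal.ofReal (p N)) :
    ∀ ε : ℝ, 0 < ε →
      Tendsto (fun n : ℕ =>
        μ₂ {ω | ε <
          |((1 / (2 * ((2 * n : ℕ) : ℝ))) *
              balMax (2 * n) (fun i j => if e ω (2 * n) i j then (1 : ℝ) else 0)) /
            Real.sqrt (((2 * n : ℕ) : ℝ) * p (2 * n) * (1 - p (2 * n)))
          - cstar|})
        atTop (nhds 0) := by
  let q (n : ℕ) : unitInterval := ⟨p (2 * n), (hp _).1, by linarith [(hp (2 * n)).2]⟩
  have hq : Tendsto (fun n : ℕ => ((2 * n : ℕ) : ℝ) * q n * (1 - q n)) atTop atTop :=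
    tendsto_mul_one_sub_atTop_of_le_half
      (hnp.comp (tendsto_id.const_mul_atTop' two_pos)) fun n => (hp (2 * n)).2
  exact sparse_bisection_universality_general (fun _ => μ₁) (fun n => A (2 * n))
    (fun n hn => hGOE _ (by omega)) cstar hc (fun _ => μ₂) q hq (fun n ω => e ω (2 * n))
    fun n => ⟨hemeas _, fun ω => hesym ω _, fun ω => hediag ω _, heindep _, heprob _⟩

end
end
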